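/- Let (A, φ) be a noncommutative probability space and Φ̃ : H_S(A) → ℂ the character extending φ. Let (κ̃, β̃, ρ̃) be the triple of infinitesimal characters on H_S(A) satisfying Φ̃ = E_≺̃(κ̃) = E_≻̃(β̃) = exp*(ρ̃). Then for every t ∈ ST(n) and a_1,…,a_n ∈ A: κ̃(t⊗a_1⋯a_n) = (−1)^{i(t)−1} φ_{π(t)}(a_1,…,a_n) if t ∈ PST(n) and 0 otherwise; β̃(t⊗a_1⋯a_n) = (−1)^{i(t)−1} φ_{π(t)}(a_1,…,a_n) if t ∈ BST(n) and 0 otherwise; and ρ̃(t⊗a_1⋯a_n) = ω(sk(t)) φ_{π(t)}(a_1,…,a_n). Moreover, with ι(a_1⋯a_n) = Σ_{t∈ST(n)} t⊗a_1⋯a_n, one has (κ̃∘ι)(a_1⋯a_n) = r_n(a_1,…,a_n), (β̃∘ι)(a_1⋯a_n) = b_n(a_1,…,a_n), and (ρ̃∘ι)(a_1⋯a_n) = h_n(a_1,…,a_n), the free, Boolean and monotone cumulants of (A, φ). -/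

import Mathlib

open scoped BigOperators

/-- Planar rooted trees (rose trees). -/
inductive PTree : Type
  | node : List PTree → PTree

namespace PTree

/-- The single-vertex tree (a leaf). -/
abbrev leaf : PTree := .node []

/-- Subtree at a given path from the root (entries select children). -/
def subtreeAt : List ℕ → PTree → Option PTree
  | [], t => some t
  | i :: p, node cs => (cs[i]?).bind (subtreeAt p)

/-- `p` is (the path of) a vertex of `t`. -/
def IsVertex (t : PTree) (p : List ℕ) : Prop := (subtreeAt p t).isSome

/-- `p` is a leaf of `t`. -/
def IsLeafAt (t : PTree) (p : List ℕ) : Prop := subtreeAt p t = some leaf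

/-- `p` is an internal (non-leaf) vertex of `t`. -/
def IsInternalAt (t : PTree) (p : List ℕ) : Prop :=
  ∃ cs, subtreeAt p t = some (node cs) ∧ cs ≠ []

/-- Schröder trees: every internal vertex has at least two children. -/
inductive IsSchroder : PTree → Prop
  | leaf : IsSchroder (node [])
  | node (cs : List PTree) : 2 ≤ cs.length → (∀ c ∈ cs, IsSchroder c) → IsSchroder (node cs)

/-- Number of leaves of a tree. -/
noncomputable def numLeaves (t : PTree) : ℕ := Nat.card {p : List ℕ // IsLeafAt t p}

/-- Number of sectors between consecutive leaves. -/
noncomputable def numSectors (t : PTree) : ℕ := numLeaves t - 1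

/-- Number of internal vertices. -/
noncomputable def numInternal (t : PTree) : ℕ := Nat.card {p : List ℕ // IsInternalAt t p}

/-- The set of Schröder trees with `n+1` leaves. -/
def ST (n : ℕ) : Set PTree := {t | IsSchroder t ∧ numLeaves t = n + 1}

/-- Number of surjective strictly order-preserving maps from the poset of internal
vertices of `t` (i.e. the vertex poset of the skeleton `sk(t)`, with the root minimal,
the order being the ancestor/prefix order) onto `{1, …, k}`. This is `ω_k(sk(t))`. -/
noncomputable def omegaSkK (t : PTree) (k : ℕ) : ℕ :=
  Nat.card {f : {p : List ℕ // IsInternalAt t p} → Fin k //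
    Function.Surjective f ∧ ∀ v w, v.1 <+: w.1 → v ≠ w → f v < f w}

/-- The Murua coefficient `ω(sk(t))` of the skeleton of `t`. -/
noncomputable def omegaSk (t : PTree) : ℂ :=
  ∑ k ∈ Finset.Icc 1 (numInternal t), ((-1 : ℂ) ^ (k + 1) / (k : ℂ)) * (omegaSkK t k : ℂ)

/-- The subtree of `t` at path `p` (junk value: a leaf). -/
noncomputable def subtree! (t : PTree) (p : List ℕ) : PTree := (subtreeAt p t).getD leaf

/-- Number of leaves of `t` strictly to the left of the subtree at `p`. -/
noncomputable def leavesBefore (t : PTree) (p : List ℕ) : ℕ :=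
  Nat.card {q : List ℕ // IsLeafAt t q ∧ List.Lex (· < ·) q p ∧ ¬ p <+: q}

/-- Sector number `i` (0-indexed: the sector between the `(i+1)`-st and `(i+2)`-nd leaves of `t`)
lies strictly inside the subtree of `t` rooted at `p`. -/
def SectorIn (t : PTree) (p : List ℕ) (i : ℕ) : Prop :=
  leavesBefore t p ≤ i ∧ i + 2 ≤ leavesBefore t p + numLeaves (subtree! t p)

/-- The internal vertex `v` of `t` owns sector `i`: the sector lies in the corolla at `v`,
i.e. inside the subtree at `v` but not inside the subtree at any strictly deeper vertex. -/
def OwnsSector (t : PTree) (v : List ℕ) (i : ℕ) : Prop :=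
  IsInternalAt t v ∧ SectorIn t v i ∧
    ∀ w, IsInternalAt t w → v <+: w → w ≠ v → ¬ SectorIn t w i

/-- Sectors `i` and `j` belong to the same block of the noncrossing partition `π(t)`. -/
def SameOwner (t : PTree) (i j : ℕ) : Prop := ∃ v, OwnsSector t v i ∧ OwnsSector t v j

open Classical in
/-- `φ_{π(t)}(a_1,…,a_n)`: the product over the blocks of the noncrossing partition `π(t)`
(one block per internal vertex `v`, consisting of the sectors owned by `v`) of `φ` applied to
the ordered product of the corresponding letters of `w`. -/
noncomputable def phiPi {A : Type*} [Ring A] (φ : A → ℂ) (t : PTree) (w : List A) : ℂ :=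
  ∏ᶠ v ∈ {v : List ℕ | IsInternalAt t v},
    φ ((((List.range w.length).filter fun i => OwnsSector t v i).map fun i => w.getD i 0).prod)

/-- A corolla: a root whose (at least two) children are all leaves. -/
def corolla (m : ℕ) : PTree := node (List.replicate m leaf)

/-- `t` is a corolla. -/
def IsCorolla (t : PTree) : Prop := ∃ m, 2 ≤ m ∧ t = corolla m

/-- Graft a tree `s` onto the leftmost leaf of `t`. -/
def graftLeftmost : PTree → PTree → PTree
  | node [], s => s
  | node (c :: cs), s => node (graftLeftmost c s :: cs)

/-- Trees obtained from the single-vertex tree by repeatedly grafting a corolla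
onto the leftmost leaf. -/
inductive IsBST : PTree → Prop
  | single : IsBST leaf
  | graft (t : PTree) (m : ℕ) : IsBST t → 2 ≤ m → IsBST (graftLeftmost t (corolla m))

/-- Schröder trees whose leftmost child of the root is a leaf. -/
def IsPST (t : PTree) : Prop := ∃ cs, t = node (leaf :: cs)

end PTree
section Partitions

open scoped BigOperators

/-- Set partitions of `[n] = {1,…,n}`, modeled as finpartitions of `Fin n`. -/
abbrev NPart (n : ℕ) := Finpartition (Finset.univ : Finset (Fin n))

/-- Noncrossing partitions: there are no `a < b < c < d` with `a, c` in one block and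
`b, d` in a different block. -/
def IsNoncrossing {n : ℕ} (π : NPart n) : Prop :=
  ∀ a b c d : Fin n, a < b → b < c → c < d →
    ∀ V ∈ π.parts, ∀ W ∈ π.parts, a ∈ V → c ∈ V → b ∈ W → d ∈ W → V = W

/-- Interval partitions: every block is an interval of consecutive elements. -/
def IsIntervalPart {n : ℕ} (π : NPart n) : Prop :=
  ∀ V ∈ π.parts, ∀ x ∈ V, ∀ y ∈ V, ∀ z : Fin n, x ≤ z → z ≤ y → z ∈ V

/-- Irreducible noncrossing partitions: `1` and `n` lie in the same block. -/
def IsIrreducibleNC {n : ℕ} (π : NPart n) : Prop :=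
  ∃ V ∈ π.parts, (∀ i : Fin n, i.val = 0 → i ∈ V) ∧ (∀ i : Fin n, i.val = n - 1 → i ∈ V)

/-- `W` is nested in `V`: every element of `W` lies in the interval `[min V, max V]`. -/
def NestedIn {n : ℕ} (W V : Finset (Fin n)) : Prop :=
  ∀ w ∈ W, (∃ a ∈ V, a ≤ w) ∧ (∃ b ∈ V, w ≤ b)

open Classical in
/-- The forest factorial `t(π)!` of the forest of nestings of `π`: the product, over all
blocks `V`, of the number of blocks nested in `V` (the size of the subtree rooted at `V`). -/
noncomputable def forestFactorial {n : ℕ} (π : NPart n) : ℕ :=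
  ∏ V ∈ π.parts, (π.parts.filter fun W => NestedIn W V).card

/-- `f_π(a_1,…,a_n)`: the product over the blocks `V = {i_1 < … < i_s}` of `π` of
`f(a_{i_1},…,a_{i_s})`, for a family of multilinear functionals encoded as `f : List A → ℂ`. -/
noncomputable def blockApply {A : Type*} {n : ℕ} (f : List A → ℂ) (a : Fin n → A)
    (π : NPart n) : ℂ :=
  ∏ V ∈ π.parts, f ((V.sort (· ≤ ·)).map a)

/-- `φ_π(a_1,…,a_n)` for the moment functionals `φ_m(a_1,…,a_m) = φ(a_1 ⋯ a_m)`. -/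
noncomputable def momApply {A : Type*} [Ring A] {n : ℕ} (φ : A → ℂ) (a : Fin n → A)
    (π : NPart n) : ℂ :=
  blockApply (fun l => φ l.prod) a π

/-- `ω_k(t(π))` for the nesting poset of the blocks of `π` (for irreducible `π`, this is
the vertex poset of the tree of nestings, rooted at the outermost block): the number of
surjective strictly order-preserving maps onto `{1,…,k}`. -/
noncomputable def omegaNestK {n : ℕ} (π : NPart n) (k : ℕ) : ℕ :=
  Nat.card {f : {V // V ∈ π.parts} → Fin k // Function.Surjective f ∧
    ∀ V W : {V // V ∈ π.parts}, NestedIn W.1 V.1 → V ≠ W → f V < f W}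

/-- The Murua coefficient `ω(t(π))` of the tree (forest) of nestings of `π`. -/
noncomputable def omegaNest {n : ℕ} (π : NPart n) : ℂ :=
  ∑ k ∈ Finset.Icc 1 π.parts.card, ((-1 : ℂ) ^ (k + 1) / (k : ℂ)) * (omegaNestK π k : ℂ)

/-- The noncrossing partition `π(t)` associated to a Schröder tree `t ∈ ST(n)` equals `π`:
two sectors lie in the same block of `π(t)` (i.e. have the same owning internal vertex)
iff they lie in the same block of `π`. -/
def TreePartEq {n : ℕ} (t : PTree) (π : NPart n) : Prop :=
  ∀ i j : Fin n, PTree.SameOwner t i.val j.val ↔ ∃ V ∈ π.parts, i ∈ V ∧ j ∈ V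

/-- The moment–cumulant relation defining the monotone cumulants `h`. -/
def MonotoneMC {A : Type*} [Ring A] (φ : A → ℂ) (h : List A → ℂ) : Prop :=
  ∀ (m : ℕ), 1 ≤ m → ∀ a : Fin m → A,
    φ (List.ofFn a).prod =
      ∑ᶠ π ∈ {π : NPart m | IsNoncrossing π}, (forestFactorial π : ℂ)⁻¹ * blockApply h a π

/-- The moment–cumulant relation defining the free cumulants `r`. -/
def FreeMC {A : Type*} [Ring A] (φ : A → ℂ) (r : List A → ℂ) : Prop :=
  ∀ (m : ℕ), 1 ≤ m → ∀ a : Fin m → A,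
    φ (List.ofFn a).prod = ∑ᶠ π ∈ {π : NPart m | IsNoncrossing π}, blockApply r a π

/-- The moment–cumulant relation defining the Boolean cumulants `b`. -/
def BooleanMC {A : Type*} [Ring A] (φ : A → ℂ) (b : List A → ℂ) : Prop :=
  ∀ (m : ℕ), 1 ≤ m → ∀ a : Fin m → A,
    φ (List.ofFn a).prod = ∑ᶠ π ∈ {π : NPart m | IsIntervalPart π}, blockApply b a π

end Partitions
namespace PTree

mutual
  /-- List of all vertex paths of a tree. -/
  def verticesList : PTree → List (List ℕ)
    | .node cs => [] :: verticesListAux 0 cs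
  def verticesListAux : ℕ → List PTree → List (List ℕ)
    | _, [] => []
    | i, c :: cs => (verticesList c).map (i :: ·) ++ verticesListAux (i + 1) cs
end

open Classical in
/-- The `Finset` of internal vertices of `t`. -/
noncomputable def internalFinset (t : PTree) : Finset (List ℕ) :=
  ((verticesList t).filter fun p => decide (IsInternalAt t p)).toFinset

open Classical in
/-- The admissible cuts of a Schröder tree `t`: sets of internal vertices such that every
path from the root to a leaf contains at most one of them (equivalently, antichains for
the ancestor/prefix order). -/
noncomputable def cutsFinset (t : PTree) : Finset (Finset (List ℕ)) :=
  (internalFinset t).powerset.filter fun c => ∀ v ∈ c, ∀ w ∈ c, v ≠ w → ¬ v <+: w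

/-- A vertex path lies on the leftmost branch iff it consists of zeros. -/
def OnLeftBranch (v : List ℕ) : Prop := v = List.replicate v.length 0

open Classical in
/-- `Adm_≺(t)`: admissible cuts whose trunk contains the leftmost leaf of `t`,
i.e. cuts containing no vertex of the leftmost branch. -/
noncomputable def cutsPrecFinset (t : PTree) : Finset (Finset (List ℕ)) :=
  (cutsFinset t).filter fun c => ∀ v ∈ c, ¬ OnLeftBranch v

open Classical in
/-- `Adm(t) \ Adm_≺(t)`: the admissible cuts containing a vertex of the leftmost branch. -/
noncomputable def cutsSuccFinset (t : PTree) : Finset (Finset (List ℕ)) :=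
  (cutsFinset t).filter fun c => ∃ v ∈ c, OnLeftBranch v

/-- Replace the subtree at a given path by a leaf. -/
def replaceLeaf : List ℕ → PTree → PTree
  | [], _ => leaf
  | i :: p, node cs => node (cs.set i (replaceLeaf p (cs.getD i leaf)))

/-- The vertices of a cut, sorted from left to right. -/
noncomputable def sortCut (t : PTree) (c : Finset (List ℕ)) : List (List ℕ) :=
  c.toList.mergeSort fun v w => Nat.ble (leavesBefore t v) (leavesBefore t w)

/-- The trunk `R_c(t)`: replace the subtree at each vertex of the cut by a leaf. -/
noncomputable def trunkTree (t : PTree) (c : Finset (List ℕ)) : PTree :=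
  (sortCut t c).foldl (fun s v => replaceLeaf v s) t

open Classical in
/-- Sector `i` of `t` is removed by the cut `c` (it lies in one of the pruned subtrees). -/
noncomputable def RemovedIdx (t : PTree) (c : Finset (List ℕ)) (i : ℕ) : Prop :=
  ∃ v ∈ c, leavesBefore t v ≤ i ∧ i < leavesBefore t v + numSectors (subtree! t v)

/-- A decorated forest: a list of Schröder trees, each `t` decorated by a word of length
`numSectors t` labelling the sectors between consecutive leaves from left to right. -/
abbrev DForest (A : Type*) := List (PTree × List A)

/-- A genuine decorated tree: a non-unit Schröder tree with matching decoration. -/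
def GoodTree {A : Type*} (d : PTree × List A) : Prop :=
  IsSchroder d.1 ∧ d.1 ≠ leaf ∧ d.2.length = numSectors d.1

/-- A genuine decorated forest. -/
def GoodForest {A : Type*} (F : DForest A) : Prop := ∀ d ∈ F, GoodTree d

open Classical in
/-- The decoration of the trunk `R_c(t ⊗ w)`: the letters of `w` at the sectors
not removed by the cut, in their original order. -/
noncomputable def trunkWord {A : Type*} [Zero A] (t : PTree) (c : Finset (List ℕ))
    (w : List A) : List A :=
  (((List.range w.length).filter fun i => decide (¬ RemovedIdx t c i)).map fun i => w.getD i 0)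

open Classical in
/-- The trunk `R_c(t ⊗ w)` as a decorated forest (empty if the trunk is the unit,
i.e. the single-leaf tree, which is identified with `1`). -/
noncomputable def trunkPart {A : Type*} [Zero A] (d : PTree × List A)
    (c : Finset (List ℕ)) : DForest A :=
  if trunkTree d.1 c = leaf then [] else [(trunkTree d.1 c, trunkWord d.1 c d.2)]

/-- The pruning `P_c(t ⊗ w)`: the ordered forest of decorated subtrees rooted at the
vertices of the cut (left to right), each carrying the contiguous subword of `w`
decorating its sectors. -/
noncomputable def prunePart {A : Type*} (d : PTree × List A)
    (c : Finset (List ℕ)) : DForest A :=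
  (sortCut d.1 c).map fun v =>
    (subtree! d.1 v, (d.2.drop (leavesBefore d.1 v)).take (numSectors (subtree! d.1 v)))

/-- All splittings `R_c(F) ⊗ P_c(F)` of a decorated forest given by tuples of admissible
cuts (one cut per tree): the combinatorial coproduct `δ_A`. -/
noncomputable def forestSplits {A : Type*} [Zero A] :
    DForest A → List (DForest A × DForest A)
  | [] => [([], [])]
  | d :: ds => (cutsFinset d.1).toList.flatMap fun c =>
      (forestSplits ds).map fun pr => (trunkPart d c ++ pr.1, prunePart d c ++ pr.2)

/-- The splittings appearing in `δ_{≺,A}`: the first tree is cut along `Adm_≺`, the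
remaining ones along all admissible cuts. -/
noncomputable def forestSplitsPrec {A : Type*} [Zero A] :
    DForest A → List (DForest A × DForest A)
  | [] => []
  | d :: ds => (cutsPrecFinset d.1).toList.flatMap fun c =>
      (forestSplits ds).map fun pr => (trunkPart d c ++ pr.1, prunePart d c ++ pr.2)

/-- The splittings appearing in `δ_{≻,A} = δ_A − δ_{≺,A}`. -/
noncomputable def forestSplitsSucc {A : Type*} [Zero A] :
    DForest A → List (DForest A × DForest A)
  | [] => []
  | d :: ds => (cutsSuccFinset d.1).toList.flatMap fun c =>
      (forestSplits ds).map fun pr => (trunkPart d c ++ pr.1, prunePart d c ++ pr.2)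

/-- The convolution product `f * g = m_ℂ ∘ (f ⊗ g) ∘ δ_A` of linear functionals on the
Hopf algebra `H_S(A)` of decorated Schröder trees (described on the basis of decorated
forests). -/
noncomputable def convD {A : Type*} [Zero A] (f g : DForest A → ℂ) : DForest A → ℂ :=
  fun F => ((forestSplits F).map fun pr => f pr.1 * g pr.2).sum

/-- The left half-shuffle product `f ≺̃ g = m_ℂ ∘ (f ⊗ g) ∘ δ_{≺,A}`. -/
noncomputable def precD {A : Type*} [Zero A] (f g : DForest A → ℂ) : DForest A → ℂ :=
  fun F => ((forestSplitsPrec F).map fun pr => f pr.1 * g pr.2).sum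

/-- The right half-shuffle product `f ≻̃ g = m_ℂ ∘ (f ⊗ g) ∘ δ_{≻,A}`. -/
noncomputable def succD {A : Type*} [Zero A] (f g : DForest A → ℂ) : DForest A → ℂ :=
  fun F => ((forestSplitsSucc F).map fun pr => f pr.1 * g pr.2).sum

open Classical in
/-- The counit `ε_A` of `H_S(A)` as a functional. -/
noncomputable def epsD {A : Type*} : DForest A → ℂ := fun F => if F = [] then 1 else 0

open Classical in
/-- The character `Φ̃ : H_S(A) → ℂ` extending `φ`: it sends a decorated tree `t ⊗ w` to
`φ(a_1 ⋯ a_n)` if `t` is a corolla and to `0` otherwise, multiplicatively on forests. -/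
noncomputable def charD {A : Type*} [Ring A] (φ : A → ℂ) : DForest A → ℂ :=
  fun F => (F.map fun d => if IsCorolla d.1 then φ d.2.prod else 0).prod

/-- `Φ̂ = Φ̃ − ε_A`. -/
noncomputable def charHatD {A : Type*} [Ring A] (φ : A → ℂ) : DForest A → ℂ :=
  fun F => charD φ F - epsD F

/-- Convolution powers `f^{*k}` (with `f^{*0} = ε_A`). -/
noncomputable def convPowD {A : Type*} [Zero A] (f : DForest A → ℂ) : ℕ → DForest A → ℂ
  | 0 => epsD
  | k + 1 => convD f (convPowD f k)

/-- Left half-shuffle powers `α^{≺̃ k}`, with `α^{≺̃ 0} = ε_A` and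
`α^{≺̃ k} = α ≺̃ α^{≺̃ (k−1)}`. -/
noncomputable def precPowD {A : Type*} [Zero A] (α : DForest A → ℂ) : ℕ → DForest A → ℂ
  | 0 => epsD
  | k + 1 => precD α (precPowD α k)

/-- Right half-shuffle powers `α^{≻̃ k}`, with `α^{≻̃ 0} = ε_A` and
`α^{≻̃ k} = α^{≻̃ (k−1)} ≻̃ α`. -/
noncomputable def succPowD {A : Type*} [Zero A] (α : DForest A → ℂ) : ℕ → DForest A → ℂ
  | 0 => epsD
  | k + 1 => succD (succPowD α k) α

/-- The left half-shuffle exponential `E_≺̃(α) = Σ_{k ≥ 0} α^{≺̃ k}`. -/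
noncomputable def ePrecD {A : Type*} [Zero A] (α : DForest A → ℂ) : DForest A → ℂ :=
  fun F => ∑ᶠ k : ℕ, precPowD α k F

/-- The right half-shuffle exponential `E_≻̃(α) = Σ_{k ≥ 0} α^{≻̃ k}`. -/
noncomputable def eSuccD {A : Type*} [Zero A] (α : DForest A → ℂ) : DForest A → ℂ :=
  fun F => ∑ᶠ k : ℕ, succPowD α k F

/-- The convolution exponential `exp^*(α) = Σ_{k ≥ 0} α^{*k} / k!`. -/
noncomputable def expStarD {A : Type*} [Zero A] (α : DForest A → ℂ) : DForest A → ℂ :=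
  fun F => ∑ᶠ k : ℕ, ((k.factorial : ℂ))⁻¹ * convPowD α k F

/-- The convolution logarithm `log^*(Φ̃) = Σ_{k ≥ 1} ((−1)^{k+1}/k) (Φ̃ − ε_A)^{*k}`. -/
noncomputable def logStarD {A : Type*} [Ring A] (φ : A → ℂ) : DForest A → ℂ :=
  fun F => ∑ᶠ k ∈ Set.Ici (1 : ℕ), ((-1 : ℂ) ^ (k + 1) / (k : ℂ)) * convPowD (charHatD φ) k F

/-- An infinitesimal character of `H_S(A)`: it vanishes on the unit (empty forest) and on
products of two or more nonempty forests. -/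
def IsInfCharD {A : Type*} (α : DForest A → ℂ) : Prop :=
  α [] = 0 ∧ ∀ F G : DForest A, F ≠ [] → G ≠ [] → α (F ++ G) = 0

end PTree

section WordConvolution

variable {A B R V W : Type*} [CommRing R] [AddCommGroup V] [Module R V]
  [AddCommGroup W] [Module R W]

/-- Convolution on words: the sum over all subwords `u` of `w` of `f u` times `G` of the part of
`w` preceding `u` times `g` of each of the remaining gaps. -/
def wordConv (f : List A → V) (g : List A → R) : (List A → R) → List A → V
  | G, [] => G [] • f []
  | G, a :: w => G [] • wordConv (fun u => f (a :: u)) g g w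
      + wordConv f g (fun u => G (a :: u)) w

/-- The unit for `wordConv`. -/
def wordOne (R : Type*) [CommRing R] {A : Type*} : List A → R
  | [] => 1
  | _ :: _ => 0

theorem wordConv_add (f f' : List A → V) (g : List A → R) (G : List A → R) (w : List A) :
    wordConv (fun u => f u + f' u) g G w = wordConv f g G w + wordConv f' g G w := by
  induction w generalizing f f' G with
  | nil => simp [wordConv]
  | cons a w ih =>
    simp only [wordConv, ih, smul_add]; abel

theorem wordConv_smul (c : R) (f : List A → V) (g : List A → R) (G : List A → R) (w : List A) :
    wordConv (fun u => c • f u) g G w = c • wordConv f g G w := by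
  induction w generalizing f G with
  | nil => simp only [wordConv]; rw [smul_comm]
  | cons a w ih =>
    simp only [wordConv, ih, smul_add]
    rw [smul_comm]

theorem wordConv_add_gap (f : List A → V) (g : List A → R) (G G' : List A → R) (w : List A) :
    wordConv f g (fun u => G u + G' u) w = wordConv f g G w + wordConv f g G' w := by
  induction w generalizing f G G' with
  | nil => simp [wordConv, add_smul]
  | cons a w ih =>
    simp only [wordConv, ih, add_smul]; abel

theorem wordConv_smul_gap (c : R) (f : List A → V) (g : List A → R) (G : List A → R)
    (w : List A) :
    wordConv f g (fun u => c * G u) w = c • wordConv f g G w := by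
  induction w generalizing f G with
  | nil => simp [wordConv, mul_smul]
  | cons a w ih =>
    simp only [wordConv, ih, mul_smul, smul_add]

theorem wordConv_zero (g : List A → R) (G : List A → R) (w : List A) :
    wordConv (fun _ => (0 : V)) g G w = 0 := by
  induction w generalizing G with
  | nil => simp [wordConv]
  | cons a w ih => simp only [wordConv, ih, smul_zero, add_zero]

theorem wordConv_linearMap (L : V →ₗ[R] W) (f : List A → V) (g : List A → R) (G : List A → R)
    (w : List A) : L (wordConv f g G w) = wordConv (fun u => L (f u)) g G w := by
  induction w generalizing f G with
  | nil => simp [wordConv]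
  | cons a w ih => simp [wordConv, ih]

theorem wordConv_ringHom {S : Type*} [CommRing S] (L : R →+* S) (f : List A → R) (g : List A → R)
    (G : List A → R) (w : List A) :
    L (wordConv f g G w) = wordConv (fun u => L (f u)) (fun u => L (g u)) (fun u => L (G u)) w := by
  induction w generalizing f G with
  | nil => simp [wordConv]
  | cons a w ih => simp [wordConv, ih]

theorem wordConv_map (e : B → A) (f : List A → V) (g : List A → R) (G : List A → R) (w : List B) :
    wordConv f g G (w.map e) = wordConv (fun u => f (u.map e)) (fun u => g (u.map e))
      (fun u => G (u.map e)) w := by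
  induction w generalizing f G with
  | nil => simp [wordConv]
  | cons a w ih => simp [wordConv, ih]

theorem wordConv_congr {f f' : List A → V} {g g' G G' : List A → R} {w : List A}
    (hf : ∀ u, u.Sublist w → f u = f' u)
    (hg : ∀ u, u.Sublist w → u.length < w.length → g u = g' u)
    (hG : ∀ u, u.Sublist w → G u = G' u) : wordConv f g G w = wordConv f' g' G' w := by
  induction w generalizing f f' G G' with
  | nil => simp [wordConv, hf [] (List.Sublist.refl _), hG [] (List.Sublist.refl _)]
  | cons a w ih =>
    simp only [wordConv]
    rw [hG [] (by simp), ih (f' := fun u => f' (a :: u)) (G' := g'),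
      ih (f' := f') (G' := fun u => G' (a :: u))]
    · exact fun u hu => hf u (hu.cons a)
    · exact fun u hu h => hg u (hu.cons a) (by simp; omega)
    · exact fun u hu => hG _ (hu.cons_cons a)
    · exact fun u hu => hf _ (hu.cons_cons a)
    · exact fun u hu h => hg u (hu.cons a) (by simp; omega)
    · exact fun u hu => hg u (hu.cons a) (by have := hu.length_le; simp; omega)

theorem wordConv_assoc (f : List A → V) (g h G H : List A → R) (w : List A) :
    wordConv (wordConv f g G) h H w = wordConv f (wordConv g h h) (wordConv G h H) w := by
  induction w generalizing f G H with
  | nil => simp [wordConv, smul_smul, mul_comm]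
  | cons a w ih =>
    have e1 : (fun u => wordConv f g G (a :: u)) = fun u =>
      G [] • wordConv (fun u => f (a :: u)) g g u + wordConv f g (fun u => G (a :: u)) u := rfl
    have e2 : (fun u => wordConv G h H (a :: u)) = fun u =>
      H [] * wordConv (fun u => G (a :: u)) h h u + wordConv G h (fun u => H (a :: u)) u := rfl
    rw [wordConv, e1, wordConv_add, wordConv_smul, ih, wordConv, e2, wordConv_add_gap,
      wordConv_smul_gap, ih, ih]
    simp [wordConv, smul_smul, mul_comm, add_assoc]

theorem wordConv_wordOne_gap (f : List A → V) (w : List A) :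
    wordConv f (wordOne R) (wordOne R) w = f w := by
  have h0 : ∀ (f : List A → V) w, wordConv f (wordOne R) (fun _ => 0) w = 0 := by
    intro f w
    induction w generalizing f with
    | nil => simp [wordConv]
    | cons a w ih => simp [wordConv, ih]
  induction w generalizing f with
  | nil => simp [wordConv, wordOne]
  | cons a w ih =>
    rw [wordConv, ih]
    simp only [wordOne, one_smul, h0, add_zero]

theorem wordConv_wordOne (g G : List A → R) (w : List A) :
    wordConv (wordOne R) g G w = G w := by
  induction w generalizing G with
  | nil => simp [wordConv, wordOne]
  | cons a w ih =>
    rw [wordConv, ih]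
    simp only [wordOne, wordConv_zero, smul_zero, zero_add]

/-- `wordConv` splits according to the first selected letter. -/
theorem wordConv_eq_sum (f : List A → V) (g G : List A → R) (w : List A) :
    wordConv f g G w = G w • f [] + ∑ j : Fin w.length, G (w.take j) •
      wordConv (fun u => f (w[j] :: u)) g g (w.drop (j + 1)) := by
  induction w generalizing G with
  | nil => simp [wordConv]
  | cons a w ih =>
    rw [wordConv, ih]
    simp only [List.length_cons, Fin.sum_univ_succ]
    simp
    abel

theorem wordConv_eq_of_length {f : List A → V} {g G : List A → R} {w : List A}
    (hf : ∀ u : List A, u.length < w.length → f u = 0) (hg : g [] = 1) (hG : G [] = 1) :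
    wordConv f g G w = f w := by
  induction w generalizing f G with
  | nil => simp [wordConv, hG]
  | cons a w ih =>
    rw [wordConv, hG, ih _ hg]
    · rw [wordConv_congr (f' := fun _ => 0) (g' := g) (G' := fun u => G (a :: u)), wordConv_zero]
      · simp
      · exact fun u hu => hf u (by have := hu.length_le; simp; omega)
      · exact fun _ _ _ => rfl
      · exact fun _ _ => rfl
    · exact fun u hu => hf _ (by simp; omega)

theorem wordConv_congr_of_nil {f : List A → V} {g g' G G' : List A → R} {w : List A}
    (hf : f [] = 0)
    (hg : ∀ u : List A, u.length < w.length → g u = g' u)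
    (hG : ∀ u : List A, u.length < w.length → G u = G' u) :
    wordConv f g G w = wordConv f g' G' w := by
  induction w generalizing G G' with
  | nil => simp [wordConv, hf]
  | cons a w ih =>
    rw [wordConv, wordConv, hG [] (by simp), ih (G' := fun u => G' (a :: u)),
      wordConv_congr (g' := g') (G' := g')]
    · exact fun _ _ => rfl
    · exact fun u hu h => hg u (by simp; omega)
    · exact fun u hu => hg u (by have := hu.length_le; simp; omega)
    · exact fun u hu => hg u (by simp; omega)
    · exact fun u hu => hG _ (by simp; omega)

/-- If `f` and `f'` agree on words shorter than `w` (and vanish on the empty word), and so do the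
gap functionals, then the convolutions at `w` differ by `f w - f' w`. -/
theorem wordConv_sub_wordConv {f f' : List A → V} {g g' : List A → R} {w : List A}
    (hf' : f' [] = 0)
    (hff : ∀ u : List A, u.length < w.length → f u = f' u)
    (hgg : ∀ u : List A, u.length < w.length → g u = g' u) (hg : g [] = 1) :
    wordConv f g g w - wordConv f' g' g' w = f w - f' w := by
  rw [← wordConv_congr_of_nil hf' hgg hgg]
  have e : wordConv f g g w = wordConv (fun u => f' u + (f u - f' u)) g g w := by
    congr 1; funext u; abel
  rw [e, wordConv_add, add_sub_cancel_left,
    wordConv_eq_of_length (fun u hu => by rw [hff u hu, sub_self]) hg hg]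

end WordConvolution

namespace PTree

theorem induct {P : PTree → Prop} (h : ∀ cs : List PTree, (∀ c ∈ cs, P c) → P (node cs)) :
    ∀ t, P t := fun t =>
  PTree.rec (motive_1 := P) (motive_2 := fun cs => ∀ c ∈ cs, P c) h (by simp)
    (fun c cs hc hcs => by simpa using ⟨hc, hcs⟩) t

theorem subtreeAt_cons (cs : List PTree) (i : ℕ) (q : List ℕ) (s : PTree) :
    subtreeAt (i :: q) (node cs) = some s ↔ ∃ hi : i < cs.length, subtreeAt q cs[i] = some s := by
  rw [subtreeAt]
  by_cases hi : i < cs.length <;> simp [hi]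

theorem isLeafAt_nil (cs : List PTree) : IsLeafAt (node cs) [] ↔ cs = [] := by
  simp [IsLeafAt, subtreeAt]

theorem isLeafAt_cons (cs : List PTree) (i : ℕ) (q : List ℕ) :
    IsLeafAt (node cs) (i :: q) ↔ ∃ hi : i < cs.length, IsLeafAt cs[i] q :=
  subtreeAt_cons cs i q _

theorem isInternalAt_nil (cs : List PTree) : IsInternalAt (node cs) [] ↔ cs ≠ [] := by
  simp [IsInternalAt, subtreeAt]

theorem isInternalAt_cons (cs : List PTree) (i : ℕ) (q : List ℕ) :
    IsInternalAt (node cs) (i :: q) ↔ ∃ hi : i < cs.length, IsInternalAt cs[i] q := by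
  simp only [IsInternalAt, subtreeAt_cons]
  constructor
  · rintro ⟨ds, ⟨hi, h⟩, hd⟩; exact ⟨hi, ds, h, hd⟩
  · rintro ⟨hi, ds, h, hd⟩; exact ⟨ds, ⟨hi, h⟩, hd⟩

theorem isLeafAt_leaf (p : List ℕ) : IsLeafAt leaf p ↔ p = [] := by
  cases p with
  | nil => simp [isLeafAt_nil]
  | cons i q => rw [isLeafAt_cons]; simp

theorem not_isInternalAt_leaf (p : List ℕ) : ¬ IsInternalAt leaf p := by
  cases p with
  | nil => simp [isInternalAt_nil]
  | cons i q => simp [isInternalAt_cons]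

/-- Paths of length at least one, classified by their first entry. -/
def consEquiv {S : List ℕ → Prop} {n : ℕ} {T : Fin n → List ℕ → Prop}
    (h0 : ¬ S []) (h : ∀ i q, S (i :: q) ↔ ∃ hi : i < n, T ⟨i, hi⟩ q) :
    {p : List ℕ // S p} ≃ Σ i : Fin n, {q : List ℕ // T i q} where
  toFun p := match p with
    | ⟨[], hp⟩ => absurd hp h0
    | ⟨i :: q, hp⟩ => ⟨⟨i, ((h i q).1 hp).1⟩, ⟨q, ((h i q).1 hp).2⟩⟩
  invFun x := ⟨x.1.1 :: x.2.1, (h _ _).2 ⟨x.1.2, x.2.2⟩⟩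
  left_inv p := by
    match p with
    | ⟨[], hp⟩ => exact absurd hp h0
    | ⟨i :: q, hp⟩ => rfl
  right_inv x := rfl

theorem finite_leaves (t : PTree) : Finite {p : List ℕ // IsLeafAt t p} := by
  induction t using induct with
  | h cs ih =>
    by_cases hcs : cs = []
    · subst hcs
      refine Finite.of_injective (β := Unit) (fun _ => ()) ?_
      rintro ⟨p, hp⟩ ⟨q, hq⟩ -
      rw [Subtype.mk.injEq, (isLeafAt_leaf p).1 hp, (isLeafAt_leaf q).1 hq]
    · have : ∀ i : Fin cs.length, Finite {q : List ℕ // IsLeafAt cs[i] q} :=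
        fun i => ih _ (List.getElem_mem _)
      exact Finite.of_equiv _ (consEquiv (T := fun i : Fin cs.length => IsLeafAt cs[i])
        (by simpa [isLeafAt_nil] using hcs) (isLeafAt_cons cs)).symm

theorem finite_internal (t : PTree) : {p : List ℕ | IsInternalAt t p}.Finite := by
  induction t using induct with
  | h cs ih =>
    have : {p : List ℕ | IsInternalAt (node cs) p} ⊆
        {[]} ∪ ⋃ i : Fin cs.length, (fun q => i.1 :: q) '' {q | IsInternalAt cs[i] q} := by
      intro p hp
      cases p with
      | nil => simp
      | cons i q =>
        obtain ⟨hi, hq⟩ := (isInternalAt_cons cs i q).1 hp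
        simp only [Set.mem_union, Set.mem_iUnion]
        exact Or.inr ⟨⟨i, hi⟩, q, hq, rfl⟩
    refine Set.Finite.subset (Set.Finite.union (Set.finite_singleton _)
      (Set.finite_iUnion fun i => (ih _ (List.getElem_mem _)).image _)) this

theorem numLeaves_leaf : numLeaves leaf = 1 := by
  rw [numLeaves, Nat.card_eq_one_iff_unique]
  refine ⟨⟨?_⟩, ⟨[], by simp [isLeafAt_nil]⟩⟩
  rintro ⟨p, hp⟩ ⟨q, hq⟩
  rw [Subtype.mk.injEq, (isLeafAt_leaf p).1 hp, (isLeafAt_leaf q).1 hq]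

theorem numLeaves_node {cs : List PTree} (hcs : cs ≠ []) :
    numLeaves (node cs) = ∑ i : Fin cs.length, numLeaves cs[i] := by
  have := fun i : Fin cs.length => finite_leaves cs[i]
  rw [numLeaves, Nat.card_congr (consEquiv (T := fun i : Fin cs.length => IsLeafAt cs[i])
        (by simpa [isLeafAt_nil] using hcs) (isLeafAt_cons cs)), Nat.card_sigma]
  rfl

theorem sum_fin_getElem {M : Type*} [AddCommMonoid M] (cs : List PTree) (F : PTree → M) :
    ∑ i : Fin cs.length, F cs[i] = (cs.map F).sum := by
  rw [← List.sum_ofFn]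
  congr 1
  exact List.ext_getElem (by simp) (by simp)

theorem prod_fin_getElem {M : Type*} [CommMonoid M] (cs : List PTree) (F : PTree → M) :
    ∏ i : Fin cs.length, F cs[i] = (cs.map F).prod := by
  rw [← List.prod_ofFn]
  congr 1
  exact List.ext_getElem (by simp) (by simp)

theorem numLeaves_node' {cs : List PTree} (hcs : cs ≠ []) :
    numLeaves (node cs) = (cs.map numLeaves).sum := by
  rw [numLeaves_node hcs, sum_fin_getElem]

theorem numLeaves_pos (t : PTree) : 0 < numLeaves t := by
  induction t using induct with
  | h cs ih =>
    cases cs with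
    | nil => simp [numLeaves_leaf]
    | cons c cs =>
      have := ih c (by simp)
      rw [numLeaves_node' (by simp)]; simp; omega

theorem numInternal_leaf : numInternal leaf = 0 := by
  rw [numInternal, Nat.card_eq_zero]
  exact Or.inl ⟨fun p => not_isInternalAt_leaf _ p.2⟩

theorem numInternal_node {cs : List PTree} (hcs : cs ≠ []) :
    numInternal (node cs) = 1 + ∑ i : Fin cs.length, numInternal cs[i] := by
  have hf : ∀ i : Fin cs.length, Finite {q // IsInternalAt cs[i] q} :=
    fun i => (finite_internal cs[i]).to_subtype
  have e : {p | IsInternalAt (node cs) p} =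
      insert [] {p | p ≠ [] ∧ IsInternalAt (node cs) p} := by
    ext p
    by_cases hp : p = []
    · subst hp; simp [isInternalAt_nil, hcs]
    · simp [hp]
  have hfin : {p | p ≠ [] ∧ IsInternalAt (node cs) p}.Finite :=
    (finite_internal (node cs)).subset fun p hp => hp.2
  have e2 : Nat.card {p // p ≠ [] ∧ IsInternalAt (node cs) p} =
      ∑ i : Fin cs.length, numInternal cs[i] := by
    rw [Nat.card_congr (consEquiv (S := fun p => p ≠ [] ∧ IsInternalAt (node cs) p)
      (T := fun i : Fin cs.length => IsInternalAt cs[i]) (by simp)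
      (fun i q => by simpa using isInternalAt_cons cs i q)), Nat.card_sigma]
    rfl
  rw [← e2, numInternal]
  change _ = 1 + Nat.card {p | p ≠ [] ∧ IsInternalAt (node cs) p}
  change Nat.card {p | IsInternalAt (node cs) p} = _
  rw [e, Nat.card_coe_set_eq, Set.ncard_insert_of_notMem (by simp) hfin, Nat.card_coe_set_eq,
    add_comm]

theorem numInternal_node' {cs : List PTree} (hcs : cs ≠ []) :
    numInternal (node cs) = 1 + (cs.map numInternal).sum := by
  rw [numInternal_node hcs, sum_fin_getElem]

theorem numInternal_eq_zero {t : PTree} : numInternal t = 0 ↔ t = leaf := by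
  obtain ⟨cs⟩ := t
  by_cases h : cs = []
  · subst h; simp [numInternal_leaf]
  · rw [numInternal_node h]; simp [h]

/-- Number of leaves of the first `i` trees of a list. -/
noncomputable def leafOffset : List PTree → ℕ → ℕ
  | _, 0 => 0
  | [], _ + 1 => 0
  | c :: cs, i + 1 => numLeaves c + leafOffset cs i

theorem sum_ite_eq_leafOffset (cs : List PTree) (i x : ℕ) (hi : i < cs.length) :
    ∑ j : Fin cs.length, (if j.1 < i then numLeaves cs[j] else if j.1 = i then x else 0) =
      leafOffset cs i + x := by
  induction cs generalizing i with
  | nil => simp at hi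
  | cons c cs ih =>
    simp only [List.length_cons, Fin.sum_univ_succ]
    cases i with
    | zero => simp [leafOffset]
    | succ i =>
      have := ih i (by simpa using hi)
      simp only [Fin.val_succ, Nat.add_lt_add_iff_right, Nat.add_right_cancel_iff]
      simp only [Fin.val_zero, Nat.zero_lt_succ, if_true, leafOffset]
      rw [add_assoc, ← this]
      congr 1

theorem leafOffset_add_le (cs : List PTree) (i : ℕ) (hi : i < cs.length) :
    leafOffset cs i + numLeaves cs[i] ≤ (cs.map numLeaves).sum := by
  induction cs generalizing i with
  | nil => simp at hi
  | cons c cs ih =>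
    cases i with
    | zero => simp [leafOffset]
    | succ i =>
      have := ih i (by simpa using hi)
      simp [leafOffset]; omega

theorem leafOffset_add_le_leafOffset (cs : List PTree) (i j : ℕ) (hij : i < j)
    (hj : j < cs.length) :
    leafOffset cs i + numLeaves cs[i] ≤ leafOffset cs j := by
  induction cs generalizing i j with
  | nil => simp at hj
  | cons c cs ih =>
    obtain ⟨j, rfl⟩ : ∃ j', j = j' + 1 := ⟨j - 1, by omega⟩
    cases i with
    | zero => simp [leafOffset]
    | succ i =>
      have := ih i j (by omega) (by simpa using hj)
      simp [leafOffset]; omega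

theorem leavesBefore_nil (t : PTree) : leavesBefore t [] = 0 := by
  rw [leavesBefore, Nat.card_eq_zero]
  exact Or.inl ⟨fun p => p.2.2.2 (List.prefix_append [] _)⟩

theorem leavesBefore_cons (cs : List PTree) (i : ℕ) (q : List ℕ) (hi : i < cs.length) :
    leavesBefore (node cs) (i :: q) = leafOffset cs i + leavesBefore cs[i] q := by
  have hf := fun i : Fin cs.length => finite_leaves cs[i]
  let T : Fin cs.length → List ℕ → Prop := fun j r => IsLeafAt cs[j] r ∧
    (j.1 < i ∨ (j.1 = i ∧ List.Lex (· < ·) r q)) ∧ ¬ (i = j.1 ∧ q <+: r)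
  have hT : ∀ j, Finite {r // T j r} := fun j =>
    Finite.of_injective (β := {r // IsLeafAt cs[j] r}) (fun r => ⟨r.1, r.2.1⟩)
      fun a b h => Subtype.ext (congrArg (fun x => x.1) h)
  rw [leavesBefore, Nat.card_congr (consEquiv (T := T) (by
      rintro ⟨h, -⟩
      rw [isLeafAt_nil] at h
      simp [h] at hi) ?_), Nat.card_sigma, ← sum_ite_eq_leafOffset _ _ _ hi]
  · refine Finset.sum_congr rfl fun j _ => ?_
    split_ifs with h1 h2
    · rw [numLeaves]
      refine Nat.card_congr (Equiv.subtypeEquivRight fun r => ?_)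
      simp only [T, h1, true_or, true_and, and_iff_left_iff_imp]
      omega
    · have : cs[j] = cs[i] := by simp [h2]
      rw [leavesBefore, ← this]
      refine Nat.card_congr (Equiv.subtypeEquivRight fun r => ?_)
      simp [T, h2]
    · rw [Nat.card_eq_zero]
      refine Or.inl ⟨fun r => ?_⟩
      have := r.2.2.1
      omega
  · intro j r
    simp only [T, isLeafAt_cons, List.cons_lex_cons_iff, List.cons_prefix_cons]
    constructor
    · rintro ⟨⟨hj, h1⟩, h2, h3⟩
      exact ⟨hj, h1, h2, h3⟩
    · rintro ⟨hj, h1, h2, h3⟩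
      exact ⟨⟨hj, h1⟩, h2, h3⟩

theorem subtree!_nil (t : PTree) : subtree! t [] = t := by
  simp [subtree!, subtreeAt]

theorem subtree!_cons (cs : List PTree) (i : ℕ) (q : List ℕ) (hi : i < cs.length) :
    subtree! (node cs) (i :: q) = subtree! cs[i] q := by
  simp [subtree!, subtreeAt, hi]

theorem leavesBefore_add_le (t : PTree) (p : List ℕ) (hp : IsInternalAt t p) :
    leavesBefore t p + numLeaves (subtree! t p) ≤ numLeaves t := by
  induction t using induct generalizing p with
  | h cs ih =>
    cases p with
    | nil => simp [leavesBefore_nil, subtree!_nil]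
    | cons i q =>
      obtain ⟨hi, hq⟩ := (isInternalAt_cons cs i q).1 hp
      have h0 : cs ≠ [] := by rintro rfl; simp at hi
      have := ih _ (List.getElem_mem hi) q hq
      have := leafOffset_add_le cs i hi
      rw [leavesBefore_cons _ _ _ hi, subtree!_cons _ _ _ hi, numLeaves_node' h0]
      omega

theorem sectorIn_cons (cs : List PTree) (i : ℕ) (q : List ℕ) (k : ℕ) (hi : i < cs.length) :
    SectorIn (node cs) (i :: q) k ↔
      leafOffset cs i ≤ k ∧ SectorIn cs[i] q (k - leafOffset cs i) := by
  rw [SectorIn, SectorIn, leavesBefore_cons _ _ _ hi, subtree!_cons _ _ _ hi]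
  omega

theorem sectorIn_nil (t : PTree) (k : ℕ) : SectorIn t [] k ↔ k + 2 ≤ numLeaves t := by
  rw [SectorIn, leavesBefore_nil, subtree!_nil]
  omega

theorem SectorIn.root {t : PTree} {p : List ℕ} {k : ℕ} (hp : IsInternalAt t p)
    (h : SectorIn t p k) : SectorIn t [] k := by
  have := leavesBefore_add_le t p hp
  rw [sectorIn_nil]
  rw [SectorIn] at h
  omega

theorem ownsSector_cons (cs : List PTree) (i : ℕ) (q : List ℕ) (k : ℕ) (hi : i < cs.length) :
    OwnsSector (node cs) (i :: q) k ↔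
      leafOffset cs i ≤ k ∧ OwnsSector cs[i] q (k - leafOffset cs i) := by
  simp only [OwnsSector, sectorIn_cons _ _ _ _ hi, isInternalAt_cons]
  constructor
  · rintro ⟨⟨_, h1⟩, ⟨h2, h3⟩, h4⟩
    refine ⟨h2, h1, h3, fun w hw hqw hne hs => h4 (i :: w) ?_ ?_ ?_ ?_⟩
    · exact (isInternalAt_cons _ _ _).2 ⟨hi, hw⟩
    · simpa using hqw
    · simpa using hne
    · exact (sectorIn_cons _ _ _ _ hi).2 ⟨h2, hs⟩
  · rintro ⟨h2, h1, h3, h4⟩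
    refine ⟨⟨hi, h1⟩, ⟨h2, h3⟩, fun w hw hqw hne hs => ?_⟩
    cases w with
    | nil => simp at hqw
    | cons j w =>
      obtain ⟨rfl, hqw'⟩ := List.cons_prefix_cons.1 hqw
      exact h4 w ((isInternalAt_cons _ _ _).1 hw).2 hqw' (by simpa using hne)
        ((sectorIn_cons _ _ _ _ hi).1 hs).2

theorem ownsSector_nil {cs : List PTree} (hcs : cs ≠ []) (k : ℕ) :
    OwnsSector (node cs) [] k ↔ k + 2 ≤ (cs.map numLeaves).sum ∧
      ∀ i (hi : i < cs.length), ¬ (leafOffset cs i ≤ k ∧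
        k - leafOffset cs i + 2 ≤ numLeaves cs[i]) := by
  rw [OwnsSector, isInternalAt_nil, sectorIn_nil, numLeaves_node' hcs]
  refine ⟨?_, ?_⟩
  · rintro ⟨-, h1, h2⟩
    refine ⟨h1, fun i hi ⟨h3, h4⟩ => h2 [i] ?_ (by simp) (by simp) ?_⟩
    · rw [isInternalAt_cons]
      refine ⟨hi, ?_⟩
      generalize hc : cs[i] = c at h4
      obtain ⟨ds⟩ := c
      rw [isInternalAt_nil]
      rintro rfl
      rw [numLeaves_leaf] at h4
      omega
    · rw [sectorIn_cons _ _ _ _ hi, sectorIn_nil]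
      exact ⟨h3, h4⟩
  · rintro ⟨h1, h2⟩
    refine ⟨hcs, h1, fun w hw _ hne hs => ?_⟩
    cases w with
    | nil => exact hne rfl
    | cons i q =>
      obtain ⟨hi, hq⟩ := (isInternalAt_cons _ _ _).1 hw
      obtain ⟨h3, h4⟩ := (sectorIn_cons _ _ _ _ hi).1 hs
      exact h2 i hi ⟨h3, (sectorIn_nil _ _).1 (h4.root hq)⟩

section Pick

variable {A : Type*}

open Classical in
/-- The letters of a word at the positions satisfying `p`. -/
noncomputable def pick (p : ℕ → Prop) : List A → List A
  | [] => []
  | a :: w => (if p 0 then [a] else []) ++ pick (fun k => p (k + 1)) w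

open Classical in
theorem pick_eq [Zero A] (p : ℕ → Prop) (w : List A) :
    (((List.range w.length).filter fun i => decide (p i)).map fun i => w.getD i 0) = pick p w := by
  induction w generalizing p with
  | nil => simp [pick]
  | cons a w ih =>
    rw [pick, ← ih, List.length_cons, List.range_succ_eq_map, List.filter_cons, List.filter_map]
    split_ifs with h1 h2 h2 <;> simp_all [Function.comp_def]

theorem pick_append (p : ℕ → Prop) (u v : List A) :
    pick p (u ++ v) = pick p u ++ pick (fun k => p (u.length + k)) v := by
  induction u generalizing p with
  | nil => simp [pick]
  | cons a u ih => simp [pick, ih, Nat.add_right_comm]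

theorem pick_congr {p p' : ℕ → Prop} {w : List A} (h : ∀ k < w.length, (p k ↔ p' k)) :
    pick p w = pick p' w := by
  induction w generalizing p p' with
  | nil => rfl
  | cons a w ih =>
    have h0 := h 0 (by simp)
    rw [pick, pick, ih (p' := fun k => p' (k + 1))]
    · by_cases hp : p' 0 <;> simp [h0, hp]
    · exact fun k hk => h _ (by simpa using hk)

theorem pick_of_forall {p : ℕ → Prop} {w : List A} (h : ∀ k < w.length, p k) : pick p w = w := by
  induction w generalizing p with
  | nil => rfl
  | cons a w ih =>
    rw [pick, ih]
    · simp [h 0 (by simp)]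
    · exact fun k hk => h _ (by simpa using hk)

theorem pick_of_forall_not {p : ℕ → Prop} {w : List A} (h : ∀ k < w.length, ¬ p k) :
    pick p w = [] := by
  induction w generalizing p with
  | nil => rfl
  | cons a w ih =>
    rw [pick, ih]
    · simp [h 0 (by simp)]
    · exact fun k hk => h _ (by simpa using hk)

/-- The part of a word decorating the sectors of the `i`-th tree of a list. -/
noncomputable def segment (cs : List PTree) (w : List A) (i : Fin cs.length) : List A :=
  (w.drop (leafOffset cs i)).take (numLeaves cs[i] - 1)

/-- The letters of a word at the sectors between consecutive trees of a list. -/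
noncomputable def rootLetters : List PTree → List A → List A
  | [], _ => []
  | c :: cs, w => (w.drop (numLeaves c - 1)).take 1 ++ rootLetters cs (w.drop (numLeaves c))

theorem rootLetters_cons (c : PTree) (cs : List PTree) (w : List A) :
    rootLetters (c :: cs) w =
      (w.drop (numLeaves c - 1)).take 1 ++ rootLetters cs (w.drop (numLeaves c)) := rfl

theorem length_segment (cs : List PTree) (w : List A) (h : w.length + 1 = (cs.map numLeaves).sum)
    (i : Fin cs.length) : (segment cs w i).length = numLeaves cs[i] - 1 := by
  have := leafOffset_add_le cs i i.2
  have := numLeaves_pos cs[i]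
  simp [segment] at *
  omega

theorem segment_zero (c : PTree) (cs : List PTree) (w : List A) :
    segment (c :: cs) w ⟨0, by simp⟩ = w.take (numLeaves c - 1) := by
  simp [segment, leafOffset]

theorem segment_succ (c : PTree) (cs : List PTree) (w : List A) (i : ℕ) (hi : i < cs.length) :
    segment (c :: cs) w ⟨i + 1, by simpa using hi⟩ =
      segment cs (w.drop (numLeaves c)) ⟨i, hi⟩ := by
  simp [segment, leafOffset]

theorem pick_segment {p p' : ℕ → Prop} (cs : List PTree) (w : List A) (i : Fin cs.length)
    (h1 : ∀ k, p k ↔ leafOffset cs i ≤ k ∧ p' (k - leafOffset cs i))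
    (h2 : ∀ k, p' k → k + 2 ≤ numLeaves cs[i]) : pick p w = pick p' (segment cs w i) := by
  have e : w = w.take (leafOffset cs i) ++ (segment cs w i ++
      (w.drop (leafOffset cs i)).drop (numLeaves cs[i] - 1)) := by
    rw [segment, List.take_append_drop, List.take_append_drop]
  conv_lhs => rw [e]
  rw [pick_append, pick_append, pick_of_forall_not, pick_of_forall_not (w := List.drop _ _),
    List.nil_append, List.append_nil]
  · refine pick_congr fun k hk => ?_
    simp only [segment, List.length_take, List.length_drop] at hk
    rw [h1, List.length_take, min_eq_left (by omega)]
    simp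
  · intro k hk h
    simp only [segment, List.length_take, List.length_drop] at hk h
    have := h2 _ ((h1 _).1 h).2
    omega
  · intro k hk h
    have := ((h1 _).1 h).1
    simp at hk
    omega

theorem split_first (n : ℕ) (w : List A) :
    w = w.take n ++ ((w.drop n).take 1 ++ w.drop (n + 1)) := by
  rw [← List.drop_drop, List.take_append_drop, List.take_append_drop]

theorem pick_rootLetters {p : ℕ → Prop} (cs : List PTree) (w : List A)
    (hw : w.length ≤ (cs.map numLeaves).sum)
    (h : ∀ k < w.length, p k ↔ ∀ i (hi : i < cs.length), ¬ (leafOffset cs i ≤ k ∧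
        k - leafOffset cs i + 2 ≤ numLeaves cs[i])) :
    pick p w = rootLetters cs w := by
  induction cs generalizing w p with
  | nil =>
    obtain rfl : w = [] := by simpa using hw
    rfl
  | cons c cs ih =>
    have hc := numLeaves_pos c
    have e := split_first (numLeaves c - 1) w
    rw [Nat.sub_add_cancel hc] at e
    conv_lhs => rw [e]
    rw [pick_append, pick_append, pick_of_forall_not, pick_of_forall, rootLetters,
      List.nil_append]
    · congr 1
      refine ih _ (by simp at hw ⊢; omega) fun k hk => ?_
      simp only [List.length_drop] at hk
      simp only [List.length_take, List.length_drop]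
      rw [min_eq_left (by omega : numLeaves c - 1 ≤ w.length),
        min_eq_left (by omega : 1 ≤ _)]
      rw [← add_assoc, Nat.sub_add_cancel hc, h _ (by omega)]
      constructor
      · intro h' i hi
        have := h' (i + 1) (by simpa using hi)
        simp only [leafOffset, List.getElem_cons_succ] at this
        omega
      · intro h' i hi
        cases i with
        | zero =>
          simp only [leafOffset, List.getElem_cons_zero]
          omega
        | succ i =>
          have := h' i (by simpa using hi)
          simp only [leafOffset, List.getElem_cons_succ]
          omega
    · intro k hk
      simp only [List.length_take, List.length_drop] at hk ⊢
      rw [h _ (by omega)]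
      intro i hi
      cases i with
      | zero =>
        simp only [leafOffset, List.getElem_cons_zero]
        omega
      | succ i =>
        simp only [leafOffset, List.getElem_cons_succ]
        omega
    · intro k hk
      simp only [List.length_take] at hk
      rw [h _ (by omega)]
      push Not
      refine ⟨0, by simp, by simp [leafOffset], ?_⟩
      simp only [leafOffset, List.getElem_cons_zero]
      omega

/-- Selecting letters of a word within the segments of a list of trees, while keeping the letters
between the trees, yields a word with the corresponding segments. -/
theorem pick_decomp {p : ℕ → Prop} (cs T : List PTree) (w : List A)
    (hlen : T.length = cs.length)
    (hw : w.length + 1 = (cs.map numLeaves).sum)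
    (hp : ∀ k < w.length, (∀ i (hi : i < cs.length), ¬ (leafOffset cs i ≤ k ∧
        k - leafOffset cs i + 2 ≤ numLeaves cs[i])) → p k)
    (hT : ∀ i : Fin cs.length, (pick (fun k => p (leafOffset cs i + k)) (segment cs w i)).length + 1
      = numLeaves (T[i.1]'(hlen.symm ▸ i.2))) :
    rootLetters T (pick p w) = rootLetters cs w ∧
    (∀ i : Fin cs.length, segment T (pick p w) ⟨i.1, hlen.symm ▸ i.2⟩ =
      pick (fun k => p (leafOffset cs i + k)) (segment cs w i)) ∧
    (pick p w).length + 1 = (T.map numLeaves).sum := by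
  induction cs generalizing T w p with
  | nil => simp at hw
  | cons c cs ih =>
    obtain ⟨d, T, rfl⟩ := List.exists_cons_of_length_eq_add_one hlen
    have hc := numLeaves_pos c
    have hd : (pick p (w.take (numLeaves c - 1))).length + 1 = numLeaves d := by
      have := hT ⟨0, by simp⟩
      rw [segment_zero] at this
      simpa [leafOffset] using this
    cases cs with
    | nil =>
      obtain rfl : T = [] := by simpa using hlen
      simp only [List.map_cons, List.map_nil, List.sum_cons, List.sum_nil, add_zero] at hw
      have e : w.take (numLeaves c - 1) = w := List.take_of_length_le (by omega)
      rw [e] at hd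
      refine ⟨?_, ?_, by simpa using hd⟩
      · rw [rootLetters_cons, rootLetters_cons, List.drop_of_length_le (by omega),
          List.drop_of_length_le (i := numLeaves c - 1) (by omega)]
        rfl
      · intro i
        obtain rfl : i = ⟨0, by simp⟩ := by ext; have := i.2; simp at this; simp
        simp only [segment_zero, e, leafOffset, zero_add]
        exact List.take_of_length_le (by omega)
    | cons c' cs =>
      have hc' := numLeaves_pos c'
      have hw' : numLeaves c ≤ w.length := by simp at hw; omega
      set u := w.take (numLeaves c - 1) with hu
      set v := w.drop (numLeaves c) with hv
      have hul : u.length = numLeaves c - 1 := by simp [hu]; omega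
      obtain ⟨x, hx⟩ : ∃ x, (w.drop (numLeaves c - 1)).take 1 = [x] := by
        rw [← List.length_eq_one_iff]; simp; omega
      have e := split_first (numLeaves c - 1) w
      rw [Nat.sub_add_cancel hc, ← hu, ← hv, hx] at e
      have hp0 : p u.length := by
        refine hp _ (by omega) fun i hi => ?_
        cases i with
        | zero =>
          simp only [leafOffset, List.getElem_cons_zero]
          omega
        | succ i =>
          simp only [leafOffset]
          omega
      have e2 : pick p w = pick p u ++ (x :: pick (fun k => p (numLeaves c + k)) v) := by
        conv_lhs => rw [e]
        rw [pick_append]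
        congr 1
        simp only [List.singleton_append, pick, Nat.add_zero, hp0, if_true, List.cons.injEq,
          true_and]
        refine pick_congr fun k _ => ?_
        rw [hul, show numLeaves c - 1 + (k + 1) = numLeaves c + k by omega]
      have e3 : (pick p w).drop (numLeaves d) = pick (fun k => p (numLeaves c + k)) v := by
        rw [e2, ← hd, List.drop_append]; simp
      obtain ⟨i1, i2, i3⟩ := ih (p := fun k => p (numLeaves c + k)) T v (by simpa using hlen)
        (by simp [hv] at hw ⊢; omega) (by
          intro k hk h
          refine hp _ (by simp [hv] at hk; omega) fun i hi => ?_
          cases i with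
          | zero =>
            simp only [leafOffset, List.getElem_cons_zero]
            omega
          | succ i =>
            have := h i (by simpa using hi)
            simp only [leafOffset, List.getElem_cons_succ]
            omega) (by
          intro i
          have := hT ⟨i.1 + 1, by simpa using i.2⟩
          rw [segment_succ _ _ _ _ i.2] at this
          simp only [leafOffset, ← add_assoc] at this ⊢
          exact this)
      refine ⟨?_, ?_, ?_⟩
      · rw [rootLetters_cons d, rootLetters_cons c, e3, i1, hx, e2, ← hd]
        simp [hv]
      · intro i
        obtain ⟨i, hi⟩ := i
        cases i with
        | zero =>
          rw [segment_zero, segment_zero, e2, ← hd]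
          simp [leafOffset, hu]
        | succ i =>
          rw [segment_succ _ _ _ _ (by simp at hlen hi; omega),
            segment_succ _ _ _ _ (by simpa using hi),
            e3, i2 ⟨i, by simpa using hi⟩]
          simp only [leafOffset, ← add_assoc]
          rfl
      · rw [e2, List.map_cons, List.sum_cons, ← i3]
        simp; omega

theorem rootLetters_replicate (m : ℕ) (w : List A) (hw : w.length ≤ m) :
    rootLetters (List.replicate m leaf) w = w := by
  induction m generalizing w with
  | zero => simpa [rootLetters] using (List.length_eq_zero_iff.1 (Nat.le_zero.1 hw)).symm
  | succ m ih =>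
    rw [List.replicate_succ, rootLetters, numLeaves_leaf, ih _ (by simp; omega)]
    simp
    cases w <;> simp

end Pick

section PhiPi

variable {A : Type*} [Ring A] (φ : A → ℂ)

theorem phiPi_eq (t : PTree) (w : List A) :
    phiPi φ t w = ∏ᶠ v ∈ {v : List ℕ | IsInternalAt t v}, φ (pick (OwnsSector t v) w).prod := by
  simp only [phiPi, ← pick_eq]

theorem phiPi_leaf (w : List A) : phiPi φ leaf w = 1 := by
  rw [phiPi_eq, finprod_mem_eq_one_of_forall_eq_one]
  intro v hv
  exact absurd hv (not_isInternalAt_leaf v)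

theorem phiPi_node {cs : List PTree} (hcs : cs ≠ []) (w : List A)
    (hw : w.length + 1 = (cs.map numLeaves).sum) :
    phiPi φ (node cs) w = φ (rootLetters cs w).prod *
      ∏ i : Fin cs.length, phiPi φ cs[i] (segment cs w i) := by
  have e : {p | IsInternalAt (node cs) p} = insert []
      (⋃ i : Fin cs.length, (fun q => i.1 :: q) '' {q | IsInternalAt cs[i] q}) := by
    ext p
    cases p with
    | nil => simp [isInternalAt_nil, hcs]
    | cons i q =>
      simp only [Set.mem_ofPred_eq, isInternalAt_cons, Set.mem_insert_iff, reduceCtorEq,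
        Set.mem_iUnion, Set.mem_image, List.cons.injEq, false_or]
      constructor
      · rintro ⟨hi, hq⟩; exact ⟨⟨i, hi⟩, q, hq, rfl, rfl⟩
      · rintro ⟨i, q, hq, rfl, rfl⟩; exact ⟨i.2, hq⟩
  rw [phiPi_eq, e, finprod_mem_insert _ (by simp) (Set.finite_iUnion fun i =>
    (finite_internal _).image _), finprod_mem_iUnion _ fun i => (finite_internal _).image _,
    finprod_eq_prod_of_fintype]
  · congr 1
    · rw [pick_rootLetters cs w (by omega)]
      intro k hk
      rw [ownsSector_nil hcs]
      exact ⟨fun h => h.2, fun h => ⟨by omega, h⟩⟩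
    · refine Finset.prod_congr rfl fun i _ => ?_
      rw [finprod_mem_image (by simp [Set.InjOn]), phiPi_eq]
      refine finprod_mem_congr rfl fun q hq => ?_
      congr 2
      refine pick_segment cs w i (fun k => ownsSector_cons cs i q k i.2) fun k hk => ?_
      exact (sectorIn_nil _ _).1 (SectorIn.root hk.1 hk.2.1)
  · intro i j hij
    simp only [Function.onFun, Set.disjoint_left, Set.mem_image]
    rintro _ ⟨q, _, rfl⟩ ⟨q', _, h⟩
    simp only [List.cons.injEq] at h
    exact hij (Fin.ext h.1.symm)

end PhiPi

section Cuts

theorem mem_verticesListAux (cs : List PTree) (k i : ℕ) (q : List ℕ) (hi : i < cs.length)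
    (hq : q ∈ verticesList cs[i]) : (k + i) :: q ∈ verticesListAux k cs := by
  induction cs generalizing k i with
  | nil => simp at hi
  | cons c cs ih =>
    rw [verticesListAux, List.mem_append]
    cases i with
    | zero => exact Or.inl (List.mem_map_of_mem hq)
    | succ i =>
      right
      have := ih (k + 1) i (by simpa using hi) hq
      rwa [Nat.add_right_comm] at this

theorem IsInternalAt.mem_verticesList {t : PTree} {p : List ℕ} (hp : IsInternalAt t p) :
    p ∈ verticesList t := by
  induction t using induct generalizing p with
  | h cs ih =>
    rw [verticesList]
    cases p with
    | nil => simp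
    | cons i q =>
      obtain ⟨hi, hq⟩ := (isInternalAt_cons cs i q).1 hp
      have := mem_verticesListAux cs 0 i q hi (ih _ (List.getElem_mem hi) hq)
      simp_all

theorem mem_cutsFinset {t : PTree} {c : Finset (List ℕ)} :
    c ∈ cutsFinset t ↔
      (∀ v ∈ c, IsInternalAt t v) ∧ ∀ v ∈ c, ∀ w ∈ c, v ≠ w → ¬ v <+: w := by
  rw [cutsFinset, Finset.mem_filter, Finset.mem_powerset]
  refine and_congr_left fun _ => forall₂_congr fun v _ => ?_
  simp only [internalFinset, List.mem_toFinset, List.mem_filter, decide_eq_true_eq]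
  exact ⟨fun h => h.2, fun h => ⟨h.mem_verticesList, h⟩⟩

/-- The set of vertices of a tree obtained from sets of vertices of the subtrees of the root. -/
noncomputable def join {n : ℕ} (f : Fin n → Finset (List ℕ)) : Finset (List ℕ) :=
  Finset.univ.biUnion fun i => (f i).map ⟨fun q => i.1 :: q, List.cons_injective⟩

theorem mem_join {n : ℕ} {f : Fin n → Finset (List ℕ)} {p : List ℕ} :
    p ∈ join f ↔ ∃ (i : Fin n) (q : List ℕ), q ∈ f i ∧ i.1 :: q = p := by
  simp [join]

theorem cons_mem_join {n : ℕ} {f : Fin n → Finset (List ℕ)} (i : Fin n) {q : List ℕ} :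
    i.1 :: q ∈ join f ↔ q ∈ f i := by
  rw [mem_join]
  constructor
  · rintro ⟨j, r, hr, h⟩
    simp only [List.cons.injEq, Fin.val_inj] at h
    obtain ⟨rfl, rfl⟩ := h
    exact hr
  · exact fun h => ⟨i, q, h, rfl⟩

theorem nil_notMem_join {n : ℕ} {f : Fin n → Finset (List ℕ)} : [] ∉ join f := by
  simp [mem_join]

theorem join_injective {n : ℕ} : Function.Injective (join (n := n)) := by
  intro f g h
  ext i q
  rw [← cons_mem_join, h, cons_mem_join]

theorem prod_join {M : Type*} [CommMonoid M] {n : ℕ} (f : Fin n → Finset (List ℕ))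
    (G : List ℕ → M) : ∏ v ∈ join f, G v = ∏ i, ∏ q ∈ f i, G (i.1 :: q) := by
  rw [join, Finset.prod_biUnion]
  · simp
  · intro i _ j _ hij
    simp only [Function.onFun, Finset.disjoint_left, Finset.mem_map, Function.Embedding.coeFn_mk]
    rintro _ ⟨q, _, rfl⟩ ⟨r, _, h⟩
    simp only [List.cons.injEq, Fin.val_inj] at h
    exact hij h.1.symm

theorem sum_join {M : Type*} [AddCommMonoid M] {n : ℕ} (f : Fin n → Finset (List ℕ))
    (G : List ℕ → M) : ∑ v ∈ join f, G v = ∑ i, ∑ q ∈ f i, G (i.1 :: q) :=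
  prod_join (M := Multiplicative M) f G

theorem cutsFinset_leaf : cutsFinset leaf = {∅} := by
  ext c
  simp only [mem_cutsFinset, not_isInternalAt_leaf, Finset.mem_singleton]
  constructor
  · rintro ⟨h, -⟩
    exact Finset.eq_empty_of_forall_notMem h
  · rintro rfl
    simp

theorem join_mem_cutsFinset {cs : List PTree} {f : Fin cs.length → Finset (List ℕ)} :
    join f ∈ cutsFinset (node cs) ↔ ∀ i, f i ∈ cutsFinset cs[i] := by
  simp only [mem_cutsFinset]
  constructor
  · rintro ⟨h1, h2⟩ i
    refine ⟨fun v hv => ?_, fun v hv w hw hvw h => ?_⟩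
    · exact ((isInternalAt_cons _ _ _).1 (h1 _ ((cons_mem_join i).2 hv))).2
    · exact h2 _ ((cons_mem_join i).2 hv) _ ((cons_mem_join i).2 hw) (by simpa) (by simpa)
  · intro h
    refine ⟨fun v hv => ?_, fun v hv w hw hvw hp => ?_⟩
    · obtain ⟨i, q, hq, rfl⟩ := mem_join.1 hv
      exact (isInternalAt_cons _ _ _).2 ⟨i.2, (h i).1 q hq⟩
    · obtain ⟨i, q, hq, rfl⟩ := mem_join.1 hv
      obtain ⟨j, r, hr, rfl⟩ := mem_join.1 hw
      simp only [List.cons_prefix_cons, Fin.val_inj] at hp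
      obtain ⟨rfl, hp⟩ := hp
      exact (h i).2 q hq r hr (by simpa using hvw) hp

theorem exists_join {cs : List PTree} {c : Finset (List ℕ)} (hc : c ∈ cutsFinset (node cs))
    (h0 : [] ∉ c) : ∃ f : Fin cs.length → Finset (List ℕ), c = join f := by
  refine ⟨fun i => c.preimage (fun q => i.1 :: q) List.cons_injective.injOn, ?_⟩
  ext p
  rw [mem_join]
  simp only [Finset.mem_preimage]
  constructor
  · intro hp
    cases p with
    | nil => exact absurd hp h0
    | cons i q =>
      exact ⟨⟨i, ((isInternalAt_cons _ _ _).1 ((mem_cutsFinset.1 hc).1 _ hp)).1⟩, q, hp, rfl⟩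
  · rintro ⟨i, q, hq, rfl⟩
    exact hq

theorem eq_singleton_nil {t : PTree} {c : Finset (List ℕ)} (hc : c ∈ cutsFinset t)
    (h0 : [] ∈ c) : c = {[]} := by
  refine Finset.eq_singleton_iff_unique_mem.2 ⟨h0, fun v hv => ?_⟩
  by_contra h
  exact (mem_cutsFinset.1 hc).2 [] h0 v hv (Ne.symm h) (List.prefix_append [] _)

theorem cut_cases {cs : List PTree} {c : Finset (List ℕ)} (hc : c ∈ cutsFinset (node cs)) :
    c = {[]} ∨ ∃ f : Fin cs.length → Finset (List ℕ), (∀ i, f i ∈ cutsFinset cs[i]) ∧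
      c = join f := by
  by_cases h0 : [] ∈ c
  · exact Or.inl (eq_singleton_nil hc h0)
  · obtain ⟨f, rfl⟩ := exists_join hc h0
    exact Or.inr ⟨f, join_mem_cutsFinset.1 hc, rfl⟩

theorem singleton_nil_mem_cutsFinset {cs : List PTree} (hcs : cs ≠ []) :
    {[]} ∈ cutsFinset (node cs) := by
  rw [mem_cutsFinset]
  simp [isInternalAt_nil, hcs]

open Classical in
theorem cutsFinset_node {cs : List PTree} (hcs : cs ≠ []) :
    cutsFinset (node cs) = insert {[]}
      ((Fintype.piFinset fun i : Fin cs.length => cutsFinset cs[i]).image join) := by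
  ext c
  rw [Finset.mem_insert, Finset.mem_image]
  constructor
  · intro hc
    rcases cut_cases hc with h | ⟨f, hf, rfl⟩
    · exact Or.inl h
    · exact Or.inr ⟨f, Fintype.mem_piFinset.2 hf, rfl⟩
  · rintro (rfl | ⟨f, hf, rfl⟩)
    · exact singleton_nil_mem_cutsFinset hcs
    · exact join_mem_cutsFinset.2 (Fintype.mem_piFinset.1 hf)

theorem sum_cutsFinset_node {M : Type*} [AddCommMonoid M] {cs : List PTree} (hcs : cs ≠ [])
    (F : Finset (List ℕ) → M) : ∑ c ∈ cutsFinset (node cs), F c =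
      F {[]} + ∑ f ∈ Fintype.piFinset fun i : Fin cs.length => cutsFinset cs[i], F (join f) := by
  rw [cutsFinset_node hcs, Finset.sum_insert, Finset.sum_image join_injective.injOn]
  rw [Finset.mem_image]
  rintro ⟨f, -, hf⟩
  exact nil_notMem_join (f := f) (by simp [hf])

/-- Replacing a list of subtrees by leaves. -/
def pruneList (l : List (List ℕ)) (t : PTree) : PTree := l.foldl (fun s v => replaceLeaf v s) t

theorem replaceLeaf_leaf (p : List ℕ) : replaceLeaf p leaf = leaf := by
  cases p <;> simp [replaceLeaf]

theorem replaceLeaf_comm (p q : List ℕ) (t : PTree) :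
    replaceLeaf p (replaceLeaf q t) = replaceLeaf q (replaceLeaf p t) := by
  induction p generalizing q t with
  | nil => rw [replaceLeaf, replaceLeaf, replaceLeaf_leaf]
  | cons i p ih =>
    obtain ⟨cs⟩ := t
    cases q with
    | nil => rw [replaceLeaf, replaceLeaf, replaceLeaf_leaf]
    | cons j q =>
      simp only [replaceLeaf, node.injEq]
      by_cases hij : i = j
      · subst hij
        by_cases hi : i < cs.length
        · simp [hi, ih q]
        · simp [List.set_eq_of_length_le (not_lt.1 hi)]
      · rw [List.set_comm _ _ (Ne.symm hij)]
        simp [List.getElem?_set_ne hij, List.getElem?_set_ne (Ne.symm hij)]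

theorem pruneList_perm {l l' : List (List ℕ)} (h : l.Perm l') (t : PTree) :
    pruneList l t = pruneList l' t :=
  h.foldl_eq' (fun _ _ _ _ _ => replaceLeaf_comm _ _ _) t

theorem sortCut_perm (t : PTree) (c : Finset (List ℕ)) : (sortCut t c).Perm c.toList :=
  List.mergeSort_perm _ _

theorem trunkTree_eq (t : PTree) (c : Finset (List ℕ)) : trunkTree t c = pruneList c.toList t :=
  pruneList_perm (sortCut_perm t c) t

theorem trunkTree_empty (t : PTree) : trunkTree t ∅ = t := by
  simp [trunkTree_eq, pruneList]

theorem trunkTree_singleton_nil (t : PTree) : trunkTree t {[]} = leaf := by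
  simp [trunkTree_eq, pruneList, replaceLeaf]

/-- The tails of the paths starting with a given letter. -/
def tailsAt (i : ℕ) (l : List (List ℕ)) : List (List ℕ) :=
  l.filterMap fun p => match p with
    | [] => none
    | j :: q => if j = i then some q else none

theorem mem_tailsAt {i : ℕ} {l : List (List ℕ)} {q : List ℕ} :
    q ∈ tailsAt i l ↔ i :: q ∈ l := by
  rw [tailsAt, List.mem_filterMap]
  constructor
  · rintro ⟨p, hp, h⟩
    cases p with
    | nil => simp at h
    | cons j r =>
      simp only [Option.ite_none_right_eq_some, Option.some.injEq] at h
      obtain ⟨rfl, rfl⟩ := h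
      exact hp
  · exact fun h => ⟨_, h, by simp⟩

theorem nodup_tailsAt {i : ℕ} {l : List (List ℕ)} (hl : l.Nodup) : (tailsAt i l).Nodup := by
  refine hl.filterMap fun p p' q h h' => ?_
  cases p <;> cases p' <;> simp_all

theorem pruneList_node (l : List (List ℕ)) (h0 : [] ∉ l) (cs : List PTree) :
    pruneList l (node cs) = node (cs.mapIdx fun i c => pruneList (tailsAt i l) c) := by
  induction l generalizing cs with
  | nil => simp [pruneList, tailsAt, List.mapIdx_eq_ofFn]
  | cons p l ih =>
    cases p with
    | nil => simp at h0
    | cons j q =>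
      change pruneList l (replaceLeaf (j :: q) (node cs)) = _
      rw [replaceLeaf, ih (by simp_all)]
      congr 1
      refine List.ext_getElem (by simp) fun i h1 h2 => ?_
      simp only [List.length_mapIdx] at h2
      simp only [List.getElem_mapIdx, List.getElem_set]
      by_cases hij : j = i
      · subst hij
        simp [tailsAt, h2, pruneList]
      · simp [tailsAt, hij]

theorem trunkTree_join (cs : List PTree) (f : Fin cs.length → Finset (List ℕ)) :
    trunkTree (node cs) (join f) = node (List.ofFn fun i => trunkTree cs[i] (f i)) := by
  rw [trunkTree_eq, pruneList_node _ (by simpa using nil_notMem_join)]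
  congr 1
  refine List.ext_getElem (by simp) fun i h1 h2 => ?_
  simp only [List.length_mapIdx] at h1
  simp only [List.getElem_mapIdx, List.getElem_ofFn, trunkTree_eq]
  refine pruneList_perm ((List.perm_ext_iff_of_nodup (nodup_tailsAt (Finset.nodup_toList _))
    (Finset.nodup_toList _)).2 fun q => ?_) _
  rw [mem_tailsAt, Finset.mem_toList, Finset.mem_toList]
  exact cons_mem_join ⟨i, h1⟩

theorem removedIdx_join (cs : List PTree) (f : Fin cs.length → Finset (List ℕ)) (k : ℕ) :
    RemovedIdx (node cs) (join f) k ↔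
      ∃ i : Fin cs.length, leafOffset cs i ≤ k ∧ RemovedIdx cs[i] (f i) (k - leafOffset cs i) := by
  simp only [RemovedIdx]
  constructor
  · rintro ⟨v, hv, h1, h2⟩
    obtain ⟨i, q, hq, rfl⟩ := mem_join.1 hv
    rw [leavesBefore_cons _ _ _ i.2, subtree!_cons _ _ _ i.2] at *
    exact ⟨i, by omega, q, hq, by simp; omega, by simp; omega⟩
  · rintro ⟨i, h1, q, hq, h2, h3⟩
    refine ⟨i.1 :: q, (cons_mem_join i).2 hq, ?_, ?_⟩ <;>
    · rw [leavesBefore_cons _ _ _ i.2]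
      try rw [subtree!_cons _ _ _ i.2]
      simp at *
      omega

theorem RemovedIdx.lt {t : PTree} {c : Finset (List ℕ)} (hc : c ∈ cutsFinset t) {k : ℕ}
    (h : RemovedIdx t c k) : k + 2 ≤ numLeaves t := by
  obtain ⟨v, hv, h1, h2⟩ := h
  have := leavesBefore_add_le t v ((mem_cutsFinset.1 hc).1 v hv)
  rw [numSectors] at h2
  omega

theorem removedIdx_join_add (cs : List PTree) {f : Fin cs.length → Finset (List ℕ)}
    (hf : ∀ i, f i ∈ cutsFinset cs[i]) (i : Fin cs.length) (k : ℕ) (hk : k + 2 ≤ numLeaves cs[i]) :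
    RemovedIdx (node cs) (join f) (leafOffset cs i + k) ↔ RemovedIdx cs[i] (f i) k := by
  rw [removedIdx_join]
  constructor
  · rintro ⟨j, h1, h2⟩
    have := h2.lt (hf j)
    obtain rfl : j = i := by
      by_contra h
      rcases lt_or_gt_of_ne h with h | h
      · have := leafOffset_add_le_leafOffset cs j i h i.2
        simp at *
        omega
      · have := leafOffset_add_le_leafOffset cs i j h j.2
        simp at *
        omega
    simpa using h2
  · exact fun h => ⟨i, by omega, by simpa using h⟩

end Cuts

section Trunk

variable {A : Type*}

theorem trunkWord_eq [Ring A] (t : PTree) (c : Finset (List ℕ)) (w : List A) :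
    trunkWord t c w = pick (fun k => ¬ RemovedIdx t c k) w := by
  rw [← pick_eq, trunkWord]
  congr!

theorem trunkWord_empty [Ring A] (t : PTree) (w : List A) : trunkWord t ∅ w = w := by
  rw [trunkWord_eq, pick_of_forall]
  simp [RemovedIdx]

theorem trunkWord_singleton_nil [Ring A] (t : PTree) (w : List A)
    (hw : w.length + 1 = numLeaves t) :
    trunkWord t {[]} w = [] := by
  rw [trunkWord_eq, pick_of_forall_not]
  intro k hk h
  apply h
  refine ⟨[], by simp, ?_, ?_⟩
  · simp [leavesBefore_nil]
  · rw [leavesBefore_nil, subtree!_nil, numSectors]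
    omega

/-- The word decorating the subtree of `t` at `v`. -/
noncomputable def subword (t : PTree) (v : List ℕ) (w : List A) : List A :=
  (w.drop (leavesBefore t v)).take (numSectors (subtree! t v))

theorem subword_nil {t : PTree} {w : List A} (hw : w.length + 1 = numLeaves t) :
    subword t [] w = w := by
  rw [subword, leavesBefore_nil, subtree!_nil, numSectors]
  simp
  omega

theorem subword_cons {cs : List PTree} (i : Fin cs.length) {v : List ℕ}
    (hv : IsInternalAt cs[i] v) (w : List A) :
    subword (node cs) (i.1 :: v) w = subword cs[i] v (segment cs w i) := by
  have := leavesBefore_add_le _ _ hv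
  rw [subword, subword, segment, leavesBefore_cons _ _ _ i.2, subtree!_cons _ _ _ i.2,
    List.drop_take,
    List.take_take, List.drop_drop, min_eq_left]
  · rfl
  · rw [numSectors]
    omega

theorem length_subword {t : PTree} {v : List ℕ} (hv : IsInternalAt t v) {w : List A}
    (hw : w.length + 1 = numLeaves t) :
    (subword t v w).length = numSectors (subtree! t v) := by
  have := leavesBefore_add_le _ _ hv
  have := numLeaves_pos (subtree! t v)
  rw [subword, List.length_take, List.length_drop, numSectors]
  omega

theorem trunkWord_join_aux [Ring A] {cs : List PTree} (w : List A)
    (hw : w.length + 1 = (cs.map numLeaves).sum) {f : Fin cs.length → Finset (List ℕ)}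
    (hf : ∀ i, f i ∈ cutsFinset cs[i])
    (ih : ∀ i : Fin cs.length, (trunkWord cs[i] (f i) (segment cs w i)).length + 1 =
      numLeaves (trunkTree cs[i] (f i))) :
    let T := List.ofFn fun i => trunkTree cs[i] (f i)
    rootLetters T (trunkWord (node cs) (join f) w) = rootLetters cs w ∧
    (∀ i : Fin cs.length, segment T (trunkWord (node cs) (join f) w) ⟨i.1, by simp [T]⟩ =
      trunkWord cs[i] (f i) (segment cs w i)) ∧
    (trunkWord (node cs) (join f) w).length + 1 = (T.map numLeaves).sum := by
  intro T
  have e : ∀ i : Fin cs.length, pick (fun k => ¬ RemovedIdx (node cs) (join f)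
      (leafOffset cs i + k)) (segment cs w i) = trunkWord cs[i] (f i) (segment cs w i) := by
    intro i
    rw [trunkWord_eq]
    refine pick_congr fun k hk => ?_
    rw [length_segment cs w hw] at hk
    rw [removedIdx_join_add cs hf]
    omega
  have := pick_decomp (p := fun k => ¬ RemovedIdx (node cs) (join f) k) cs T w
    (by simp [T]) hw ?_ ?_
  · simp only [e] at this
    rwa [trunkWord_eq]
  · intro k hk h hr
    obtain ⟨i, h1, h2⟩ := (removedIdx_join cs f k).1 hr
    exact h i i.2 ⟨h1, h2.lt (hf i)⟩
  · intro i
    rw [e, ih]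
    simp [T]

theorem length_segment_add_one {cs : List PTree} (w : List A)
    (hw : w.length + 1 = (cs.map numLeaves).sum) (i : Fin cs.length) :
    (segment cs w i).length + 1 = numLeaves cs[i] := by
  have := numLeaves_pos cs[i]
  rw [length_segment cs w hw]
  omega

theorem length_trunkWord [Ring A] (t : PTree) {c : Finset (List ℕ)} (hc : c ∈ cutsFinset t)
    (w : List A)
    (hw : w.length + 1 = numLeaves t) :
    (trunkWord t c w).length + 1 = numLeaves (trunkTree t c) := by
  induction t using induct generalizing c w with
  | h cs ih =>
    by_cases hcs : cs = []
    · subst hcs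
      rw [cutsFinset_leaf, Finset.mem_singleton] at hc
      rw [hc, trunkTree_empty, trunkWord_empty, hw]
    · rcases cut_cases hc with rfl | ⟨f, hf, rfl⟩
      · rw [trunkTree_singleton_nil, trunkWord_singleton_nil _ _ hw, numLeaves_leaf]
        rfl
      · rw [numLeaves_node' hcs] at hw
        rw [trunkTree_join, numLeaves_node' (by simpa using hcs)]
        exact (trunkWord_join_aux w hw hf fun i => ih _ (List.getElem_mem _) (hf i) _
          (length_segment_add_one w hw i)).2.2

theorem phiPi_trunk [Ring A] (φ : A → ℂ) (t : PTree) {c : Finset (List ℕ)} (hc : c ∈ cutsFinset t)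
    (w : List A) (hw : w.length + 1 = numLeaves t) :
    phiPi φ (trunkTree t c) (trunkWord t c w) *
      ∏ v ∈ c, phiPi φ (subtree! t v) (subword t v w) = phiPi φ t w := by
  induction t using induct generalizing c w with
  | h cs ih =>
    by_cases hcs : cs = []
    · subst hcs
      rw [cutsFinset_leaf, Finset.mem_singleton] at hc
      rw [hc, trunkTree_empty, trunkWord_empty, Finset.prod_empty, mul_one]
    · rcases cut_cases hc with rfl | ⟨f, hf, rfl⟩
      · rw [trunkTree_singleton_nil, trunkWord_singleton_nil _ _ hw, phiPi_leaf,
          Finset.prod_singleton, subtree!_nil, subword_nil hw, one_mul]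
      · rw [numLeaves_node' hcs] at hw
        obtain ⟨h1, h2, h3⟩ := trunkWord_join_aux w hw hf fun i => length_trunkWord _ (hf i) _
          (length_segment_add_one w hw i)
        rw [trunkTree_join, phiPi_node φ (by simpa using hcs) _ h3, h1, phiPi_node φ hcs w hw,
          mul_assoc, prod_join]
        congr 1
        rw [← Fintype.prod_equiv (finCongr (by simp)) (fun i : Fin cs.length =>
          phiPi φ (trunkTree cs[i] (f i)) (trunkWord cs[i] (f i) (segment cs w i))) _ ?_,
          ← Finset.prod_mul_distrib]
        · refine Finset.prod_congr rfl fun i _ => ?_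
          rw [← ih cs[i] (List.getElem_mem i.2) (hf i) (segment cs w i)
            (length_segment_add_one w hw i)]
          congr 1
          refine Finset.prod_congr rfl fun q hq => ?_
          rw [subtree!_cons _ _ _ i.2, subword_cons i ((mem_cutsFinset.1 (hf i)).1 q hq)]
          rfl
        · intro i
          rw [← h2 i]
          simp [finCongr]
          rfl

theorem numInternal_trunk (t : PTree) {c : Finset (List ℕ)} (hc : c ∈ cutsFinset t) :
    numInternal (trunkTree t c) + ∑ v ∈ c, numInternal (subtree! t v) = numInternal t := by
  induction t using induct generalizing c with
  | h cs ih =>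
    by_cases hcs : cs = []
    · subst hcs
      rw [cutsFinset_leaf, Finset.mem_singleton] at hc
      rw [hc, trunkTree_empty, Finset.sum_empty, add_zero]
    · rcases cut_cases hc with rfl | ⟨f, hf, rfl⟩
      · rw [trunkTree_singleton_nil, numInternal_leaf, Finset.sum_singleton, subtree!_nil, zero_add]
      · rw [trunkTree_join, numInternal_node' (by simpa using hcs), numInternal_node hcs, sum_join,
          List.map_ofFn, List.sum_ofFn, add_assoc, ← Finset.sum_add_distrib]
        congr 1
        refine Finset.sum_congr rfl fun i _ => ?_
        rw [← ih cs[i] (List.getElem_mem i.2) (hf i)]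
        simp only [subtree!_cons _ _ _ i.2]
        rfl

theorem isSchroder_node_iff {cs : List PTree} (hcs : cs ≠ []) :
    IsSchroder (node cs) ↔ 2 ≤ cs.length ∧ ∀ c ∈ cs, IsSchroder c := by
  constructor
  · intro h
    cases h with
    | leaf => exact absurd rfl hcs
    | node _ h1 h2 => exact ⟨h1, h2⟩
  · exact fun h => .node _ h.1 h.2

theorem IsSchroder.trunk {t : PTree} (ht : IsSchroder t) {c : Finset (List ℕ)}
    (hc : c ∈ cutsFinset t) : IsSchroder (trunkTree t c) := by
  induction t using induct generalizing c with
  | h cs ih =>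
    by_cases hcs : cs = []
    · subst hcs
      rw [cutsFinset_leaf, Finset.mem_singleton] at hc
      rwa [hc, trunkTree_empty]
    · rcases cut_cases hc with rfl | ⟨f, hf, rfl⟩
      · rw [trunkTree_singleton_nil]
        exact IsSchroder.leaf
      · rw [isSchroder_node_iff hcs] at ht
        rw [trunkTree_join, isSchroder_node_iff (by simpa using hcs)]
        refine ⟨by simpa using ht.1, fun c hc => ?_⟩
        obtain ⟨i, rfl⟩ := List.mem_ofFn.1 hc
        exact ih _ (List.getElem_mem i.2) (ht.2 _ (List.getElem_mem i.2)) (hf i)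

theorem IsSchroder.subtree {t : PTree} (ht : IsSchroder t) {v : List ℕ}
    (hv : IsInternalAt t v) : IsSchroder (subtree! t v) ∧ subtree! t v ≠ PTree.leaf := by
  induction t using induct generalizing v with
  | h cs ih =>
    cases v with
    | nil =>
      rw [subtree!_nil]
      exact ⟨ht, by simpa [isInternalAt_nil] using hv⟩
    | cons i q =>
      obtain ⟨hi, hq⟩ := (isInternalAt_cons _ _ _).1 hv
      rw [subtree!_cons _ _ _ hi]
      exact ih _ (List.getElem_mem hi) (((isSchroder_node_iff
        (List.ne_nil_of_length_pos (by omega))).1 ht).2 _ (List.getElem_mem hi)) hq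

theorem GoodTree.length_add_one {d : PTree × List A} (hd : GoodTree d) :
    d.2.length + 1 = numLeaves d.1 := by
  have := numLeaves_pos d.1
  have := hd.2.2
  rw [numSectors] at this
  omega

theorem GoodTree.trunk [Ring A] {d : PTree × List A} (hd : GoodTree d) {c : Finset (List ℕ)}
    (hc : c ∈ cutsFinset d.1) : GoodForest (trunkPart d c) := by
  rw [PTree.trunkPart]
  split_ifs with h
  · simp [GoodForest]
  · intro e he
    rw [List.mem_singleton] at he
    subst he
    refine ⟨hd.1.trunk hc, h, ?_⟩
    have := length_trunkWord _ hc _ hd.length_add_one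
    simp only [numSectors]
    omega

theorem prunePart_perm (d : PTree × List A) (c : Finset (List ℕ)) :
    (prunePart d c).Perm (c.toList.map fun v => (subtree! d.1 v, subword d.1 v d.2)) :=
  (sortCut_perm d.1 c).map _

theorem GoodTree.prune {d : PTree × List A} (hd : GoodTree d) {c : Finset (List ℕ)}
    (hc : c ∈ cutsFinset d.1) : GoodForest (prunePart d c) := by
  intro e he
  rw [(prunePart_perm d c).mem_iff, List.mem_map] at he
  obtain ⟨v, hv, rfl⟩ := he
  have hv := (mem_cutsFinset.1 hc).1 v (by simpa using hv)
  exact ⟨(hd.1.subtree hv).1, (hd.1.subtree hv).2, length_subword hv hd.length_add_one⟩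

/-- Number of internal vertices of a decorated forest. -/
noncomputable def forestInternal {A : Type*} (F : DForest A) : ℕ :=
  (F.map fun d => numInternal d.1).sum

theorem forestInternal_append (F G : DForest A) :
    forestInternal (F ++ G) = forestInternal F + forestInternal G := by
  simp [forestInternal]

theorem prod_prunePart {M : Type*} [CommMonoid M] (d : PTree × List A) (c : Finset (List ℕ))
    (q : PTree × List A → M) : ((prunePart d c).map q).prod =
      ∏ v ∈ c, q (subtree! d.1 v, subword d.1 v d.2) := by
  rw [((prunePart_perm d c).map q).prod_eq, List.map_map, ← Finset.prod_map_toList]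
  rfl

theorem forestInternal_trunkPart_add [Ring A] {d : PTree × List A} {c : Finset (List ℕ)}
    (hc : c ∈ cutsFinset d.1) :
    forestInternal (trunkPart d c) + forestInternal (prunePart d c) = numInternal d.1 := by
  rw [← numInternal_trunk _ hc]
  congr 1
  · rw [trunkPart]
    split_ifs with h
    · simp [h, numInternal_leaf, forestInternal]
    · simp [forestInternal]
  · exact prod_prunePart (M := Multiplicative ℕ) d c fun e => Multiplicative.ofAdd (numInternal e.1)

theorem GoodForest.append {F G : DForest A} (hF : GoodForest F) (hG : GoodForest G) :
    GoodForest (F ++ G) := fun d hd => (List.mem_append.1 hd).elim (hF d) (hG d)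

theorem goodForest_cons {d : PTree × List A} {F : DForest A} :
    GoodForest (d :: F) ↔ GoodTree d ∧ GoodForest F := by
  simp [GoodForest]

theorem mem_forestSplits [Ring A] {F : DForest A} (hF : GoodForest F) {pr : DForest A × DForest A}
    (h : pr ∈ forestSplits F) : GoodForest pr.1 ∧ GoodForest pr.2 ∧
      forestInternal pr.1 + forestInternal pr.2 = forestInternal F := by
  induction F generalizing pr with
  | nil =>
    rw [forestSplits, List.mem_singleton] at h
    subst h
    simp [GoodForest, forestInternal]
  | cons d F ih =>
    rw [goodForest_cons] at hF
    simp only [forestSplits, List.mem_flatMap, List.mem_map, Finset.mem_toList] at h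
    obtain ⟨c, hc, pr, hpr, rfl⟩ := h
    obtain ⟨h1, h2, h3⟩ := ih hF.2 hpr
    refine ⟨(hF.1.trunk hc).append h1, (hF.1.prune hc).append h2, ?_⟩
    have := forestInternal_trunkPart_add hc
    simp only [forestInternal_append]
    simp only [forestInternal, List.map_cons, List.sum_cons] at *
    omega

theorem GoodTree.numInternal_pos {d : PTree × List A} (hd : GoodTree d) : 0 < numInternal d.1 :=
  Nat.pos_of_ne_zero fun h => hd.2.1 (numInternal_eq_zero.1 h)

theorem GoodForest.eq_nil {F : DForest A} (hF : GoodForest F) (h : forestInternal F = 0) :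
    F = [] := by
  cases F with
  | nil => rfl
  | cons d F =>
    have := (goodForest_cons.1 hF).1.numInternal_pos
    simp [forestInternal] at h
    omega

end Trunk

end PTree

section StrictMaps

/-- Maps to `Fin n` that are strictly increasing along a relation. -/
abbrev StrictMaps {V : Type*} (R : V → V → Prop) (n : ℕ) : Type _ :=
  {f : V → Fin n // ∀ v w, R v w → f v < f w}

/-- Surjective maps to `Fin n` that are strictly increasing along a relation. -/
abbrev StrictSurjections {V : Type*} (R : V → V → Prop) (n : ℕ) : Type _ :=
  {f : V → Fin n // Function.Surjective f ∧ ∀ v w, R v w → f v < f w}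

variable {V : Type*} [Fintype V] (R : V → V → Prop)

/-- A strictly increasing map is a strictly increasing surjection onto its range. -/
noncomputable def strictMapsEquiv (n : ℕ) :
    StrictMaps R n ≃ Σ S : Finset (Fin n), StrictSurjections R S.card := by
  classical
  refine Equiv.ofBijective (fun f => ⟨Finset.univ.image f.1,
    fun v => ((Finset.univ.image f.1).orderIsoOfFin rfl).symm ⟨f.1 v, by simp⟩, ?_, ?_⟩) ⟨?_, ?_⟩
  · intro k
    obtain ⟨v, -, hv⟩ := Finset.mem_image.1 ((Finset.univ.image f.1).orderIsoOfFin rfl k).2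
    refine ⟨v, ?_⟩
    rw [OrderIso.symm_apply_eq]
    exact Subtype.ext hv
  · intro v w h
    simpa using f.2 v w h
  · intro f g h
    simp only [Sigma.mk.injEq] at h
    obtain ⟨h1, h2⟩ := h
    have key : ∀ (S T : Finset (Fin n)) (hS : ∀ v, f.1 v ∈ S) (hT : ∀ v, g.1 v ∈ T)
        (p1 : _) (p2 : _), S = T →
        HEq (⟨fun v => (S.orderIsoOfFin rfl).symm ⟨f.1 v, hS v⟩, p1⟩ : StrictSurjections R S.card)
          (⟨fun v => (T.orderIsoOfFin rfl).symm ⟨g.1 v, hT v⟩, p2⟩ : StrictSurjections R T.card) →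
        f = g := by
      rintro S T hS hT p1 p2 rfl h
      refine Subtype.ext (funext fun v => ?_)
      have := congrFun (congrArg Subtype.val (eq_of_heq h)) v
      simpa using this
    exact key _ _ _ _ _ _ h1 h2
  · rintro ⟨S, g, hg1, hg2⟩
    have hS : Finset.univ.image (fun v => (S.orderIsoOfFin rfl (g v) : Fin n)) = S := by
      ext x
      simp only [Finset.mem_image, Finset.mem_univ, true_and]
      constructor
      · rintro ⟨v, rfl⟩
        exact Subtype.mem _
      · intro hx
        obtain ⟨v, hv⟩ := hg1 ((S.orderIsoOfFin rfl).symm ⟨x, hx⟩)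
        exact ⟨v, by rw [hv]; simp⟩
    refine ⟨⟨fun v => S.orderIsoOfFin rfl (g v), fun v w h => by
      simpa using hg2 v w h⟩, ?_⟩
    have key : ∀ (T : Finset (Fin n)) (hT : ∀ v, (S.orderIsoOfFin rfl (g v) : Fin n) ∈ T)
        (p1 : _), T = S →
        (⟨T, ⟨fun v => (T.orderIsoOfFin rfl).symm ⟨S.orderIsoOfFin rfl (g v), hT v⟩, p1⟩⟩ :
          Σ S : Finset (Fin n), StrictSurjections R S.card) = ⟨S, g, hg1, hg2⟩ := by
      rintro T hT p1 rfl
      simp only [Sigma.mk.injEq, heq_eq_eq, true_and]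
      exact Subtype.ext (funext fun v => OrderIso.symm_apply_apply _ _)
    exact key _ _ _ hS

theorem card_strictMaps (n : ℕ) : Nat.card (StrictMaps R n) =
    ∑ k ∈ Finset.range (Fintype.card V + 1), n.choose k * Nat.card (StrictSurjections R k) := by
  have h0 : ∀ k, Fintype.card V < k → Nat.card (StrictSurjections R k) = 0 := by
    intro k hk
    rw [Nat.card_eq_zero]
    refine Or.inl ⟨fun f => ?_⟩
    have := Fintype.card_le_of_surjective _ f.2.1
    simp at this
    omega
  rw [Nat.card_congr (strictMapsEquiv R n), Nat.card_sigma, ← Finset.powerset_univ,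
    Finset.sum_powerset_apply_card fun k => Nat.card (StrictSurjections R k)]
  simp only [smul_eq_mul, Finset.card_univ, Fintype.card_fin]
  trans ∑ k ∈ Finset.range (n + 1 + Fintype.card V), n.choose k * Nat.card (StrictSurjections R k)
  · refine Finset.sum_subset (Finset.range_mono (by omega)) fun k _ hk => ?_
    simp only [Finset.mem_range, not_lt] at hk
    rw [Nat.choose_eq_zero_of_lt (by omega), zero_mul]
  · refine (Finset.sum_subset (Finset.range_mono (by omega)) fun k _ hk => ?_).symm
    simp only [Finset.mem_range, not_lt] at hk
    rw [h0 k (by omega), mul_zero]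

end StrictMaps

namespace PTree

open Polynomial

section OrderPolynomial

/-- Strict ancestry between internal vertices. -/
def Above (t : PTree) (v w : {p : List ℕ // IsInternalAt t p}) : Prop := v.1 <+: w.1 ∧ v ≠ w

/-- Number of strictly order-preserving maps from the internal vertices of `t` to `Fin n`. -/
noncomputable def numStrict (t : PTree) (n : ℕ) : ℕ := Nat.card (StrictMaps (Above t) n)

theorem omegaSkK_eq (t : PTree) (k : ℕ) :
    omegaSkK t k = Nat.card (StrictSurjections (Above t) k) := by
  simp only [omegaSkK, StrictSurjections, Above, and_imp]

theorem numStrict_eq_sum (t : PTree) (n : ℕ) : numStrict t n =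
    ∑ k ∈ Finset.range (numInternal t + 1), n.choose k * omegaSkK t k := by
  have : Fintype {p // IsInternalAt t p} := (finite_internal t).fintype
  have e : numInternal t = Fintype.card {p // IsInternalAt t p} := Nat.card_eq_fintype_card
  simp only [e, omegaSkK_eq]
  exact card_strictMaps (Above t) n

theorem numStrict_leaf (n : ℕ) : numStrict leaf n = 1 := by
  have : IsEmpty {p : List ℕ // IsInternalAt leaf p} := ⟨fun p => not_isInternalAt_leaf _ p.2⟩
  rw [numStrict, Nat.card_eq_one_iff_unique]
  refine ⟨⟨fun f g => Subtype.ext (Subsingleton.elim _ _)⟩, ⟨⟨fun v => isEmptyElim v, ?_⟩⟩⟩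
  exact fun v => isEmptyElim v

theorem numStrict_node_zero {cs : List PTree} (hcs : cs ≠ []) : numStrict (node cs) 0 = 0 := by
  rw [numStrict, Nat.card_eq_zero]
  exact Or.inl ⟨fun f => (f.1 ⟨[], (isInternalAt_nil cs).2 hcs⟩).elim0⟩

/-- The root of a nontrivial tree as an internal vertex. -/
abbrev rootVertex {cs : List PTree} (hcs : cs ≠ []) : {p // IsInternalAt (node cs) p} :=
  ⟨[], (isInternalAt_nil cs).2 hcs⟩

/-- An internal vertex of a subtree of the root. -/
abbrev childVertex {cs : List PTree} (i : Fin cs.length) (q : {q // IsInternalAt cs[i] q}) :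
    {p // IsInternalAt (node cs) p} :=
  ⟨i.1 :: q.1, (isInternalAt_cons cs i q.1).2 ⟨i.2, q.2⟩⟩

theorem rootVertex_lt {cs : List PTree} (hcs : cs ≠ []) {n : ℕ} (f : StrictMaps (Above (node cs)) n)
    {v : {p // IsInternalAt (node cs) p}} (hv : v ≠ rootVertex hcs) :
    f.1 (rootVertex hcs) < f.1 v :=
  f.2 _ _ ⟨(List.prefix_append [] _), hv.symm⟩

/-- Strict maps avoiding the least value at the root. -/
def strictMapsRootNeEquiv {cs : List PTree} (hcs : cs ≠ []) (n : ℕ) :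
    {f : StrictMaps (Above (node cs)) (n + 1) // ¬ f.1 (rootVertex hcs) = 0} ≃
      StrictMaps (Above (node cs)) n where
  toFun f := ⟨fun v => (f.1.1 v).pred (by
    by_cases hv : v = rootVertex hcs
    · rw [hv]
      exact f.2
    · exact (Fin.zero_le _).trans_lt (rootVertex_lt hcs f.1 hv) |>.ne'), fun v w h => by
      simpa using f.1.2 v w h⟩
  invFun g := ⟨⟨fun v => (g.1 v).succ, fun v w h => by simpa using g.2 v w h⟩, Fin.succ_ne_zero _⟩
  left_inv f := by ext; simp
  right_inv g := by ext; simp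

/-- Strict maps taking the least value at the root. -/
def strictMapsRootEqEquiv {cs : List PTree} (hcs : cs ≠ []) (n : ℕ) :
    {f : StrictMaps (Above (node cs)) (n + 1) // f.1 (rootVertex hcs) = 0} ≃
      ∀ i : Fin cs.length, StrictMaps (Above cs[i]) n where
  toFun f i := ⟨fun q => (f.1.1 (childVertex i q)).pred
      ((Fin.zero_le _).trans_lt (rootVertex_lt hcs f.1 (by simp)) |>.ne'), fun v w h => by
      have := f.1.2 (childVertex i v) (childVertex i w)
        ⟨by simpa using h.1, by simpa [Subtype.ext_iff] using h.2⟩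
      simpa using this⟩
  invFun g := ⟨⟨fun v => match v with
      | ⟨[], _⟩ => 0
      | ⟨i :: q, h⟩ => ((g ⟨i, ((isInternalAt_cons cs i q).1 h).1⟩).1
          ⟨q, ((isInternalAt_cons cs i q).1 h).2⟩).succ, by
      rintro ⟨v, hv⟩ ⟨w, hw⟩ ⟨h1, h2⟩
      cases v with
      | nil =>
        cases w with
        | nil => exact absurd rfl h2
        | cons j r => exact Fin.succ_pos _
      | cons i q =>
        cases w with
        | nil => simp at h1
        | cons j r =>
          obtain ⟨rfl, h3⟩ := List.cons_prefix_cons.1 h1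
          refine Fin.succ_lt_succ_iff.2 ((g _).2 _ _ ⟨?_, by simpa [Subtype.ext_iff] using h2⟩)
          exact h3⟩,
    rfl⟩
  left_inv f := by
    ext ⟨v, hv⟩
    cases v with
    | nil => simp [f.2]
    | cons i q => simp
  right_inv g := by
    ext i q
    simp

theorem numStrict_node_succ {cs : List PTree} (hcs : cs ≠ []) (n : ℕ) :
    numStrict (node cs) (n + 1) =
      numStrict (node cs) n + ∏ i : Fin cs.length, numStrict cs[i] n := by
  classical
  have := (finite_internal (node cs)).to_subtype
  have h := fun i : Fin cs.length => (finite_internal cs[i]).to_subtype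
  have : Finite {p // IsInternalAt (node cs) p} := this
  rw [numStrict, Nat.card_congr (Equiv.sumCompl fun f : StrictMaps (Above (node cs)) (n + 1) =>
    f.1 (rootVertex hcs) = 0).symm, Nat.card_sum, Nat.card_congr (strictMapsRootEqEquiv hcs n),
    Nat.card_congr (strictMapsRootNeEquiv hcs n), Nat.card_pi, add_comm]
  rfl

theorem sum_cuts_numStrict (t : PTree) (m n : ℕ) :
    ∑ c ∈ cutsFinset t, numStrict (trunkTree t c) m * ∏ v ∈ c, numStrict (subtree! t v) n =
      numStrict t (m + n) := by
  induction t using induct generalizing m with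
  | h cs ih =>
    by_cases hcs : cs = []
    · subst hcs
      simp [cutsFinset_leaf, trunkTree_empty, numStrict_leaf]
    · have hT : ∀ f : Fin cs.length → Finset (List ℕ),
          (List.ofFn fun i => trunkTree cs[i] (f i)) ≠ [] := fun f => by simpa using hcs
      have h1 : ∀ f : Fin cs.length → Finset (List ℕ),
          ∏ v ∈ join f, numStrict (subtree! (node cs) v) n =
            ∏ i, ∏ q ∈ f i, numStrict (subtree! cs[i] q) n := by
        intro f
        rw [prod_join]
        refine Finset.prod_congr rfl fun i _ => Finset.prod_congr rfl fun q _ => ?_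
        rw [subtree!_cons _ _ _ i.2]
        rfl
      rw [sum_cutsFinset_node hcs, trunkTree_singleton_nil, numStrict_leaf, one_mul,
        Finset.prod_singleton, subtree!_nil]
      simp only [trunkTree_join, h1]
      induction m with
      | zero => simp only [numStrict_node_zero (hT _), zero_mul, Finset.sum_const_zero, add_zero,
          zero_add]
      | succ m ihm =>
        rw [Nat.add_right_comm, numStrict_node_succ hcs, ← ihm, add_assoc]
        congr 1
        simp only [numStrict_node_succ (hT _), add_mul, Finset.sum_add_distrib]
        congr 1
        have h2 : ∀ i : Fin cs.length, numStrict cs[i] (m + n) = _ :=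
          fun i => (ih _ (List.getElem_mem i.2) m).symm
        simp only [h2]
        rw [Finset.prod_univ_sum]
        refine Finset.sum_congr rfl fun f _ => ?_
        rw [Finset.prod_mul_distrib, prod_fin_getElem _ fun c => numStrict c m, List.map_ofFn,
          List.prod_ofFn]
        rfl

/-- The strict order polynomial of the poset of internal vertices of a tree. -/
noncomputable def orderPoly (t : PTree) : ℂ[X] :=
  ∑ k ∈ Finset.range (numInternal t + 1),
    C ((omegaSkK t k : ℂ) / (k.factorial : ℂ)) * descPochhammer ℂ k

theorem eval_orderPoly_natCast (t : PTree) (n : ℕ) :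
    (orderPoly t).eval (n : ℂ) = numStrict t n := by
  rw [numStrict_eq_sum, orderPoly, eval_finsetSum, Nat.cast_sum]
  refine Finset.sum_congr rfl fun k _ => ?_
  rw [eval_mul, eval_C, descPochhammer_eval_eq_descFactorial,
    Nat.descFactorial_eq_factorial_mul_choose]
  have : (k.factorial : ℂ) ≠ 0 := by exact_mod_cast k.factorial_ne_zero
  push_cast
  field_simp

theorem eq_of_eval_natCast {p q : ℂ[X]} (h : ∀ n : ℕ, p.eval (n : ℂ) = q.eval (n : ℂ)) : p = q := by
  refine eq_of_infinite_eval_eq p q (Set.Infinite.mono ?_ (Set.infinite_range_of_injective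
    (Nat.cast_injective (R := ℂ))))
  rintro _ ⟨n, rfl⟩
  exact h n

theorem orderPoly_leaf : orderPoly leaf = 1 := by
  refine eq_of_eval_natCast fun n => ?_
  rw [eval_orderPoly_natCast, numStrict_leaf]
  simp

theorem eval_zero_orderPoly_node {cs : List PTree} (hcs : cs ≠ []) :
    (orderPoly (node cs)).eval 0 = 0 := by
  have := eval_orderPoly_natCast (node cs) 0
  rw [numStrict_node_zero hcs] at this
  simpa using this

theorem orderPoly_node_add_one {cs : List PTree} (hcs : cs ≠ []) (x : ℂ) :
    (orderPoly (node cs)).eval (x + 1) =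
      (orderPoly (node cs)).eval x + ∏ i : Fin cs.length, (orderPoly cs[i]).eval x := by
  have : (orderPoly (node cs)).comp (X + 1) =
      orderPoly (node cs) + ∏ i : Fin cs.length, orderPoly cs[i] := by
    refine eq_of_eval_natCast fun n => ?_
    rw [eval_add, eval_prod, eval_comp, eval_add, eval_X, eval_one]
    simp only [← Nat.cast_succ, eval_orderPoly_natCast]
    rw [Nat.succ_eq_add_one, numStrict_node_succ hcs]
    push_cast
    rfl
  have := congrArg (eval x) this
  simpa only [eval_prod, eval_comp, eval_add, eval_X, eval_one] using this

theorem eval_neg_one_orderPoly (t : PTree) :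
    (orderPoly t).eval (-1) = (-1) ^ numInternal t := by
  induction t using induct with
  | h cs ih =>
    by_cases hcs : cs = []
    · subst hcs
      rw [orderPoly_leaf, numInternal_leaf]
      simp
    · have := orderPoly_node_add_one hcs (-1)
      rw [neg_add_cancel, eval_zero_orderPoly_node hcs] at this
      rw [eq_neg_of_add_eq_zero_left this.symm, numInternal_node hcs, pow_add, pow_one, neg_one_mul,
        ← Finset.prod_pow_eq_pow_sum]
      congr 1
      exact Finset.prod_congr rfl fun i _ => ih _ (List.getElem_mem i.2)

open Classical in
theorem eval_one_orderPoly_node {cs : List PTree} (hcs : cs ≠ []) :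
    (orderPoly (node cs)).eval 1 = if ∀ c ∈ cs, c = leaf then 1 else 0 := by
  have := orderPoly_node_add_one hcs 0
  rw [zero_add, eval_zero_orderPoly_node hcs, zero_add] at this
  rw [this, prod_fin_getElem cs fun c => (orderPoly c).eval 0]
  split_ifs with h
  · refine List.prod_eq_one fun x hx => ?_
    obtain ⟨c, hc, rfl⟩ := List.mem_map.1 hx
    rw [h c hc, orderPoly_leaf, eval_one]
  · push Not at h
    obtain ⟨⟨ds⟩, hc, hds⟩ := h
    exact List.prod_eq_zero (List.mem_map.2 ⟨_, hc, eval_zero_orderPoly_node (by simpa using hds)⟩)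

theorem eval_zero_derivative_orderPoly (t : PTree) :
    (derivative (orderPoly t)).eval 0 = omegaSk t := by
  have h : ∀ k : ℕ, (derivative (descPochhammer ℂ (k + 1))).eval 0 = (-1) ^ k * k.factorial := by
    intro k
    rw [descPochhammer_succ_left, derivative_mul, derivative_X, one_mul, eval_add, eval_mul, eval_X,
      zero_mul, add_zero, eval_comp, eval_sub, eval_X, eval_one, zero_sub]
    induction k with
    | zero => simp
    | succ k ih =>
      rw [descPochhammer_succ_eval, ih, Nat.factorial_succ]
      push_cast
      ring
  rw [orderPoly, derivative_sum, eval_finsetSum, Finset.sum_range_succ', omegaSk,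
    ← Finset.Ico_add_one_right_eq_Icc, Finset.sum_Ico_eq_sum_range]
  simp only [descPochhammer_zero, mul_one, derivative_C, eval_zero, add_zero, Nat.add_sub_cancel]
  refine Finset.sum_congr rfl fun k _ => ?_
  rw [derivative_C_mul, eval_mul, eval_C, h, add_comm 1 k, Nat.factorial_succ]
  have h1 : (k.factorial : ℂ) ≠ 0 := by exact_mod_cast k.factorial_ne_zero
  have h2 : (k + 1 : ℂ) ≠ 0 := by exact_mod_cast k.succ_ne_zero
  push_cast
  field_simp
  ring

theorem sum_cuts_orderPoly (t : PTree) (x y : ℂ) :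
    ∑ c ∈ cutsFinset t, (orderPoly (trunkTree t c)).eval x *
      ∏ v ∈ c, (orderPoly (subtree! t v)).eval y = (orderPoly t).eval (x + y) := by
  have h1 : ∀ n : ℕ, ∑ c ∈ cutsFinset t, orderPoly (trunkTree t c) *
      C (∏ v ∈ c, (orderPoly (subtree! t v)).eval (n : ℂ)) =
        (orderPoly t).comp (X + C (n : ℂ)) := by
    refine fun n => eq_of_eval_natCast fun m => ?_
    rw [eval_finsetSum, eval_comp, eval_add, eval_X, eval_C]
    simp only [eval_mul, eval_C, ← Nat.cast_add, eval_orderPoly_natCast, ← sum_cuts_numStrict t m n]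
    push_cast
    rfl
  have h2 : ∑ c ∈ cutsFinset t, C ((orderPoly (trunkTree t c)).eval x) *
      ∏ v ∈ c, orderPoly (subtree! t v) = (orderPoly t).comp (C x + X) := by
    refine eq_of_eval_natCast fun n => ?_
    have := congrArg (eval x) (h1 n)
    simpa [eval_finsetSum, eval_prod] using this
  have := congrArg (eval y) h2
  simpa [eval_finsetSum, eval_prod] using this

end OrderPolynomial

section ForestPoly

variable {A : Type*} [Ring A] (φ : A → ℂ)

/-- The polynomial interpolating the convolution powers of the moment character on a tree. -/
noncomputable def treePoly (d : PTree × List A) : ℂ[X] := C (phiPi φ d.1 d.2) * orderPoly d.1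

/-- The multiplicative extension of `treePoly` to forests. -/
noncomputable def forestPoly (F : DForest A) : ℂ[X] := (F.map (treePoly φ)).prod

theorem forestPoly_nil : forestPoly φ [] = 1 := rfl

theorem forestPoly_append (F G : DForest A) :
    forestPoly φ (F ++ G) = forestPoly φ F * forestPoly φ G := by
  simp [forestPoly]

theorem forestPoly_singleton (d : PTree × List A) : forestPoly φ [d] = treePoly φ d := by
  simp [forestPoly]

theorem forestPoly_trunkPart (d : PTree × List A) (c : Finset (List ℕ)) :
    forestPoly φ (trunkPart d c) =
      C (phiPi φ (trunkTree d.1 c) (trunkWord d.1 c d.2)) * orderPoly (trunkTree d.1 c) := by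
  rw [trunkPart]
  split_ifs with h
  · rw [h, phiPi_leaf, orderPoly_leaf, map_one, one_mul, forestPoly_nil]
  · rw [forestPoly_singleton, treePoly]

theorem forestPoly_prunePart (d : PTree × List A) (c : Finset (List ℕ)) :
    forestPoly φ (prunePart d c) =
      ∏ v ∈ c, treePoly φ (subtree! d.1 v, subword d.1 v d.2) :=
  prod_prunePart d c _

theorem sum_cuts_eval {d : PTree × List A} (hd : GoodTree d) (x y : ℂ) :
    ∑ c ∈ cutsFinset d.1, (forestPoly φ (trunkPart d c)).eval x *
      (forestPoly φ (prunePart d c)).eval y = (treePoly φ d).eval (x + y) := by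
  rw [treePoly, eval_mul, eval_C, ← sum_cuts_orderPoly, Finset.mul_sum]
  refine Finset.sum_congr rfl fun c hc => ?_
  rw [← phiPi_trunk φ d.1 hc d.2 hd.length_add_one, forestPoly_trunkPart, forestPoly_prunePart,
    eval_prod]
  simp only [treePoly, eval_mul, eval_C, Finset.prod_mul_distrib]
  ring

theorem _root_.List.sum_map_flatMap {ι κ M : Type*} [AddMonoid M] (l : List ι) (f : ι → List κ)
    (g : κ → M) : ((l.flatMap f).map g).sum = (l.map fun a => ((f a).map g).sum).sum := by
  induction l with
  | nil => simp
  | cons a l ih => simp [ih]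

theorem convD_cons {f g : DForest A → ℂ} (hf : ∀ F G, f (F ++ G) = f F * f G)
    (hg : ∀ F G, g (F ++ G) = g F * g G) (d : PTree × List A) (F : DForest A) :
    convD f g (d :: F) =
      (∑ c ∈ cutsFinset d.1, f (trunkPart d c) * g (prunePart d c)) * convD f g F := by
  have h : ∀ c, (fun pr : DForest A × DForest A => f (trunkPart d c ++ pr.1) *
      g (prunePart d c ++ pr.2)) = fun pr => (f (trunkPart d c) * g (prunePart d c)) *
        (f pr.1 * g pr.2) := by
    intro c
    funext pr
    rw [hf, hg]
    ring
  rw [convD, forestSplits, List.sum_map_flatMap, ← Finset.sum_map_toList,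
    ← List.sum_map_mul_right]
  congr 2
  funext c
  simp only [List.map_map, Function.comp_def]
  rw [h, List.sum_map_mul_left]
  rfl

theorem convD_forestPoly {F : DForest A} (hF : GoodForest F) (x y : ℂ) :
    convD (fun G => (forestPoly φ G).eval x) (fun G => (forestPoly φ G).eval y) F =
      (forestPoly φ F).eval (x + y) := by
  induction F with
  | nil => simp [convD, forestSplits, forestPoly_nil]
  | cons d F ih =>
    rw [goodForest_cons] at hF
    rw [convD_cons, sum_cuts_eval φ hF.1, ih hF.2, ← eval_mul, ← forestPoly_singleton,
      ← forestPoly_append]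
    · rfl
    all_goals
      intro F G
      simp [forestPoly_append]

theorem isCorolla_iff {t : PTree} (ht : IsSchroder t) {cs : List PTree} (hcs : cs ≠ [])
    (h : t = node cs) : IsCorolla t ↔ ∀ c ∈ cs, c = leaf := by
  subst h
  constructor
  · rintro ⟨m, -, h⟩ c hc
    rw [corolla, node.injEq] at h
    rw [h] at hc
    exact List.eq_of_mem_replicate hc
  · intro h
    refine ⟨cs.length, ((isSchroder_node_iff hcs).1 ht).1, ?_⟩
    rw [corolla, ← List.eq_replicate_length.2 h]

theorem phiPi_corolla {t : PTree} (ht : IsCorolla t) (w : List A)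
    (hw : w.length + 1 = numLeaves t) : phiPi φ t w = φ w.prod := by
  obtain ⟨m, hm, rfl⟩ := ht
  have h0 : List.replicate m leaf ≠ [] := by simp; omega
  rw [corolla, numLeaves_node' h0] at hw
  rw [corolla, phiPi_node φ h0 w hw, rootLetters_replicate, Finset.prod_eq_one, mul_one]
  · intro i _
    simp [phiPi_leaf]
  · simp [numLeaves_leaf] at hw
    omega

open Classical in
theorem eval_one_treePoly {d : PTree × List A} (hd : GoodTree d) :
    (treePoly φ d).eval 1 = if IsCorolla d.1 then φ d.2.prod else 0 := by
  obtain ⟨⟨cs⟩, w⟩ := d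
  have hcs : cs ≠ [] := by simpa using hd.2.1
  have hc := isCorolla_iff hd.1 hcs rfl
  rw [treePoly, eval_mul, eval_C, eval_one_orderPoly_node hcs]
  simp only [hc]
  split_ifs with h
  · rw [mul_one]
    exact phiPi_corolla φ (hc.2 h) w hd.length_add_one
  · rw [mul_zero]

theorem charD_eq {F : DForest A} (hF : GoodForest F) :
    charD φ F = (forestPoly φ F).eval 1 := by
  rw [charD, forestPoly, ← coe_evalRingHom, map_list_prod, List.map_map]
  congr 1
  exact List.map_congr_left fun d hd => (eval_one_treePoly φ (hF d hd)).symm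

theorem eval_zero_treePoly {d : PTree × List A} (hd : GoodTree d) :
    (treePoly φ d).eval 0 = 0 := by
  obtain ⟨⟨cs⟩, w⟩ := d
  rw [treePoly, eval_mul, eval_zero_orderPoly_node (by simpa using hd.2.1), mul_zero]

theorem eval_zero_forestPoly {F : DForest A} (hF : GoodForest F) :
    (forestPoly φ F).eval 0 = epsD F := by
  cases F with
  | nil => simp [forestPoly_nil, epsD]
  | cons d F =>
    rw [goodForest_cons] at hF
    simp [forestPoly, epsD, eval_zero_treePoly φ hF.1]

end ForestPoly

section Powers

theorem sum_map_congr {ι M : Type*} [AddMonoid M] {l : List ι} {f g : ι → M}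
    (h : ∀ x ∈ l, f x = g x) : (l.map f).sum = (l.map g).sum := by
  rw [List.map_congr_left h]

variable {A : Type*}

/-- Iterated products `α · (α · (⋯ (α · ε)))` for the product dual to a splitting. -/
noncomputable def splitPow (S : DForest A → List (DForest A × DForest A)) (α : DForest A → ℂ) :
    ℕ → DForest A → ℂ
  | 0 => epsD
  | k + 1 => fun F => ((S F).map fun pr => α pr.1 * splitPow S α k pr.2).sum

/-- Splittings of genuine forests into genuine forests, respecting the degree. -/
def IsSplitting (S : DForest A → List (DForest A × DForest A)) : Prop :=
  ∀ F, GoodForest F → ∀ pr ∈ S F, GoodForest pr.1 ∧ GoodForest pr.2 ∧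
    forestInternal pr.1 + forestInternal pr.2 = forestInternal F

theorem sum_sum_map {ι κ M : Type*} [AddCommMonoid M] (s : Finset κ) (l : List ι)
    (f : κ → ι → M) : ∑ k ∈ s, (l.map (f k)).sum = (l.map fun x => ∑ k ∈ s, f k x).sum := by
  induction l with
  | nil => simp
  | cons a l ih => simp [Finset.sum_add_distrib, ih]

theorem splitPow_eq_zero {S : DForest A → List (DForest A × DForest A)} (hS : IsSplitting S)
    {α : DForest A → ℂ} (hα : α [] = 0) {k : ℕ} {F : DForest A} (hF : GoodForest F)
    (hk : forestInternal F < k) : splitPow S α k F = 0 := by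
  induction k generalizing F with
  | zero => omega
  | succ k ih =>
    rw [splitPow]
    refine List.sum_eq_zero fun x hx => ?_
    obtain ⟨pr, hpr, rfl⟩ := List.mem_map.1 hx
    obtain ⟨h1, h2, h3⟩ := hS F hF pr hpr
    by_cases h : forestInternal pr.1 = 0
    · rw [h1.eq_nil h, hα, zero_mul]
    · rw [ih h2 (by omega), mul_zero]

theorem finsum_splitPow {S : DForest A → List (DForest A × DForest A)} (hS : IsSplitting S)
    {α : DForest A → ℂ} (hα : α [] = 0) (u : ℕ → ℂ) {N : ℕ} {F : DForest A} (hF : GoodForest F)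
    (hN : forestInternal F < N) :
    ∑ᶠ k, u k * splitPow S α k F = ∑ k ∈ Finset.range N, u k * splitPow S α k F := by
  refine finsum_eq_sum_of_support_subset _ fun k hk => ?_
  rw [Finset.coe_range, Set.mem_Iio]
  by_contra h
  exact hk (mul_eq_zero_of_right _ (splitPow_eq_zero hS hα hF (by omega)))

/-- The fixed point equation `Φ = ε + α · Φ` of the half-shuffle exponential. -/
theorem eq_sum_of_eq_finsum {S : DForest A → List (DForest A × DForest A)} (hS : IsSplitting S)
    {α Φ : DForest A → ℂ} (hα : α [] = 0)
    (h : ∀ F, GoodForest F → Φ F = ∑ᶠ k, splitPow S α k F) {F : DForest A} (hF : GoodForest F)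
    (hne : F ≠ []) : Φ F = ((S F).map fun pr => α pr.1 * Φ pr.2).sum := by
  have key : ∀ G, GoodForest G → ∀ N, forestInternal G < N →
      Φ G = ∑ k ∈ Finset.range N, splitPow S α k G := by
    intro G hG N hN
    have := finsum_splitPow hS hα (fun _ => 1) hG hN
    simp only [one_mul] at this
    rw [h G hG, this]
  rw [key F hF (forestInternal F + 1 + 1) (by omega), Finset.sum_range_succ', splitPow, epsD,
    if_neg hne, add_zero]
  simp only [splitPow]
  rw [sum_sum_map]
  refine sum_map_congr fun pr hpr => ?_
  obtain ⟨-, h2, h3⟩ := hS F hF pr hpr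
  rw [key pr.2 h2 (forestInternal F + 1) (by omega), Finset.mul_sum]

end Powers

theorem goodForest_singleton {A : Type*} {d : PTree × List A} (hd : GoodTree d) :
    GoodForest [d] := by
  simpa [GoodForest] using hd

open Classical in
theorem mem_cutsPrecFinset {t : PTree} {c : Finset (List ℕ)} :
    c ∈ cutsPrecFinset t ↔ c ∈ cutsFinset t ∧ ∀ v ∈ c, ¬ OnLeftBranch v := by
  rw [cutsPrecFinset, Finset.mem_filter]

open Classical in
theorem mem_cutsSuccFinset {t : PTree} {c : Finset (List ℕ)} :
    c ∈ cutsSuccFinset t ↔ c ∈ cutsFinset t ∧ ∃ v ∈ c, OnLeftBranch v := by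
  rw [cutsSuccFinset, Finset.mem_filter]

theorem prunePart_empty {A : Type*} (d : PTree × List A) : prunePart d ∅ = [] := by
  simpa using (prunePart_perm d ∅)

theorem prunePart_singleton {A : Type*} (d : PTree × List A) (v : List ℕ) :
    prunePart d {v} = [(subtree! d.1 v, subword d.1 v d.2)] := by
  simpa using (prunePart_perm d {v})

theorem prunePart_singleton_nil {A : Type*} {d : PTree × List A} (hd : GoodTree d) :
    prunePart d {[]} = [d] := by
  rw [prunePart_singleton, subtree!_nil, subword_nil hd.length_add_one]

section Splittings

variable {A : Type*} [Ring A]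

theorem isSplitting_forestSplits : IsSplitting (forestSplits (A := A)) :=
  fun _ hF _ h => mem_forestSplits hF h

theorem forestSplitsPrec_subset (F : DForest A) : forestSplitsPrec F ⊆ forestSplits F := by
  intro pr h
  cases F with
  | nil => simp [forestSplitsPrec] at h
  | cons d F =>
    rw [forestSplitsPrec, List.mem_flatMap] at h
    obtain ⟨c, hc, h⟩ := h
    rw [forestSplits, List.mem_flatMap]
    exact ⟨c, Finset.mem_toList.2 (mem_cutsPrecFinset.1 (Finset.mem_toList.1 hc)).1, h⟩

theorem forestSplitsSucc_subset (F : DForest A) : forestSplitsSucc F ⊆ forestSplits F := by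
  intro pr h
  cases F with
  | nil => simp [forestSplitsSucc] at h
  | cons d F =>
    rw [forestSplitsSucc, List.mem_flatMap] at h
    obtain ⟨c, hc, h⟩ := h
    rw [forestSplits, List.mem_flatMap]
    exact ⟨c, Finset.mem_toList.2 (mem_cutsSuccFinset.1 (Finset.mem_toList.1 hc)).1, h⟩

theorem isSplitting_forestSplitsPrec : IsSplitting (forestSplitsPrec (A := A)) :=
  fun F hF _ h => mem_forestSplits hF (forestSplitsPrec_subset F h)

theorem isSplitting_forestSplitsSucc :
    IsSplitting fun F : DForest A => (forestSplitsSucc F).map Prod.swap := by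
  intro F hF pr h
  obtain ⟨pr', h', rfl⟩ := List.mem_map.1 h
  obtain ⟨h1, h2, h3⟩ := mem_forestSplits hF (forestSplitsSucc_subset F h')
  exact ⟨h2, h1, by rw [← h3, add_comm]; rfl⟩

theorem convPowD_eq (α : DForest A → ℂ) (k : ℕ) : convPowD α k = splitPow forestSplits α k := by
  induction k with
  | zero => rfl
  | succ k ih => rw [convPowD, ih]; rfl

theorem precPowD_eq (α : DForest A → ℂ) (k : ℕ) :
    precPowD α k = splitPow forestSplitsPrec α k := by
  induction k with
  | zero => rfl
  | succ k ih => rw [precPowD, ih]; rfl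

theorem succPowD_eq (α : DForest A → ℂ) (k : ℕ) :
    succPowD α k = splitPow (fun F => (forestSplitsSucc F).map Prod.swap) α k := by
  induction k with
  | zero => rfl
  | succ k ih =>
    rw [succPowD, ih]
    funext F
    simp [splitPow, succD, Function.comp_def, mul_comm]

theorem eq_sum_cutsPrec {κ Φ : DForest A → ℂ} (hκ : κ [] = 0)
    (h : ∀ F, GoodForest F → Φ F = ePrecD κ F) {d : PTree × List A} (hd : GoodTree d) :
    Φ [d] = ∑ c ∈ cutsPrecFinset d.1, κ (trunkPart d c) * Φ (prunePart d c) := by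
  rw [eq_sum_of_eq_finsum (Φ := Φ) isSplitting_forestSplitsPrec hκ _ (goodForest_singleton hd)
    (by simp)]
  · rw [forestSplitsPrec, List.sum_map_flatMap, ← Finset.sum_map_toList]
    simp [forestSplits]
  · intro F hF
    simp_rw [h F hF, ePrecD, precPowD_eq]

theorem eq_sum_cutsSucc {β Φ : DForest A → ℂ} (hβ : β [] = 0)
    (h : ∀ F, GoodForest F → Φ F = eSuccD β F) {d : PTree × List A} (hd : GoodTree d) :
    Φ [d] = ∑ c ∈ cutsSuccFinset d.1, Φ (trunkPart d c) * β (prunePart d c) := by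
  rw [eq_sum_of_eq_finsum (Φ := Φ) isSplitting_forestSplitsSucc hβ _ (goodForest_singleton hd)
    (by simp)]
  · rw [List.map_map, forestSplitsSucc, List.sum_map_flatMap, ← Finset.sum_map_toList]
    simp [forestSplits, mul_comm]
  · intro F hF
    simp_rw [h F hF, eSuccD, succPowD_eq]

theorem trunkPart_empty {d : PTree × List A} (hd : GoodTree d) : trunkPart d ∅ = [d] := by
  rw [trunkPart, trunkTree_empty, trunkWord_empty, if_neg hd.2.1]

theorem trunkPart_singleton_nil (d : PTree × List A) : trunkPart d {[]} = [] := by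
  rw [trunkPart, trunkTree_singleton_nil, if_pos rfl]

theorem empty_mem_cutsFinset (t : PTree) : ∅ ∈ cutsFinset t := by
  simp [mem_cutsFinset]

theorem onLeftBranch_nil : OnLeftBranch [] := rfl

theorem numInternal_trunk_lt {t : PTree} {c : Finset (List ℕ)} (hc : c ∈ cutsFinset t)
    (hne : c ≠ ∅) : numInternal (trunkTree t c) < numInternal t := by
  obtain ⟨v, hv⟩ := Finset.nonempty_iff_ne_empty.2 hne
  have hvi := (mem_cutsFinset.1 hc).1 v hv
  have h0 : 0 < numInternal (subtree! t v) := by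
    obtain ⟨cs, hcs, hne⟩ := hvi
    refine Nat.pos_of_ne_zero fun h => hne ?_
    rw [numInternal_eq_zero, subtree!, hcs] at h
    simpa using h
  have := numInternal_trunk t hc
  have := Finset.single_le_sum (f := fun v => numInternal (subtree! t v)) (fun _ _ => Nat.zero_le _)
    hv
  omega

theorem trunkPart_cases {d : PTree × List A} (hd : GoodTree d) {c : Finset (List ℕ)}
    (hc : c ∈ cutsFinset d.1) (hne : c ≠ ∅) : trunkPart d c = [] ∨
      ∃ e : PTree × List A, trunkPart d c = [e] ∧ e.1 = trunkTree d.1 c ∧ GoodTree e ∧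
        numInternal e.1 < numInternal d.1 := by
  have hg := hd.trunk hc
  rw [trunkPart] at hg ⊢
  split_ifs at hg ⊢ with h
  · exact Or.inl rfl
  · exact Or.inr ⟨_, rfl, rfl, hg _ (List.mem_singleton_self _), numInternal_trunk_lt hc hne⟩

end Splittings

section Free

variable {A : Type*} [Ring A] (φ : A → ℂ)

theorem mem_cutsPrecFinset_of_isPST {t : PTree} (ht : IsPST t) {c : Finset (List ℕ)}
    (hc : c ∈ cutsFinset t) : c ∈ cutsPrecFinset t ↔ c ≠ {[]} := by
  obtain ⟨cs, rfl⟩ := ht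
  rw [mem_cutsPrecFinset]
  constructor
  · rintro ⟨-, h⟩ rfl
    exact h [] (by simp) onLeftBranch_nil
  · refine fun h => ⟨hc, fun v hv hl => h ?_⟩
    cases v with
    | nil => exact eq_singleton_nil hc hv
    | cons i v =>
      have hv' := (mem_cutsFinset.1 hc).1 _ hv
      rw [OnLeftBranch, List.length_cons, List.replicate_succ, List.cons.injEq] at hl
      rw [hl.1] at hv'
      obtain ⟨ds, h1, h2⟩ := hv'
      cases v with
      | nil => simp [subtreeAt, h2.symm] at h1
      | cons j v => simp [subtreeAt] at h1

theorem isPST_trunkTree {t : PTree} (ht : IsPST t) {c : Finset (List ℕ)} (hc : c ∈ cutsFinset t)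
    (hne : c ≠ {[]}) : IsPST (trunkTree t c) := by
  obtain ⟨cs, rfl⟩ := ht
  obtain h | ⟨f, hf, rfl⟩ := cut_cases hc
  · exact absurd h hne
  · have h0 := hf ⟨0, by simp⟩
    simp only [Fin.getElem_fin, List.getElem_cons_zero, cutsFinset_leaf, Finset.mem_singleton] at h0
    rw [trunkTree_join]
    refine ⟨List.ofFn fun i : Fin cs.length => trunkTree cs[i] (f i.succ), ?_⟩
    rw [List.ofFn_succ]
    congr 2
    exact (congrArg (trunkTree leaf) h0).trans (trunkTree_empty _)

theorem isPST_of_trunkTree {t : PTree} {c : Finset (List ℕ)} (hc : c ∈ cutsPrecFinset t)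
    (h : IsPST (trunkTree t c)) : IsPST t := by
  rw [mem_cutsPrecFinset] at hc
  obtain ⟨ds, h⟩ := h
  obtain ⟨cs⟩ := t
  obtain rfl | ⟨f, hf, rfl⟩ := cut_cases hc.1
  · rw [trunkTree_singleton_nil] at h
    simp at h
  · rw [trunkTree_join] at h
    cases cs with
    | nil => simp at h
    | cons t0 cs =>
      obtain ⟨cs0⟩ := t0
      rw [node.injEq, List.ofFn_succ, List.cons.injEq] at h
      obtain h' | ⟨f', hf', h'⟩ := cut_cases (hf 0)
      · refine absurd rfl (hc.2 [0] ?_)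
        rw [mem_join]
        exact ⟨0, [], by rw [h']; simp, rfl⟩
      · have h1 := h.1
        rw [h'] at h1
        erw [trunkTree_join] at h1
        cases cs0 with
        | nil => exact ⟨cs, rfl⟩
        | cons => simp [List.ofFn_succ] at h1

open Classical in
theorem eq_of_charD_eq_ePrecD {κ : DForest A → ℂ} (hκ : IsInfCharD κ)
    (h : ∀ F, GoodForest F → charD φ F = ePrecD κ F) {d : PTree × List A} (hd : GoodTree d) :
    κ [d] = if IsPST d.1 then -(treePoly φ d).eval (-1) else 0 := by
  induction hn : numInternal d.1 using Nat.strong_induction_on generalizing d with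
  | _ n ih =>
    subst hn
    have hrec := eq_sum_cutsPrec hκ.1 h hd
    have h0 : charD φ [] = 1 := rfl
    have hempty : ∅ ∈ cutsPrecFinset d.1 := by
      simp [mem_cutsPrecFinset, empty_mem_cutsFinset]
    split_ifs with hp
    · have hcut : cutsPrecFinset d.1 = (cutsFinset d.1).erase {[]} := by
        ext c
        rw [Finset.mem_erase]
        constructor
        · intro hc
          have hc' := (mem_cutsPrecFinset.1 hc).1
          exact ⟨(mem_cutsPrecFinset_of_isPST hp hc').1 hc, hc'⟩
        · exact fun hc => (mem_cutsPrecFinset_of_isPST hp hc.2).2 hc.1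
      have hmem : {[]} ∈ cutsFinset d.1 := by
        obtain ⟨cs, hcs⟩ := hp
        rw [hcs]
        exact singleton_nil_mem_cutsFinset (by simp)
      have hz := sum_cuts_eval φ hd (-1) 1
      rw [neg_add_cancel, eval_zero_treePoly φ hd, ← Finset.add_sum_erase _ _ hmem, ← hcut,
        trunkPart_singleton_nil, prunePart_singleton_nil hd, forestPoly_nil, eval_one, one_mul,
        ← charD_eq φ (goodForest_singleton hd), hrec, ← Finset.sum_add_distrib,
        Finset.sum_eq_single_of_mem _ hempty] at hz
      · rw [trunkPart_empty hd, prunePart_empty, forestPoly_nil, h0, eval_one,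
          forestPoly_singleton] at hz
        linear_combination hz
      · intro c hc hne
        have hc' := Finset.mem_erase.1 (hcut ▸ hc)
        have hpt := isPST_trunkTree hp hc'.2 hc'.1
        obtain h1 | ⟨e, h1, h2, h3, h4⟩ := trunkPart_cases hd hc'.2 hne
        · rw [trunkPart] at h1
          split_ifs at h1 with h2
          rw [h2] at hpt
          obtain ⟨cs, hcs⟩ := hpt
          simp at hcs
        · rw [h1, ih _ h4 h3 rfl, h2, if_pos hpt, ← charD_eq φ (hd.prune hc'.2),
            forestPoly_singleton]
          ring
    · rw [Finset.sum_eq_single_of_mem _ hempty, trunkPart_empty hd, prunePart_empty, h0,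
        mul_one] at hrec
      · rw [← hrec, charD, List.map_singleton, List.prod_singleton, if_neg]
        rintro ⟨m, hm, hc⟩
        refine hp ⟨List.replicate (m - 1) leaf, ?_⟩
        rw [hc, corolla, ← List.replicate_succ]
        congr 2
        omega
      · intro c hc hne
        have hc' := (mem_cutsPrecFinset.1 hc).1
        obtain h1 | ⟨e, h1, h2, h3, h4⟩ := trunkPart_cases hd hc' hne
        · rw [h1, hκ.1, zero_mul]
        · rw [h1, ih _ h4 h3 rfl, h2, if_neg fun hpt => hp (isPST_of_trunkTree hc hpt), zero_mul]

theorem eval_neg_one_treePoly {d : PTree × List A} (hd : GoodTree d) :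
    -(treePoly φ d).eval (-1) = (-1) ^ (numInternal d.1 - 1) * phiPi φ d.1 d.2 := by
  obtain ⟨k, hk⟩ := Nat.exists_eq_succ_of_ne_zero hd.numInternal_pos.ne'
  rw [treePoly, eval_mul, eval_C, eval_neg_one_orderPoly, hk, Nat.succ_sub_one, pow_succ]
  ring

end Free

section Boolean

theorem isBST_node {c : PTree} {cs : List PTree} :
    IsBST (node (c :: cs)) ↔ (∀ x ∈ cs, x = leaf) ∧ cs ≠ [] ∧ IsBST c := by
  constructor
  · intro h
    generalize ht : node (c :: cs) = t at h
    induction h generalizing c cs with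
    | single => simp at ht
    | graft t m hb hm ih =>
      obtain ⟨ds⟩ := t
      cases ds with
      | nil =>
        obtain ⟨k, rfl⟩ : ∃ k, m = k + 2 := ⟨m - 2, by omega⟩
        rw [graftLeftmost, corolla, node.injEq, List.replicate_succ, List.cons.injEq] at ht
        obtain ⟨rfl, rfl⟩ := ht
        exact ⟨fun x hx => List.eq_of_mem_replicate hx, by simp, IsBST.single⟩
      | cons d ds =>
        rw [graftLeftmost, node.injEq, List.cons.injEq] at ht
        obtain ⟨rfl, rfl⟩ := ht
        obtain ⟨h1, h2, h3⟩ := ih rfl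
        exact ⟨h1, h2, IsBST.graft _ _ h3 hm⟩
  · rintro ⟨h1, h2, h3⟩
    induction h3 with
    | single =>
      have := IsBST.graft leaf (cs.length + 1) IsBST.single
        (by have := List.length_pos_iff.2 h2; omega)
      rwa [graftLeftmost, corolla, List.replicate_succ, ← List.eq_replicate_length.2 h1] at this
    | graft t m hb hm ih => exact IsBST.graft _ m ih hm

theorem IsInfCharD.eq_zero_of_length_ne_one {A : Type*} {β : DForest A → ℂ} (hβ : IsInfCharD β)
    {F : DForest A}
    (hF : F.length ≠ 1) : β F = 0 := by
  match F, hF with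
  | [], _ => exact hβ.1
  | d :: e :: F, _ => exact hβ.2 [d] (e :: F) (by simp) (by simp)

variable {A : Type*} [Ring A] (φ : A → ℂ)

theorem trunkTree_singleton (t : PTree) (v : List ℕ) : trunkTree t {v} = replaceLeaf v t := by
  simp [trunkTree_eq, pruneList]

open Classical in
theorem charD_singleton (d : PTree × List A) :
    charD φ [d] = if IsCorolla d.1 then φ d.2.prod else 0 := by
  simp [charD]

theorem numInternal_corolla {t : PTree} (ht : IsCorolla t) : numInternal t = 1 := by
  obtain ⟨m, hm, rfl⟩ := ht
  rw [corolla, numInternal_node' (by simp; omega)]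
  simp [numInternal_leaf]

theorem charD_eq_zero {d : PTree × List A} (hd : ¬ IsCorolla d.1) : charD φ [d] = 0 := by
  rw [charD_singleton, if_neg hd]

theorem not_isCorolla_cons {c : PTree} {cs : List PTree} (hc : c ≠ leaf) :
    ¬ IsCorolla (node (c :: cs)) := by
  rintro ⟨m, hm, h⟩
  rw [corolla, node.injEq] at h
  exact hc (List.eq_of_mem_replicate (h ▸ List.mem_cons_self))

theorem charD_mul_eq_zero {β : DForest A → ℂ} (hβ : IsInfCharD β) {c : PTree} {cs : List PTree}
    {w : List A} {s : Finset (List ℕ)} (hs : s ∈ cutsSuccFinset (node (c :: cs)))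
    (h0 : s ≠ {[]}) (h1 : s ≠ {[0]}) :
    charD φ (trunkPart (node (c :: cs), w) s) * β (prunePart (node (c :: cs), w) s) = 0 := by
  rw [mem_cutsSuccFinset] at hs
  obtain ⟨hs, v, hv, hl⟩ := hs
  by_cases hcard : s.card = 1
  · obtain ⟨u, rfl⟩ := Finset.card_eq_one.1 hcard
    obtain rfl := Finset.mem_singleton.1 hv
    match v, hl with
    | [], _ => exact absurd rfl h0
    | [i], hl =>
      rw [OnLeftBranch] at hl
      exact absurd (by rw [hl]; rfl) h1
    | i :: j :: v, hl =>
      rw [OnLeftBranch, List.length_cons, List.length_cons, List.replicate_succ,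
        List.replicate_succ, List.cons.injEq, List.cons.injEq] at hl
      obtain ⟨rfl, rfl, -⟩ := hl
      have hv := (mem_cutsFinset.1 hs).1 _ hv
      obtain ⟨ds⟩ := c
      cases ds with
      | nil =>
        obtain ⟨ds, h, -⟩ := hv
        simp [subtreeAt] at h
      | cons d ds =>
        have ht : trunkTree (node (node (d :: ds) :: cs)) {0 :: 0 :: v} =
            node (node (replaceLeaf v d :: ds) :: cs) := by
          rw [trunkTree_singleton]
          simp [replaceLeaf]
        rw [trunkPart, ht, if_neg (by simp), charD_eq_zero, zero_mul]
        exact not_isCorolla_cons (by simp)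
  · rw [hβ.eq_zero_of_length_ne_one, mul_zero]
    rwa [(prunePart_perm _ _).length_eq, List.length_map, Finset.length_toList]

open Classical in
theorem eq_of_charD_eq_eSuccD {β : DForest A → ℂ} (hβ : IsInfCharD β)
    (h : ∀ F, GoodForest F → charD φ F = eSuccD β F) {d : PTree × List A} (hd : GoodTree d) :
    β [d] = if IsBST d.1 then (-1) ^ (numInternal d.1 - 1) * phiPi φ d.1 d.2 else 0 := by
  induction hn : numInternal d.1 using Nat.strong_induction_on generalizing d with
  | _ n ih =>
    subst hn
    have hrec := eq_sum_cutsSucc hβ.1 h hd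
    obtain ⟨⟨cs⟩, w⟩ := d
    cases cs with
    | nil => exact absurd rfl hd.2.1
    | cons c cs =>
    have hne : c :: cs ≠ [] := by simp
    have hsch := (isSchroder_node_iff hne).1 hd.1
    have hcs : cs ≠ [] := by
      rintro rfl
      simp at hsch
    have hcor : IsCorolla (node (c :: cs)) ↔ ∀ x ∈ c :: cs, x = leaf :=
      isCorolla_iff hd.1 hne rfl
    have hnil : ({[]} : Finset (List ℕ)) ∈ cutsSuccFinset (node (c :: cs)) := by
      rw [mem_cutsSuccFinset]
      exact ⟨singleton_nil_mem_cutsFinset hne, [], by simp, onLeftBranch_nil⟩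
    have h0 : charD φ [] = 1 := rfl
    by_cases hc : c = leaf
    · subst hc
      rw [Finset.sum_eq_single_of_mem _ hnil, trunkPart_singleton_nil, prunePart_singleton_nil hd,
        h0, one_mul, charD_singleton] at hrec
      · rw [← hrec]
        have hb : IsBST (node (leaf :: cs)) ↔ IsCorolla (node (leaf :: cs)) := by
          rw [isBST_node, hcor]
          simp [hcs, IsBST.single]
        simp only [hb]
        split_ifs with hcr
        · rw [numInternal_corolla hcr, phiPi_corolla φ hcr _ hd.length_add_one]
          simp
        · rfl
      · intro s hs h1
        refine charD_mul_eq_zero φ hβ hs h1 ?_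
        rintro rfl
        have := (mem_cutsFinset.1 (mem_cutsSuccFinset.1 hs).1).1 [0] (by simp)
        obtain ⟨ds, h1, h2⟩ := this
        simp [subtreeAt, h2.symm] at h1
    · have hi : IsInternalAt (node (c :: cs)) [0] := by
        obtain ⟨ds⟩ := c
        exact ⟨ds, by simp [subtreeAt], by simpa using hc⟩
      have hmem : ({[0]} : Finset (List ℕ)) ∈ cutsSuccFinset (node (c :: cs)) := by
        rw [mem_cutsSuccFinset, mem_cutsFinset]
        exact ⟨by simp [hi], [0], by simp, rfl⟩
      have hmem' := (mem_cutsSuccFinset.1 hmem).1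
      have hsub : ({{[]}, {[0]}} : Finset (Finset (List ℕ))) ⊆ cutsSuccFinset (node (c :: cs)) := by
        simp [Finset.insert_subset_iff, hnil, hmem]
      have htr : trunkTree (node (c :: cs)) {[0]} = node (leaf :: cs) := by
        rw [trunkTree_singleton]
        simp [replaceLeaf]
      have hgood := hd.trunk hmem'
      have hword := length_trunkWord (node (c :: cs)) hmem' w hd.length_add_one
      have hphi := phiPi_trunk φ (node (c :: cs)) hmem' w hd.length_add_one
      have hcount := numInternal_trunk (node (c :: cs)) hmem'
      have hprune := hd.prune hmem'
      have hst : subtree! (node (c :: cs)) [0] = c := by simp [subtree!, subtreeAt]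
      rw [← Finset.sum_subset hsub, Finset.sum_pair (by simp), trunkPart_singleton_nil,
        prunePart_singleton_nil hd, h0, one_mul, charD_eq_zero _ (not_isCorolla_cons hc)] at hrec
      · simp only [trunkPart, htr, prunePart_singleton, Finset.prod_singleton,
          Finset.sum_singleton, hst] at hrec hgood hword hphi hcount hprune
        rw [if_neg (by simp)] at hrec hgood
        have hg1 := hgood _ (List.mem_singleton_self _)
        have hg2 := hprune _ (List.mem_singleton_self _)
        have hcor' : IsCorolla (node (leaf :: cs)) ↔ ∀ x ∈ cs, x = leaf := by
          rw [isCorolla_iff hg1.1 (by simp) rfl]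
          simp
        have hpos := hg1.numInternal_pos
        have hpos' := hg2.numInternal_pos
        simp only at hpos hpos'
        rw [ih (numInternal c) (by simp only; omega) hg2 rfl, charD_singleton] at hrec
        simp only [hcor'] at hrec
        simp only [isBST_node, hcs, ne_eq, not_false_eq_true, true_and]
        by_cases hl : ∀ x ∈ cs, x = leaf
        · by_cases hb : IsBST c
          · rw [if_pos hl, if_pos hb] at hrec
            rw [phiPi_corolla φ (hcor'.2 hl) _ hword] at hphi
            rw [if_pos ⟨hl, hb⟩, ← hphi, ← hcount, numInternal_corolla (hcor'.2 hl)]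
            obtain ⟨k, hk⟩ := Nat.exists_eq_succ_of_ne_zero hpos'.ne'
            rw [hk, Nat.succ_sub_one] at hrec
            rw [hk, add_comm 1, Nat.add_sub_cancel, pow_succ]
            linear_combination -hrec
          · rw [if_neg hb, mul_zero, add_zero] at hrec
            rw [if_neg (by tauto), ← hrec]
        · rw [if_neg hl, zero_mul, add_zero] at hrec
          rw [if_neg (by tauto), ← hrec]
      · intro s hs h1
        rw [Finset.mem_insert, Finset.mem_singleton, not_or] at h1
        exact charD_mul_eq_zero φ hβ hs h1.1 h1.2

end Boolean

section Monotone

theorem splitPow_congr {A : Type*} {S : DForest A → List (DForest A × DForest A)}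
    (hS : IsSplitting S)
    {α α' : DForest A → ℂ} {n : ℕ}
    (h : ∀ F, GoodForest F → forestInternal F < n → α F = α' F) (k : ℕ) {F : DForest A}
    (hF : GoodForest F) (hn : forestInternal F < n) : splitPow S α k F = splitPow S α' k F := by
  induction k generalizing F with
  | zero => rfl
  | succ k ih =>
    refine sum_map_congr fun pr hpr => ?_
    obtain ⟨h1, h2, h3⟩ := hS F hF pr hpr
    rw [h _ h1 (by omega), ih h2 (by omega)]

theorem splitPow_add_two_congr {A : Type*} {S : DForest A → List (DForest A × DForest A)}
    (hS : IsSplitting S)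
    {α α' : DForest A → ℂ} (hα : α [] = 0) (hα' : α' [] = 0) {n : ℕ}
    (h : ∀ F, GoodForest F → forestInternal F < n → α F = α' F) (k : ℕ) {F : DForest A}
    (hF : GoodForest F) (hn : forestInternal F = n) :
    splitPow S α (k + 2) F = splitPow S α' (k + 2) F := by
  refine sum_map_congr fun pr hpr => ?_
  obtain ⟨h1, h2, h3⟩ := hS F hF pr hpr
  by_cases h0 : forestInternal pr.1 = 0
  · rw [h1.eq_nil h0, hα, hα', zero_mul, zero_mul]
  by_cases h0' : forestInternal pr.2 = 0
  · rw [splitPow_eq_zero hS hα h2 (by omega), splitPow_eq_zero hS hα' h2 (by omega),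
      mul_zero, mul_zero]
  · rw [h _ h1 (by omega), splitPow_congr hS h _ h2 (by omega)]

variable {A : Type*} [Ring A] (φ : A → ℂ)

/-- The infinitesimal character generating the one-parameter group `forestPoly`. -/
noncomputable def generator (F : DForest A) : ℂ := (derivative (forestPoly φ F)).eval 0

theorem generator_nil : generator φ [] = 0 := by
  simp [generator, forestPoly_nil]

theorem generator_singleton (d : PTree × List A) :
    generator φ [d] = omegaSk d.1 * phiPi φ d.1 d.2 := by
  rw [generator, forestPoly_singleton, treePoly, derivative_C_mul, eval_mul, eval_C,
    eval_zero_derivative_orderPoly, mul_comm]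

theorem generator_eq_zero {F : DForest A} (hF : GoodForest F) (h : F.length ≠ 1) :
    generator φ F = 0 := by
  match F, h with
  | [], _ => exact generator_nil φ
  | d :: e :: F, _ =>
    have hd := goodForest_cons.1 hF
    have he := goodForest_cons.1 hd.2
    rw [generator, forestPoly, List.map_cons, List.prod_cons, List.map_cons, List.prod_cons,
      derivative_mul, eval_add, eval_mul, eval_mul, eval_mul, eval_zero_treePoly φ hd.1,
      eval_zero_treePoly φ he.1]
    simp

theorem derivative_forestPoly {F : DForest A} (hF : GoodForest F) :
    derivative (forestPoly φ F) =
      ((forestSplits F).map fun pr => C (generator φ pr.1) * forestPoly φ pr.2).sum := by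
  refine Polynomial.funext fun y => ?_
  have h : (forestPoly φ F).comp (X + C y) =
      ((forestSplits F).map fun pr => forestPoly φ pr.1 * C ((forestPoly φ pr.2).eval y)).sum := by
    refine Polynomial.funext fun x => ?_
    rw [eval_comp, eval_add, eval_X, eval_C, ← convD_forestPoly φ hF, convD,
      ← coe_evalRingHom x, map_list_sum, List.map_map]
    refine sum_map_congr fun pr _ => ?_
    simp
  have h' := congrArg (fun p => (derivative p).eval 0) h
  simp only [derivative_comp, derivative_add, derivative_X, derivative_C, add_zero, one_mul,
    eval_comp, eval_add, eval_X, eval_C, zero_add, map_list_sum, List.map_map] at h'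
  rw [h', ← coe_evalRingHom 0, ← coe_evalRingHom y, map_list_sum, map_list_sum, List.map_map,
    List.map_map]
  refine sum_map_congr fun pr _ => ?_
  simp [generator]

theorem splitPow_generator (k : ℕ) {F : DForest A} (hF : GoodForest F) :
    splitPow forestSplits (generator φ) k F = (derivative^[k] (forestPoly φ F)).eval 0 := by
  induction k generalizing F with
  | zero => rw [splitPow, Function.iterate_zero_apply, eval_zero_forestPoly φ hF]
  | succ k ih =>
    rw [splitPow, Function.iterate_succ_apply, derivative_forestPoly φ hF,
      ← Module.End.coe_pow, map_list_sum, ← coe_evalRingHom 0, map_list_sum, List.map_map,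
      List.map_map]
    refine sum_map_congr fun pr hpr => ?_
    rw [ih (mem_forestSplits hF hpr).2.1]
    simp [Module.End.coe_pow]

theorem charD_eq_expStarD_generator {F : DForest A} (hF : GoodForest F) :
    charD φ F = expStarD (generator φ) F := by
  have hN : forestInternal F < max (forestInternal F) (forestPoly φ F).natDegree + 1 := by omega
  simp only [expStarD, convPowD_eq]
  rw [finsum_splitPow isSplitting_forestSplits (generator_nil φ) _ hF hN, charD_eq φ hF,
    eval_eq_sum_range' (n := max (forestInternal F) (forestPoly φ F).natDegree + 1) (by omega)]
  refine Finset.sum_congr rfl fun k _ => ?_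
  rw [splitPow_generator φ k hF, one_pow, mul_one, ← coeff_zero_eq_eval_zero,
    coeff_iterate_derivative, zero_add, Nat.descFactorial_self, nsmul_eq_mul,
    inv_mul_cancel_left₀ (by exact_mod_cast k.factorial_ne_zero)]

theorem splitPow_one {α : DForest A → ℂ} {d : PTree × List A} (hd : GoodTree d) :
    splitPow forestSplits α 1 [d] = α [d] := by
  change ((forestSplits [d]).map fun pr => α pr.1 * epsD pr.2).sum = _
  rw [forestSplits, List.sum_map_flatMap, Finset.sum_map_toList]
  rw [Finset.sum_eq_single_of_mem _ (empty_mem_cutsFinset d.1)]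
  · simp [forestSplits, trunkPart_empty hd, prunePart_empty, epsD]
  · intro c hc hne
    simp [forestSplits, epsD, ← List.length_eq_zero_iff, (prunePart_perm _ _).length_eq,
      hne]

theorem eq_generator {ρ : DForest A → ℂ} (hρ : IsInfCharD ρ)
    (h : ∀ F, GoodForest F → charD φ F = expStarD ρ F) {F : DForest A} (hF : GoodForest F) :
    ρ F = generator φ F := by
  induction hn : forestInternal F using Nat.strong_induction_on generalizing F with
  | _ n ih =>
    by_cases hl : F.length = 1
    · obtain ⟨d, rfl⟩ := List.length_eq_one_iff.1 hl
      have hd : GoodTree d := hF d (List.mem_singleton_self d)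
      have h1 := (h _ hF).symm.trans (charD_eq_expStarD_generator φ hF)
      have hN : forestInternal [d] < n + 2 := by omega
      simp only [expStarD, convPowD_eq] at h1
      rw [finsum_splitPow isSplitting_forestSplits (generator_nil φ) _ hF hN,
        finsum_splitPow isSplitting_forestSplits hρ.1 _ hF hN, Finset.sum_range_succ',
        Finset.sum_range_succ', Finset.sum_range_succ' _ (n + 1), Finset.sum_range_succ' _ n,
        Finset.sum_congr rfl fun k _ => by rw [splitPow_add_two_congr isSplitting_forestSplits hρ.1
          (generator_nil φ) (fun G hG hlt => ih _ hlt hG rfl) k hF hn], zero_add,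
        splitPow_one hd, splitPow_one hd] at h1
      simpa [splitPow] using h1
    · rw [hρ.eq_zero_of_length_ne_one hl, generator_eq_zero φ hF hl]

end Monotone

section TreeSums

/-- Nonempty ordered forests of Schröder trees with `n + 1` leaves in total. -/
def SF (n : ℕ) : Set (List PTree) :=
  {cs | cs ≠ [] ∧ (∀ c ∈ cs, IsSchroder c) ∧ (cs.map numLeaves).sum = n + 1}

theorem mem_ST {n : ℕ} {t : PTree} : t ∈ ST n ↔ IsSchroder t ∧ numLeaves t = n + 1 := Iff.rfl

theorem mem_SF {n : ℕ} {cs : List PTree} : cs ∈ SF n ↔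
    cs ≠ [] ∧ (∀ c ∈ cs, IsSchroder c) ∧ (cs.map numLeaves).sum = n + 1 := Iff.rfl

theorem singleton_mem_SF {n : ℕ} {c : PTree} : [c] ∈ SF n ↔ c ∈ ST n := by
  simp [mem_SF, mem_ST]

theorem cons_mem_SF {n : ℕ} {c : PTree} {cs : List PTree} (hcs : cs ≠ []) :
    c :: cs ∈ SF n ↔ ∃ j : Fin n, c ∈ ST j ∧ cs ∈ SF (n - 1 - j) := by
  simp only [mem_SF, mem_ST, List.forall_mem_cons, List.map_cons, List.sum_cons]
  constructor
  · rintro ⟨-, ⟨h1, h2⟩, h3⟩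
    have := numLeaves_pos c
    have : 0 < (cs.map numLeaves).sum := by
      obtain ⟨d, ds, rfl⟩ := List.exists_cons_of_ne_nil hcs
      have := numLeaves_pos d
      simp
      omega
    exact ⟨⟨numLeaves c - 1, by omega⟩, ⟨h1, by simp only; omega⟩, hcs, h2, by simp only; omega⟩
  · rintro ⟨j, ⟨h1, h2⟩, -, h3, h4⟩
    exact ⟨by simp, ⟨h1, h3⟩, by have := j.2; omega⟩

theorem node_mem_ST {n : ℕ} (hn : n ≠ 0) {cs : List PTree} :
    node cs ∈ ST n ↔ cs ∈ SF n ∧ 2 ≤ cs.length := by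
  by_cases hcs : cs = []
  · subst hcs
    simp [mem_ST, mem_SF, numLeaves_leaf, hn]
  · rw [mem_ST, isSchroder_node_iff hcs, numLeaves_node' hcs, mem_SF]
    tauto

theorem finite_ST_SF (n : ℕ) : (ST n).Finite ∧ (SF n).Finite := by
  induction n using Nat.strong_induction_on with
  | _ n ih =>
    have h2 : {cs | cs ∈ SF n ∧ 2 ≤ cs.length}.Finite := by
      refine Set.Finite.subset (Set.finite_iUnion fun j : Fin n =>
        Set.Finite.image2 List.cons (ih j j.2).1 (ih (n - 1 - j) (by omega)).2) ?_
      rintro cs ⟨h, hl⟩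
      match cs, hl with
      | c :: d :: cs, _ =>
        obtain ⟨j, h1, h2⟩ := (cons_mem_SF (by simp)).1 h
        exact Set.mem_iUnion.2 ⟨j, c, h1, _, h2, rfl⟩
    have h1 : (ST n).Finite := by
      refine Set.Finite.subset ((Set.finite_singleton leaf).union (h2.image node)) ?_
      rintro ⟨cs⟩ ht
      by_cases hn : n = 0
      · subst hn
        by_cases hcs : cs = []
        · exact Or.inl (by rw [hcs]; rfl)
        · have h := ht.2
          have hl := ((isSchroder_node_iff hcs).1 ht.1).1
          match cs, hl with
          | c :: d :: cs, _ =>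
            have := numLeaves_pos c
            have := numLeaves_pos d
            rw [numLeaves_node' hcs] at h
            simp at h
            omega
      · exact Or.inr ⟨cs, (node_mem_ST hn).1 ht, rfl⟩
    refine ⟨h1, Set.Finite.subset ((h1.image fun c => [c]).union h2) ?_⟩
    intro cs h
    match cs, h with
    | [], h => exact absurd rfl h.1
    | [c], h => exact Or.inl ⟨c, singleton_mem_SF.1 h, rfl⟩
    | c :: d :: cs, h => exact Or.inr ⟨h, by simp⟩

/-- The finite set of Schröder trees with `n + 1` leaves. -/
noncomputable def stFinset (n : ℕ) : Finset PTree := (finite_ST_SF n).1.toFinset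

/-- The finite set of nonempty Schröder forests with `n + 1` leaves in total. -/
noncomputable def sfFinset (n : ℕ) : Finset (List PTree) := (finite_ST_SF n).2.toFinset

theorem mem_stFinset {n : ℕ} {t : PTree} : t ∈ stFinset n ↔ t ∈ ST n :=
  Set.Finite.mem_toFinset _

theorem mem_sfFinset {n : ℕ} {cs : List PTree} : cs ∈ sfFinset n ↔ cs ∈ SF n :=
  Set.Finite.mem_toFinset _

theorem finsum_ST {M : Type*} [AddCommMonoid M] (n : ℕ) (G : PTree → M) :
    ∑ᶠ t ∈ ST n, G t = ∑ t ∈ stFinset n, G t :=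
  finsum_mem_eq_finite_toFinset_sum _ _

theorem stFinset_zero : stFinset 0 = {leaf} := by
  ext ⟨cs⟩
  rw [mem_stFinset, Finset.mem_singleton, mem_ST]
  by_cases hcs : cs = []
  · subst hcs
    simp [numLeaves_leaf, IsSchroder.leaf]
  · rw [isSchroder_node_iff hcs, numLeaves_node' hcs, node.injEq]
    simp only [hcs, iff_false, not_and]
    rintro ⟨hl, -⟩
    match cs, hl with
    | c :: d :: cs, _ =>
      have := numLeaves_pos c
      have := numLeaves_pos d
      simp
      omega

theorem sum_sfFinset_filter {M : Type*} [AddCommMonoid M] (n : ℕ) (G : List PTree → M) :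
    ∑ cs ∈ sfFinset n with 2 ≤ cs.length, G cs =
      ∑ j : Fin n, ∑ c ∈ stFinset j, ∑ cs ∈ sfFinset (n - 1 - j), G (c :: cs) := by
  simp_rw [← Finset.sum_product', Finset.sum_sigma']
  symm
  refine Finset.sum_bij (fun x _ => x.2.1 :: x.2.2) ?_ ?_ ?_ ?_
  · rintro ⟨j, c, cs⟩ h
    simp only [Finset.mem_sigma, Finset.mem_univ, Finset.mem_product, mem_stFinset, mem_sfFinset,
      true_and] at h
    have hl := List.length_pos_iff.2 h.2.1
    rw [Finset.mem_filter, mem_sfFinset, cons_mem_SF h.2.1]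
    exact ⟨⟨j, h⟩, by simp; omega⟩
  · rintro ⟨j, c, cs⟩ h ⟨j', c', cs'⟩ h' e
    simp only [Finset.mem_sigma, Finset.mem_univ, Finset.mem_product, mem_stFinset, mem_sfFinset,
      true_and, mem_ST] at h h'
    simp only [List.cons.injEq] at e
    obtain ⟨rfl, rfl⟩ := e
    obtain rfl : j = j' := Fin.ext (by have := h.1.2; have := h'.1.2; omega)
    rfl
  · intro cs h
    rw [Finset.mem_filter, mem_sfFinset] at h
    match cs, h with
    | c :: d :: cs, h =>
      obtain ⟨j, h1, h2⟩ := (cons_mem_SF (by simp)).1 h.1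
      exact ⟨⟨j, c, d :: cs⟩, by simp [mem_stFinset, mem_sfFinset, h1, h2], rfl⟩
  · intro _ _
    rfl

theorem sum_stFinset {M : Type*} [AddCommMonoid M] {n : ℕ} (hn : n ≠ 0) (G : PTree → M) :
    ∑ t ∈ stFinset n, G t =
      ∑ j : Fin n, ∑ c ∈ stFinset j, ∑ cs ∈ sfFinset (n - 1 - j), G (node (c :: cs)) := by
  rw [← sum_sfFinset_filter n fun cs => G (node cs)]
  symm
  refine Finset.sum_bij (fun cs _ => node cs) ?_ ?_ ?_ ?_
  · intro cs h
    rw [Finset.mem_filter, mem_sfFinset] at h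
    rw [mem_stFinset]
    exact (node_mem_ST hn).2 h
  · intro cs _ cs' _ e
    exact node.inj e
  · rintro ⟨cs⟩ h
    refine ⟨cs, ?_, rfl⟩
    rw [Finset.mem_filter, mem_sfFinset]
    exact (node_mem_ST hn).1 (mem_stFinset.1 h)
  · intro _ _
    rfl

theorem sum_sfFinset {M : Type*} [AddCommMonoid M] (n : ℕ) (G : List PTree → M) :
    ∑ cs ∈ sfFinset n, G cs = ∑ c ∈ stFinset n, G [c] +
      ∑ j : Fin n, ∑ c ∈ stFinset j, ∑ cs ∈ sfFinset (n - 1 - j), G (c :: cs) := by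
  rw [← sum_sfFinset_filter n, ← Finset.sum_filter_not_add_sum_filter _ fun cs => 2 ≤ cs.length]
  congr 1
  symm
  refine Finset.sum_bij (fun c _ => [c]) ?_ ?_ ?_ ?_
  · intro c h
    rw [Finset.mem_filter, mem_sfFinset, singleton_mem_SF]
    exact ⟨mem_stFinset.1 h, by simp⟩
  · intro c _ c' _ e
    simpa using e
  · intro cs h
    rw [Finset.mem_filter, mem_sfFinset] at h
    match cs, h with
    | [], h => exact absurd rfl h.1.1
    | [c], h => exact ⟨c, mem_stFinset.2 (singleton_mem_SF.1 h.1), rfl⟩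
    | c :: d :: cs, h => simp at h
  · intro _ _
    rfl

theorem prod_segment_cons {A R : Type*} [CommMonoid R] (q : PTree → List A → R) (c : PTree)
    (cs : List PTree) (w : List A) :
    ∏ i : Fin (c :: cs).length, q (c :: cs)[i] (segment (c :: cs) w i) =
      q c (w.take (numLeaves c - 1)) *
        ∏ i : Fin cs.length, q cs[i] (segment cs (w.drop (numLeaves c)) i) := by
  refine (Fin.prod_univ_succ (n := cs.length) _).trans ?_
  refine congrArg₂ _ ?_ ?_
  · exact congrArg _ (segment_zero c cs w)
  · exact Finset.prod_congr rfl fun i _ => congrArg _ (segment_succ c cs w i.1 i.2)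

/-- The generating function of decorated trees for a weight on trees. -/
noncomputable def treeSum {A R : Type*} [CommRing R] (q : PTree → List A → R) (w : List A) : R :=
  ∑ t ∈ stFinset w.length, q t w

theorem sum_singleton_forest {A R : Type*} [CommRing R] (q : PTree → List A → R)
    (f : List A → R) (w : List A) :
    ∑ c ∈ stFinset w.length, f (rootLetters [c] w) *
      ∏ i : Fin [c].length, q [c][i] (segment [c] w i) = treeSum q w • f [] := by
  rw [treeSum, Finset.sum_smul]
  refine Finset.sum_congr rfl fun c hc => ?_
  rw [mem_stFinset, mem_ST] at hc
  rw [prod_segment_cons, rootLetters_cons, hc.2]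
  simp [rootLetters, mul_comm]

theorem sum_sfFinset_eq_wordConv {A R : Type*} [CommRing R] (q : PTree → List A → R)
    (f : List A → R) (w : List A) :
    ∑ cs ∈ sfFinset w.length, f (rootLetters cs w) *
      ∏ i : Fin cs.length, q cs[i] (segment cs w i) =
        wordConv f (treeSum q) (treeSum q) w := by
  induction hn : w.length using Nat.strong_induction_on generalizing f w with
  | _ n ih =>
    subst hn
    rw [sum_sfFinset, wordConv_eq_sum]
    congr 1
    · exact sum_singleton_forest q f w
    · refine Finset.sum_congr rfl fun j _ => ?_
      rw [treeSum, List.length_take, min_eq_left j.2.le, Finset.sum_smul]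
      refine Finset.sum_congr rfl fun c hc => ?_
      rw [mem_stFinset, mem_ST] at hc
      rw [← ih _ _ _ _ rfl, Finset.smul_sum, List.length_drop]
      · refine Finset.sum_congr (by congr 1; omega) fun cs _ => ?_
        rw [prod_segment_cons, rootLetters_cons, hc.2, Nat.add_sub_cancel,
          List.take_one_drop_eq_of_lt_length j.2, List.singleton_append, smul_eq_mul]
        simp only [Fin.getElem_fin, List.get_eq_getElem]
        ring
      · rw [List.length_drop]
        have := j.2
        omega

theorem sum_numLeaves_cons {n : ℕ} {j : Fin n} {c : PTree} {cs : List PTree}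
    (hc : c ∈ stFinset j) (hcs : cs ∈ sfFinset (n - 1 - j)) :
    n + 1 = ((c :: cs).map numLeaves).sum := by
  rw [mem_stFinset, mem_ST] at hc
  rw [mem_sfFinset, mem_SF] at hcs
  have := j.2
  rw [List.map_cons, List.sum_cons, hc.2, hcs.2.2]
  omega

theorem treeSum_nil {A R : Type*} [CommRing R] (q : PTree → List A → R) :
    treeSum q [] = q leaf [] := by
  simp [treeSum, stFinset_zero]

end TreeSums

section Moments

variable {A : Type*} [Ring A] (φ : A → ℂ)

theorem eval_treePoly_node_add_one {cs : List PTree} (hcs : cs ≠ []) {w : List A}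
    (hw : w.length + 1 = (cs.map numLeaves).sum) (x : ℂ) :
    (treePoly φ (node cs, w)).eval (x + 1) = (treePoly φ (node cs, w)).eval x +
      φ (rootLetters cs w).prod *
        ∏ i : Fin cs.length, (treePoly φ (cs[i], segment cs w i)).eval x := by
  simp only [treePoly, eval_mul, eval_C, orderPoly_node_add_one hcs, phiPi_node φ hcs w hw,
    Finset.prod_mul_distrib]
  ring

theorem treePoly_leaf (w : List A) : treePoly φ (leaf, w) = 1 := by
  simp [treePoly, phiPi_leaf, orderPoly_leaf]

theorem eval_zero_treePoly_node {cs : List PTree} (hcs : cs ≠ []) (w : List A) :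
    (treePoly φ (node cs, w)).eval 0 = 0 := by
  rw [treePoly, eval_mul, eval_zero_orderPoly_node hcs, mul_zero]

/-- The polynomial interpolating the iterated word convolutions of the moments. -/
noncomputable def momentPoly (w : List A) : ℂ[X] := treeSum (fun t u => treePoly φ (t, u)) w

theorem eval_momentPoly (x : ℂ) (w : List A) :
    (momentPoly φ w).eval x = treeSum (fun t u => (treePoly φ (t, u)).eval x) w :=
  eval_finsetSum _ _ _

theorem momentPoly_nil : momentPoly φ [] = 1 := by
  rw [momentPoly, treeSum_nil, treePoly_leaf]

theorem eval_momentPoly_zero (w : List A) : (momentPoly φ w).eval 0 = wordOne ℂ w := by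
  cases w with
  | nil => simp [momentPoly_nil, wordOne]
  | cons a w =>
    rw [eval_momentPoly, treeSum, sum_stFinset (by simp)]
    refine Finset.sum_eq_zero fun j _ => Finset.sum_eq_zero fun c _ =>
      Finset.sum_eq_zero fun cs _ => ?_
    rw [eval_zero_treePoly_node φ (by simp)]

theorem eval_momentPoly_add_one (hφ : φ 1 = 1) (x : ℂ) (w : List A) :
    (momentPoly φ w).eval (x + 1) = wordConv (fun u => φ u.prod)
      (fun u => (momentPoly φ u).eval x) (fun u => (momentPoly φ u).eval x) w := by
  simp only [eval_momentPoly]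
  rw [← sum_sfFinset_eq_wordConv _ (fun u => φ u.prod), sum_sfFinset,
    sum_singleton_forest (fun t u => (treePoly φ (t, u)).eval x) (fun u => φ u.prod)]
  rw [List.prod_nil, hφ, smul_eq_mul, mul_one]
  by_cases hw : w = []
  · subst hw
    simp [treeSum_nil, treePoly_leaf]
  · have hn : w.length ≠ 0 := by simpa using hw
    rw [treeSum, sum_stFinset hn, treeSum, sum_stFinset hn]
    simp only [← Finset.sum_add_distrib]
    refine Finset.sum_congr rfl fun j _ => Finset.sum_congr rfl fun c hc =>
      Finset.sum_congr rfl fun cs hcs => ?_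
    exact eval_treePoly_node_add_one φ (by simp) (sum_numLeaves_cons hc hcs) x

theorem eval_momentPoly_one (hφ : φ 1 = 1) (w : List A) :
    (momentPoly φ w).eval 1 = φ w.prod := by
  have := eval_momentPoly_add_one φ hφ 0 w
  rw [zero_add] at this
  rw [this]
  simp only [eval_momentPoly_zero]
  exact wordConv_wordOne_gap _ w

theorem wordConv_eval_neg_one (hφ : φ 1 = 1) :
    wordConv (fun u => φ u.prod) (fun u => (momentPoly φ u).eval (-1))
      (fun u => (momentPoly φ u).eval (-1)) = wordOne ℂ := by
  funext w
  rw [← eval_momentPoly_add_one φ hφ, neg_add_cancel, eval_momentPoly_zero]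

theorem eval_momentPoly_natCast_add (hφ : φ 1 = 1) (j k : ℕ) (w : List A) :
    (momentPoly φ w).eval (j + k : ℂ) = wordConv (fun u => (momentPoly φ u).eval (j : ℂ))
      (fun u => (momentPoly φ u).eval (k : ℂ)) (fun u => (momentPoly φ u).eval (k : ℂ)) w := by
  induction j generalizing w with
  | zero =>
    simp only [Nat.cast_zero, zero_add, eval_momentPoly_zero]
    exact (wordConv_wordOne (R := ℂ) _ (fun u => (momentPoly φ u).eval (k : ℂ)) w).symm
  | succ j ih =>
    have e : ((j + 1 : ℕ) : ℂ) + k = j + k + 1 := by push_cast; ring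
    rw [e, eval_momentPoly_add_one φ hφ, Nat.cast_succ]
    simp only [ih, eval_momentPoly_add_one φ hφ]
    exact (wordConv_assoc _ _ _ _ _ w).symm

theorem momentPoly_comp (hφ : φ 1 = 1) (k : ℕ) (w : List A) :
    (momentPoly φ w).comp (X + C (k : ℂ)) = wordConv (momentPoly φ)
      (fun u => (momentPoly φ u).eval (k : ℂ)) (fun u => (momentPoly φ u).eval (k : ℂ)) w := by
  refine eq_of_eval_natCast fun j => ?_
  rw [eval_comp, eval_add, eval_X, eval_C, eval_momentPoly_natCast_add φ hφ]
  exact (wordConv_linearMap (leval (j : ℂ)) _ _ _ w).symm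

/-- The infinitesimal generator of the one-parameter group `momentPoly`. -/
noncomputable def momentGenerator (w : List A) : ℂ := (derivative (momentPoly φ w)).eval 0

theorem momentGenerator_nil : momentGenerator φ [] = 0 := by
  simp [momentGenerator, momentPoly_nil]

theorem derivative_momentPoly (hφ : φ 1 = 1) (w : List A) :
    derivative (momentPoly φ w) = wordConv (fun u => C (momentGenerator φ u)) (momentPoly φ)
      (momentPoly φ) w := by
  refine eq_of_eval_natCast fun k => ?_
  have h := congrArg (fun p => (derivative p).eval 0) (momentPoly_comp φ hφ k w)
  simp only [derivative_comp, derivative_add, derivative_X, derivative_C, add_zero, one_mul,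
    eval_comp, eval_add, eval_X, eval_C, zero_add] at h
  rw [h, ← coe_evalRingHom (k : ℂ), wordConv_ringHom]
  simp only [coe_evalRingHom, eval_C]
  exact wordConv_linearMap (leval (0 : ℂ) ∘ₗ derivative) _ _ _ w

theorem sum_generator (w : List A) :
    ∑ t ∈ stFinset w.length, generator φ [(t, w)] = momentGenerator φ w := by
  rw [momentGenerator, momentPoly, treeSum, derivative_sum, eval_finsetSum]
  simp only [generator, forestPoly_singleton]

open Classical in
theorem sum_isPST (a : A) (v : List A) :
    ∑ t ∈ stFinset (a :: v).length,
      (if IsPST t then -(treePoly φ (t, a :: v)).eval (-1) else 0) =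
    wordConv (fun u => φ (a :: u).prod) (fun u => (momentPoly φ u).eval (-1))
      (fun u => (momentPoly φ u).eval (-1)) v := by
  simp only [eval_momentPoly]
  rw [← sum_sfFinset_eq_wordConv _ (fun u => φ (a :: u).prod), sum_stFinset (by simp),
    Finset.sum_eq_single_of_mem (⟨0, by simp⟩ : Fin (a :: v).length) (Finset.mem_univ _)]
  · rw [stFinset_zero, Finset.sum_singleton]
    refine Finset.sum_congr (by simp) fun cs hcs => ?_
    rw [if_pos ⟨cs, rfl⟩]
    have hw := sum_numLeaves_cons (j := (⟨0, by simp⟩ : Fin (a :: v).length)) (c := leaf)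
      (by simp [stFinset_zero]) hcs
    have h := eval_treePoly_node_add_one φ (by simp) hw (-1)
    rw [neg_add_cancel, eval_zero_treePoly_node φ (by simp),
      prod_segment_cons (fun t u => (treePoly φ (t, u)).eval (-1)), treePoly_leaf, eval_one,
      one_mul, rootLetters_cons, numLeaves_leaf] at h
    simp only [Nat.sub_self, List.drop_zero, List.take_succ_cons, List.take_zero,
      List.drop_succ_cons, List.singleton_append] at h
    linear_combination h
  · intro j _ hj
    refine Finset.sum_eq_zero fun c hc => Finset.sum_eq_zero fun cs _ => if_neg ?_
    rintro ⟨ds, h⟩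
    rw [node.injEq, List.cons.injEq] at h
    rw [h.1, mem_stFinset, mem_ST, numLeaves_leaf] at hc
    exact hj (Fin.ext (by simpa using hc.2.symm))

open Classical in
/-- The signed contribution of the trees built by grafting corollas on the leftmost leaf. -/
noncomputable def boolWeight (t : PTree) (w : List A) : ℂ :=
  if IsBST t then -(-1) ^ numInternal t * phiPi φ t w else 0

theorem boolWeight_eq {t : PTree} (ht : 0 < numInternal t) (w : List A) (h : IsBST t) :
    boolWeight φ t w = (-1) ^ (numInternal t - 1) * phiPi φ t w := by
  obtain ⟨k, hk⟩ := Nat.exists_eq_succ_of_ne_zero ht.ne'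
  rw [boolWeight, if_pos h, hk, Nat.succ_sub_one, pow_succ]
  ring

theorem treeSum_boolWeight_nil : treeSum (boolWeight φ) [] = -1 := by
  rw [treeSum_nil, boolWeight, if_pos IsBST.single, phiPi_leaf, numInternal_leaf]
  simp

theorem boolWeight_node {n : ℕ} (j : Fin n) {c : PTree} (hc : c ∈ stFinset j) {w : List A}
    (hw : w.length = n) : ∑ cs ∈ sfFinset (n - 1 - j), boolWeight φ (node (c :: cs)) w =
      -(boolWeight φ c (w.take j) * φ (w.drop j).prod) := by
  have hj := j.2
  have hmem : List.replicate (n - j) leaf ∈ sfFinset (n - 1 - j) := by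
    rw [mem_sfFinset, mem_SF]
    refine ⟨by simp; omega, fun c hc => ?_, ?_⟩
    · rw [List.eq_of_mem_replicate hc]
      exact IsSchroder.leaf
    · simp [numLeaves_leaf]
      omega
  rw [Finset.sum_eq_single_of_mem _ hmem]
  · have hs := sum_numLeaves_cons hc hmem
    rw [mem_stFinset, mem_ST] at hc
    have hb : IsBST (node (c :: List.replicate (n - j) leaf)) ↔ IsBST c := by
      rw [isBST_node]
      refine ⟨fun h => h.2.2, fun h => ⟨fun x hx => List.eq_of_mem_replicate hx, ?_, h⟩⟩
      simp
      omega
    rw [boolWeight, boolWeight]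
    by_cases h : IsBST c
    · rw [if_pos h, if_pos (hb.2 h)]
      have hl : rootLetters (c :: List.replicate (n - j) leaf) w = w.drop j := by
        rw [rootLetters_cons, hc.2, rootLetters_replicate _ _ (by simp; omega),
          Nat.add_sub_cancel, List.take_one_drop_eq_of_lt_length (by omega)]
        simp
      rw [phiPi_node φ (by simp) w (hw ▸ hs), hl, prod_segment_cons (phiPi φ), hc.2,
        Nat.add_sub_cancel, numInternal_node' (by simp)]
      rw [Finset.prod_eq_one (s := (Finset.univ : Finset (Fin (List.replicate _ _).length)))]
      · simp [numInternal_leaf, pow_add]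
        ring
      · intro i _
        simp [phiPi_leaf]
    · rw [if_neg h, if_neg (mt hb.1 h)]
      simp
  · intro cs hcs hne
    rw [mem_sfFinset, mem_SF] at hcs
    rw [boolWeight, if_neg]
    rw [isBST_node]
    rintro ⟨h1, -⟩
    have h1' := List.eq_replicate_length.2 h1
    have h2 := hcs.2.2
    rw [h1'] at h2
    simp [numLeaves_leaf] at h2
    apply hne
    rw [h1', h2]
    congr 1
    omega

theorem treeSum_boolWeight {w : List A} (hw : w ≠ []) :
    treeSum (boolWeight φ) w =
      -∑ j : Fin w.length, treeSum (boolWeight φ) (w.take j) * φ (w.drop j).prod := by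
  rw [treeSum, sum_stFinset (by simpa using hw), ← Finset.sum_neg_distrib]
  refine Finset.sum_congr rfl fun j _ => ?_
  rw [Finset.sum_congr rfl fun c hc => boolWeight_node φ j hc rfl, Finset.sum_neg_distrib,
    ← Finset.sum_mul, treeSum, List.length_take, min_eq_left j.2.le]

end Moments

section NC

variable {ι : Type*} [LinearOrder ι]

/-- `W` lies between the extreme elements of `V`. -/
def Covers (W V : Finset ι) : Prop :=
  ∀ w ∈ W, (∃ a ∈ V, a ≤ w) ∧ (∃ b ∈ V, w ≤ b)

theorem Covers.rfl {V : Finset ι} : Covers V V := fun w hw => ⟨⟨w, hw, le_rfl⟩, w, hw, le_rfl⟩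

theorem Covers.trans {U V W : Finset ι} (h₁ : Covers U V) (h₂ : Covers V W) : Covers U W := by
  intro w hw
  obtain ⟨⟨a, ha, haw⟩, b, hb, hwb⟩ := h₁ w hw
  obtain ⟨a', ha', haa⟩ := (h₂ a ha).1
  obtain ⟨b', hb', hbb⟩ := (h₂ b hb).2
  exact ⟨⟨a', ha', haa.trans haw⟩, b', hb', hwb.trans hbb⟩

/-- `P` is the set of blocks of a noncrossing partition of `X`. -/
structure IsNC (X : Finset ι) (P : Finset (Finset ι)) : Prop where
  nonempty : ∀ V ∈ P, V.Nonempty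
  subset : ∀ V ∈ P, V ⊆ X
  cover : ∀ x ∈ X, ∃ V ∈ P, x ∈ V
  unique : ∀ V ∈ P, ∀ W ∈ P, ∀ x ∈ V, x ∈ W → V = W
  noncrossing : ∀ V ∈ P, ∀ W ∈ P, ∀ a ∈ V, ∀ b ∈ W, ∀ c ∈ V, ∀ d ∈ W,
    a < b → b < c → c < d → V = W

/-- No block of `P` has elements on both sides of an element of `V`. -/
def Avoids (V : Finset ι) (P : Finset (Finset ι)) : Prop :=
  ∀ W ∈ P, ∀ x ∈ W, ∀ y ∈ W, ∀ v ∈ V, x < v → v < y → False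

open Classical in
/-- The noncrossing partitions of `X` whose blocks avoid `V`. -/
noncomputable def ncs (V X : Finset ι) : Finset (Finset (Finset ι)) :=
  X.powerset.powerset.filter fun P => IsNC X P ∧ Avoids V P

open Classical in
theorem mem_ncs {V X : Finset ι} {P : Finset (Finset ι)} :
    P ∈ ncs V X ↔ IsNC X P ∧ Avoids V P := by
  rw [ncs, Finset.mem_filter, and_iff_right_iff_imp]
  intro h
  exact Finset.mem_powerset.2 fun W hW => Finset.mem_powerset.2 (h.1.subset W hW)

open Classical in
/-- The number of blocks of `P` lying under `V`. -/
noncomputable def under (P : Finset (Finset ι)) (V : Finset ι) : ℕ :=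
  (P.filter fun W => Covers W V).card

variable {R : Type*} [CommRing R] (θ : Finset ι → ℕ → R)

/-- The weighted sum over the noncrossing partitions of `X` avoiding `V`. -/
noncomputable def ncSum (V X : Finset ι) : R :=
  ∑ P ∈ ncs V X, ∏ W ∈ P, θ W (under P W)

theorem IsNC.disjoint {p Y : Finset ι} {P Q : Finset (Finset ι)} (hP : IsNC p P) (hQ : IsNC Y Q)
    (h : Disjoint p Y) : Disjoint P Q := by
  rw [Finset.disjoint_left]
  intro W hW hW'
  obtain ⟨x, hx⟩ := hP.nonempty W hW
  exact Finset.disjoint_left.1 h (hP.subset W hW hx) (hQ.subset W hW' hx)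

theorem under_union {P Q : Finset (Finset ι)}
    (h : ∀ W ∈ P, ∀ V ∈ Q, ¬ Covers W V) {V : Finset ι} (hV : V ∈ Q) :
    under (P ∪ Q) V = under Q V := by
  classical
  rw [under, under, Finset.filter_union, Finset.filter_false_of_mem fun W hW => h W hW V hV,
    Finset.empty_union]

theorem ncSum_union {a : ι} {p V Y : Finset ι} (hp : ∀ x ∈ p, x < a) (hV : ∀ x ∈ V, a < x)
    (hY : ∀ x ∈ Y, a < x) :
    ncSum θ (insert a V) (p ∪ Y) = ncSum θ ∅ p * ncSum θ V Y := by
  classical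
  have hd : Disjoint p Y := Finset.disjoint_left.2 fun x hx hx' => lt_asymm (hp x hx) (hY x hx')
  have hcov : ∀ {P Q : Finset (Finset ι)}, IsNC p P → IsNC Y Q → ∀ W ∈ P, ∀ U ∈ Q,
      ¬ Covers W U ∧ ¬ Covers U W := by
    intro P Q hP hQ W hW U hU
    obtain ⟨x, hx⟩ := hP.nonempty W hW
    obtain ⟨y, hy⟩ := hQ.nonempty U hU
    constructor
    · intro h
      obtain ⟨z, hz, hzx⟩ := (h x hx).1
      exact absurd ((hY z (hQ.subset U hU hz)).trans_le hzx) (hp x (hP.subset W hW hx)).asymm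
    · intro h
      obtain ⟨z, hz, hzy⟩ := (h y hy).2
      exact absurd ((hY y (hQ.subset U hU hy)).trans_le hzy) (hp z (hP.subset W hW hz)).asymm
  rw [ncSum, ncSum, ncSum, Finset.sum_mul_sum, ← Finset.sum_product']
  symm
  refine Finset.sum_bij' (fun PQ _ => PQ.1 ∪ PQ.2)
    (fun P _ => (P.filter (· ⊆ p), P.filter (· ⊆ Y))) ?_ ?_ ?_ ?_ ?_
  · rintro ⟨P, Q⟩ h
    simp only [Finset.mem_product, mem_ncs] at h ⊢
    obtain ⟨⟨hP, -⟩, hQ, hQV⟩ := h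
    have h1 := hP.subset
    have h2 := hQ.subset
    refine ⟨⟨?_, ?_, ?_, ?_, ?_⟩, ?_⟩
    · intro W hW
      exact (Finset.mem_union.1 hW).elim (hP.nonempty W) (hQ.nonempty W)
    · intro W hW
      exact (Finset.mem_union.1 hW).elim
        (fun h => (h1 W h).trans Finset.subset_union_left)
        (fun h => (h2 W h).trans Finset.subset_union_right)
    · intro x hx
      rcases Finset.mem_union.1 hx with hx | hx
      · obtain ⟨W, hW, h⟩ := hP.cover x hx
        exact ⟨W, Finset.mem_union_left _ hW, h⟩
      · obtain ⟨W, hW, h⟩ := hQ.cover x hx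
        exact ⟨W, Finset.mem_union_right _ hW, h⟩
    · intro W hW U hU x hx hx'
      rcases Finset.mem_union.1 hW with hW | hW <;> rcases Finset.mem_union.1 hU with hU | hU
      · exact hP.unique W hW U hU x hx hx'
      · exact (Finset.disjoint_left.1 hd (h1 W hW hx) (h2 U hU hx')).elim
      · exact (Finset.disjoint_left.1 hd (h1 U hU hx') (h2 W hW hx)).elim
      · exact hQ.unique W hW U hU x hx hx'
    · intro W hW U hU x hx y hy z hz t ht hxy hyz hzt
      rcases Finset.mem_union.1 hW with hW | hW <;> rcases Finset.mem_union.1 hU with hU | hU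
      · exact hP.noncrossing W hW U hU x hx y hy z hz t ht hxy hyz hzt
      · have := hp z (h1 W hW hz)
        have := hY y (h2 U hU hy)
        order
      · have := hp t (h1 U hU ht)
        have := hY x (h2 W hW hx)
        order
      · exact hQ.noncrossing W hW U hU x hx y hy z hz t ht hxy hyz hzt
    · intro W hW x hx y hy v hv hxv hvy
      rcases Finset.mem_union.1 hW with hW | hW
      · have := hp y (h1 W hW hy)
        rcases Finset.mem_insert.1 hv with rfl | hv
        · order
        · have := hV v hv
          order
      · rcases Finset.mem_insert.1 hv with rfl | hv
        · have := hY x (h2 W hW hx)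
          order
        · exact hQV W hW x hx y hy v hv hxv hvy
  · intro P hP
    simp only [Finset.mem_product, mem_ncs] at hP ⊢
    obtain ⟨hP, hPV⟩ := hP
    have key : ∀ W ∈ P, W ⊆ p ∨ W ⊆ Y := by
      intro W hW
      by_contra! h
      obtain ⟨x, hx, hxp⟩ := Finset.not_subset.1 h.1
      obtain ⟨y, hy, hyY⟩ := Finset.not_subset.1 h.2
      have h1 := hY x ((Finset.mem_union.1 (hP.subset W hW hx)).resolve_left hxp)
      have h2 := hp y ((Finset.mem_union.1 (hP.subset W hW hy)).resolve_right hyY)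
      exact hPV W hW y hy x hx a (Finset.mem_insert_self a V) h2 h1
    have sub : ∀ Z : Finset ι, Z ⊆ p ∪ Y → (∀ W ∈ P, (W ∩ Z).Nonempty → W ⊆ Z) →
        IsNC Z (P.filter (· ⊆ Z)) := by
      intro Z hZ h
      refine ⟨fun W hW => hP.nonempty W (Finset.mem_filter.1 hW).1,
        fun W hW => (Finset.mem_filter.1 hW).2, fun x hx => ?_,
        fun W hW U hU => hP.unique W (Finset.mem_filter.1 hW).1 U (Finset.mem_filter.1 hU).1,
        fun W hW U hU => hP.noncrossing W (Finset.mem_filter.1 hW).1 U (Finset.mem_filter.1 hU).1⟩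
      obtain ⟨W, hW, hxW⟩ := hP.cover x (hZ hx)
      exact ⟨W, Finset.mem_filter.2 ⟨hW, h W hW ⟨x, Finset.mem_inter.2 ⟨hxW, hx⟩⟩⟩, hxW⟩
    refine ⟨⟨sub p Finset.subset_union_left fun W hW ⟨x, hx⟩ => ?_, ?_⟩,
      sub Y Finset.subset_union_right fun W hW ⟨x, hx⟩ => ?_, ?_⟩
    · rw [Finset.mem_inter] at hx
      exact (key W hW).resolve_right fun h => Finset.disjoint_left.1 hd hx.2 (h hx.1)
    · intro W _ x _ y _ v hv
      simp at hv
    · rw [Finset.mem_inter] at hx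
      exact (key W hW).resolve_left fun h => Finset.disjoint_left.1 hd (h hx.1) hx.2
    · intro W hW x hx y hy v hv
      exact hPV W (Finset.mem_filter.1 hW).1 x hx y hy v (Finset.mem_insert_of_mem hv)
  · rintro ⟨P, Q⟩ h
    simp only [Finset.mem_product, mem_ncs] at h
    obtain ⟨⟨hP, -⟩, hQ, -⟩ := h
    rw [Prod.mk.injEq]
    constructor
    · rw [Finset.filter_union, Finset.filter_true_of_mem hP.subset,
        Finset.filter_false_of_mem, Finset.union_empty]
      intro W hW h
      obtain ⟨x, hx⟩ := hQ.nonempty W hW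
      exact Finset.disjoint_left.1 hd (h hx) (hQ.subset W hW hx)
    · rw [Finset.filter_union, Finset.filter_true_of_mem hQ.subset,
        Finset.filter_false_of_mem, Finset.empty_union]
      intro W hW h
      obtain ⟨x, hx⟩ := hP.nonempty W hW
      exact Finset.disjoint_left.1 hd (hP.subset W hW hx) (h hx)
  · intro P hP
    simp only [mem_ncs] at hP
    obtain ⟨hP, hPV⟩ := hP
    rw [← Finset.filter_or, Finset.filter_true_of_mem]
    intro W hW
    by_contra! h
    obtain ⟨x, hx, hxp⟩ := Finset.not_subset.1 h.1
    obtain ⟨y, hy, hyY⟩ := Finset.not_subset.1 h.2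
    have h1 := hY x ((Finset.mem_union.1 (hP.subset W hW hx)).resolve_left hxp)
    have h2 := hp y ((Finset.mem_union.1 (hP.subset W hW hy)).resolve_right hyY)
    exact hPV W hW y hy x hx a (Finset.mem_insert_self a V) h2 h1
  · rintro ⟨P, Q⟩ h
    simp only [Finset.mem_product, mem_ncs] at h
    obtain ⟨⟨hP, -⟩, hQ, -⟩ := h
    rw [Finset.prod_union (hP.disjoint hQ hd)]
    congr 1
    · refine Finset.prod_congr rfl fun W hW => ?_
      rw [Finset.union_comm, under_union (fun U hU V hV => (hcov hP hQ V hV U hU).2) hW]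
    · refine Finset.prod_congr rfl fun W hW => ?_
      rw [under_union (fun U hU V hV => (hcov hP hQ U hU V hV).1) hW]

theorem ncSum_empty (V : Finset ι) : ncSum θ V ∅ = 1 := by
  have : ncs V ∅ = {∅} := by
    ext P
    rw [mem_ncs, Finset.mem_singleton]
    constructor
    · rintro ⟨h, -⟩
      refine Finset.eq_empty_of_forall_notMem fun W hW => ?_
      have h1 := Finset.subset_empty.1 (h.subset W hW)
      exact (h.nonempty W hW).ne_empty h1
    · rintro rfl
      exact ⟨⟨by simp, by simp, by simp, by simp, by simp⟩, by simp [Avoids]⟩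
  rw [ncSum, this, Finset.sum_singleton, Finset.prod_empty]

theorem sum_powerset_ncSum (f : Finset ι → R) (p : Finset ι) {w : List ι}
    (hw : w.Pairwise (· < ·)) (hp : ∀ x ∈ p, ∀ y ∈ w, x < y) :
    ∑ V ∈ w.toFinset.powerset, f V * ncSum θ V (p ∪ (w.toFinset \ V)) =
      wordConv (fun v => f v.toFinset) (fun u => ncSum θ ∅ u.toFinset)
        (fun u => ncSum θ ∅ (p ∪ u.toFinset)) w := by
  classical
  induction w generalizing f p with
  | nil => simp [wordConv, mul_comm]
  | cons a w ih =>
    rw [List.pairwise_cons] at hw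
    have ha : a ∉ w.toFinset := by
      rw [List.mem_toFinset]
      exact fun h => lt_irrefl a (hw.1 a h)
    rw [List.toFinset_cons, Finset.sum_powerset_insert ha, wordConv, add_comm]
    congr 1
    · have h1 := ih (fun V => f (insert a V)) ∅ hw.2 (by simp)
      simp only [List.toFinset_cons, Finset.empty_union, List.toFinset_nil,
        Finset.union_empty] at h1 ⊢
      rw [← h1, smul_eq_mul, Finset.mul_sum]
      refine Finset.sum_congr rfl fun V hV => ?_
      rw [Finset.mem_powerset] at hV
      rw [Finset.insert_sdiff_insert, Finset.sdiff_insert_of_notMem ha,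
        ncSum_union θ (fun x hx => hp x hx a List.mem_cons_self)
          (fun x hx => hw.1 x (List.mem_toFinset.1 (hV hx)))
          (fun x hx => hw.1 x (List.mem_toFinset.1 (Finset.sdiff_subset hx)))]
      ring
    · have h2 := ih f (insert a p) hw.2 (by
        intro x hx y hy
        rcases Finset.mem_insert.1 hx with rfl | hx
        · exact hw.1 y hy
        · exact hp x hx y (List.mem_cons_of_mem _ hy))
      simp only [List.toFinset_cons, Finset.union_insert, Finset.insert_union] at h2 ⊢
      rw [← h2]
      refine Finset.sum_congr rfl fun V hV => ?_
      rw [Finset.mem_powerset] at hV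
      rw [Finset.insert_sdiff_of_notMem _ (fun h => ha (hV h)), Finset.union_insert]

end NC

section Outer

variable {ι : Type*} [LinearOrder ι]

/-- `V` lies under no other block of `P`. -/
def IsOuter (P : Finset (Finset ι)) (V : Finset ι) : Prop := ∀ W ∈ P, Covers V W → W = V

theorem IsNC.avoids_erase {X : Finset ι} {P : Finset (Finset ι)} (hP : IsNC X P) {V : Finset ι}
    (hV : V ∈ P) (ho : IsOuter P V) : Avoids V (P.erase V) := by
  intro W hW x hx y hy v hv hxv hvy
  rw [Finset.mem_erase] at hW
  refine hW.1 (ho W hW.2 fun u hu => ⟨?_, ?_⟩)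
  · by_contra! h
    exact hW.1 (hP.noncrossing V hV W hW.2 u hu x hx v hv y hy (h x hx) hxv hvy).symm
  · by_contra! h
    exact hW.1 (hP.noncrossing W hW.2 V hV x hx v hv y hy u hu hxv hvy (h y hy))

theorem not_covers_of_avoids {V W : Finset ι} {P : Finset (Finset ι)} (hV : V.Nonempty)
    (hd : Disjoint V W) (hW : W ∈ P) (h : Avoids V P) : ¬ Covers V W := by
  intro hc
  obtain ⟨v, hv⟩ := hV
  obtain ⟨⟨x, hx, hxv⟩, y, hy, hvy⟩ := hc v hv
  refine h W hW x hx y hy v hv (hxv.lt_of_ne ?_) (hvy.lt_of_ne ?_)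
  · rintro rfl
    exact Finset.disjoint_left.1 hd hv hx
  · rintro rfl
    exact Finset.disjoint_left.1 hd hv hy

theorem under_insert {V W : Finset ι} {P : Finset (Finset ι)} (h : ¬ Covers V W) :
    under (insert V P) W = under P W := by
  classical
  rw [under, under, Finset.filter_insert, if_neg h]

theorem IsNC.erase {X : Finset ι} {P : Finset (Finset ι)} (hP : IsNC X P) {V : Finset ι}
    (hV : V ∈ P) : IsNC (X \ V) (P.erase V) := by
  refine ⟨fun W hW => hP.nonempty W (Finset.mem_of_mem_erase hW), fun W hW x hx => ?_,
    fun x hx => ?_, fun W hW U hU => ?_, fun W hW U hU => ?_⟩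
  · refine Finset.mem_sdiff.2 ⟨hP.subset W (Finset.mem_of_mem_erase hW) hx, fun hxV => ?_⟩
    exact Finset.ne_of_mem_erase hW (hP.unique W (Finset.mem_of_mem_erase hW) V hV x hx hxV)
  · rw [Finset.mem_sdiff] at hx
    obtain ⟨W, hW, hxW⟩ := hP.cover x hx.1
    exact ⟨W, Finset.mem_erase.2 ⟨fun h => hx.2 (h ▸ hxW), hW⟩, hxW⟩
  · exact hP.unique W (Finset.mem_of_mem_erase hW) U (Finset.mem_of_mem_erase hU)
  · exact hP.noncrossing W (Finset.mem_of_mem_erase hW) U (Finset.mem_of_mem_erase hU)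

theorem IsNC.insert {X V : Finset ι} {P : Finset (Finset ι)} (hVX : V ⊆ X) (hV : V.Nonempty)
    (hP : IsNC (X \ V) P) (ha : Avoids V P) : IsNC X (insert V P) := by
  have hd : ∀ W ∈ P, ∀ x ∈ W, x ∉ V := fun W hW x hx =>
    (Finset.mem_sdiff.1 (hP.subset W hW hx)).2
  refine ⟨fun W hW => ?_, fun W hW => ?_, fun x hx => ?_, fun W hW U hU x hxW hxU => ?_,
    fun W hW U hU a ha' b hb c hc d hd' hab hbc hcd => ?_⟩
  · rcases Finset.mem_insert.1 hW with rfl | hW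
    · exact hV
    · exact hP.nonempty W hW
  · rcases Finset.mem_insert.1 hW with rfl | hW
    · exact hVX
    · exact (hP.subset W hW).trans Finset.sdiff_subset
  · by_cases hxV : x ∈ V
    · exact ⟨V, Finset.mem_insert_self V P, hxV⟩
    · obtain ⟨W, hW, hxW⟩ := hP.cover x (Finset.mem_sdiff.2 ⟨hx, hxV⟩)
      exact ⟨W, Finset.mem_insert_of_mem hW, hxW⟩
  · rcases Finset.mem_insert.1 hW with rfl | hW₁ <;> rcases Finset.mem_insert.1 hU with rfl | hU₁
    · rfl
    · exact (hd U hU₁ x hxU hxW).elim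
    · exact (hd W hW₁ x hxW hxU).elim
    · exact hP.unique W hW₁ U hU₁ x hxW hxU
  · rcases Finset.mem_insert.1 hW with rfl | hW₁ <;> rcases Finset.mem_insert.1 hU with rfl | hU₁
    · rfl
    · exact (ha U hU₁ b hb d hd' c hc hbc hcd).elim
    · exact (ha W hW₁ a ha' c hc b hb hab hbc).elim
    · exact hP.noncrossing W hW₁ U hU₁ a ha' b hb c hc d hd' hab hbc hcd

variable {R : Type*} [CommRing R] (θ : Finset ι → ℕ → R)

open Classical in
theorem sum_outer (f : Finset ι → R) (hf : f ∅ = 0) (X : Finset ι) :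
    ∑ P ∈ ncs ∅ X, ∑ V ∈ P.filter (IsOuter P), f V * ∏ W ∈ P.erase V, θ W (under P W) =
      ∑ V ∈ X.powerset, f V * ncSum θ V (X \ V) := by
  have e : ∑ V ∈ X.powerset, f V * ncSum θ V (X \ V) =
      ∑ V ∈ X.powerset.filter Finset.Nonempty, f V * ncSum θ V (X \ V) := by
    symm
    refine Finset.sum_subset (Finset.filter_subset _ _) fun V hV h => ?_
    rw [Finset.mem_filter, not_and, Finset.not_nonempty_iff_eq_empty] at h
    rw [h hV, hf, zero_mul]
  rw [e]
  simp only [ncSum, Finset.mul_sum]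
  rw [Finset.sum_sigma', Finset.sum_sigma']
  refine Finset.sum_bij' (fun PV _ => ⟨PV.2, PV.1.erase PV.2⟩)
    (fun VP _ => ⟨insert VP.1 VP.2, VP.1⟩) ?_ ?_ ?_ ?_ ?_
  · rintro ⟨P, V⟩ h
    simp only [Finset.mem_sigma, Finset.mem_filter, mem_ncs, Finset.mem_powerset] at h ⊢
    obtain ⟨⟨hP, -⟩, hV, ho⟩ := h
    exact ⟨⟨hP.subset V hV, hP.nonempty V hV⟩, hP.erase hV, hP.avoids_erase hV ho⟩
  · rintro ⟨V, P⟩ h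
    simp only [Finset.mem_sigma, Finset.mem_filter, mem_ncs, Finset.mem_powerset] at h ⊢
    obtain ⟨⟨hVX, hV⟩, hP, ha⟩ := h
    refine ⟨⟨IsNC.insert hVX hV hP ha, fun W _ x _ y _ v hv => by simp at hv⟩,
      Finset.mem_insert_self V P, fun W hW hc => ?_⟩
    rcases Finset.mem_insert.1 hW with rfl | hW
    · rfl
    · exact (not_covers_of_avoids hV
        (Finset.disjoint_right.2 fun x hx => (Finset.mem_sdiff.1 (hP.subset W hW hx)).2)
        hW ha hc).elim
  · rintro ⟨P, V⟩ h
    simp only [Finset.mem_sigma, Finset.mem_filter] at h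
    simp [Finset.insert_erase h.2.1]
  · rintro ⟨V, P⟩ h
    simp only [Finset.mem_sigma, Finset.mem_filter, mem_ncs] at h
    obtain ⟨⟨-, v, hv⟩, hP, -⟩ := h
    simp only [Sigma.mk.injEq, heq_eq_eq, true_and]
    exact Finset.erase_insert fun h => (Finset.mem_sdiff.1 (hP.subset V h hv)).2 hv
  · rintro ⟨P, V⟩ h
    simp only [Finset.mem_sigma, Finset.mem_filter, mem_ncs] at h
    obtain ⟨⟨hP, -⟩, hV, ho⟩ := h
    refine congrArg _ (Finset.prod_congr rfl fun W hW => congrArg _ ?_)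
    nth_rewrite 1 [← Finset.insert_erase hV]
    refine under_insert fun hc => ?_
    exact Finset.ne_of_mem_erase hW (ho W (Finset.mem_of_mem_erase hW) hc)

theorem IsNC.outer_unique {X : Finset ι} {P : Finset (Finset ι)} (hP : IsNC X P)
    {U V W : Finset ι} (hU : U ∈ P) (hV : V ∈ P) (hW : W ∈ P) (hoU : IsOuter P U)
    (hoV : IsOuter P V) (hWU : Covers W U) (hWV : Covers W V) : U = V := by
  by_contra hne
  wlog h : U.min' (hP.nonempty U hU) < V.min' (hP.nonempty V hV) generalizing U V
  · refine this hV hU hoV hoU hWV hWU (Ne.symm hne) (lt_of_le_of_ne (not_lt.1 h) fun e => hne ?_)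
    exact hP.unique U hU V hV _ (Finset.min'_mem _ _) (e ▸ Finset.min'_mem _ _)
  obtain ⟨w, hw⟩ := hP.nonempty W hW
  obtain ⟨b, hb, hwb⟩ := (hWU w hw).2
  obtain ⟨a, ha, haw⟩ := (hWV w hw).1
  have hm := Finset.min'_mem V (hP.nonempty V hV)
  have hn := Finset.min'_mem U (hP.nonempty U hU)
  have hva := Finset.min'_le V a ha
  refine hne (hoV U hU fun v hv => ⟨⟨_, hn, (h.trans_le (Finset.min'_le V v hv)).le⟩, b, hb, ?_⟩)
  by_contra! hbv
  have hlt : V.min' (hP.nonempty V hV) < b := by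
    refine lt_of_le_of_ne (hva.trans (haw.trans hwb)) fun e => hne ?_
    exact hP.unique U hU V hV b hb (e ▸ hm)
  exact hne (hP.noncrossing U hU V hV _ hn _ hm b hb v hv h hlt hbv)

theorem IsNC.exists_outer {X : Finset ι} {P : Finset (Finset ι)} (hP : IsNC X P)
    {W : Finset ι} (hW : W ∈ P) : ∃ V ∈ P, IsOuter P V ∧ Covers W V := by
  classical
  let S := X.filter fun x => ∃ V ∈ P, x ∈ V ∧ Covers W V
  have hS : S.Nonempty := by
    obtain ⟨x, hx⟩ := hP.nonempty W hW
    exact ⟨x, Finset.mem_filter.2 ⟨hP.subset W hW hx, W, hW, hx, Covers.rfl⟩⟩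
  obtain ⟨V, hV, hmV, hWV⟩ := (Finset.mem_filter.1 (S.min'_mem hS)).2
  refine ⟨V, hV, fun U hU hVU => ?_, hWV⟩
  obtain ⟨a, ha, ham⟩ := (hVU _ hmV).1
  have haS : a ∈ S := Finset.mem_filter.2 ⟨hP.subset U hU ha, U, hU, ha, hWV.trans hVU⟩
  have e := le_antisymm ham (S.min'_le a haS)
  exact hP.unique U hU V hV a ha (e ▸ hmV)

open Classical in
theorem IsNC.sum_under {X : Finset ι} {P : Finset (Finset ι)} (hP : IsNC X P) :
    ∑ V ∈ P.filter (IsOuter P), under P V = P.card := by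
  simp only [under]
  rw [← Finset.card_biUnion]
  · congr 1
    ext W
    simp only [Finset.mem_biUnion, Finset.mem_filter]
    constructor
    · rintro ⟨V, -, hW, -⟩
      exact hW
    · intro hW
      obtain ⟨V, hV, ho, hc⟩ := hP.exists_outer hW
      exact ⟨V, ⟨hV, ho⟩, hW, hc⟩
  · intro U hU V hV hne
    refine Finset.disjoint_left.2 fun W h1 h2 => ?_
    simp only [Finset.coe_filter, Set.mem_ofPred_eq, Finset.mem_filter] at hU hV h1 h2
    exact hne (hP.outer_unique hU.1 hV.1 h1.1 hU.2 hV.2 h1.2 h2.2)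

theorem avoids_empty (P : Finset (Finset ι)) : Avoids ∅ P := fun W _ x _ y _ v hv => by
  simp at hv

theorem ncSum_cons (g : Finset ι → R) {a : ι} {w : List ι} (hw : (a :: w).Pairwise (· < ·)) :
    ncSum (fun V _ => g V) ∅ (a :: w).toFinset =
      wordConv (fun v => g (a :: v).toFinset) (fun u => ncSum (fun V _ => g V) ∅ u.toFinset)
        (fun u => ncSum (fun V _ => g V) ∅ u.toFinset) w := by
  classical
  rw [List.pairwise_cons] at hw
  have ha : a ∉ w.toFinset := by
    rw [List.mem_toFinset]
    exact fun h => lt_irrefl a (hw.1 a h)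
  have h1 := sum_powerset_ncSum (fun V _ => g V) (fun V => g (insert a V)) ∅ hw.2 (by simp)
  simp only [Finset.empty_union, ← List.toFinset_cons] at h1
  rw [← h1]
  have h2 := sum_outer (fun V _ => g V) (fun V => if a ∈ V then g V else 0) (by simp)
    (a :: w).toFinset
  trans ∑ P ∈ ncs ∅ (a :: w).toFinset, ∑ V ∈ P.filter (IsOuter P),
    (if a ∈ V then g V else 0) * ∏ W ∈ P.erase V, g W
  · refine Finset.sum_congr rfl fun P hP => ?_
    rw [mem_ncs] at hP
    obtain ⟨V, hV, haV⟩ := hP.1.cover a (by simp)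
    have ho : IsOuter P V := by
      intro W hW hc
      obtain ⟨x, hx, hxa⟩ := (hc a haV).1
      have := hP.1.subset W hW hx
      rw [List.toFinset_cons, Finset.mem_insert, List.mem_toFinset] at this
      rcases this with rfl | h
      · exact hP.1.unique W hW V hV x hx haV
      · exact absurd (hw.1 x h) hxa.not_gt
    rw [Finset.sum_eq_single_of_mem V (Finset.mem_filter.2 ⟨hV, ho⟩), if_pos haV,
      Finset.mul_prod_erase _ _ hV]
    intro W hW hne
    rw [if_neg, zero_mul]
    exact fun h => hne (hP.1.unique W (Finset.mem_filter.1 hW).1 V hV a h haV)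
  · rw [h2, List.toFinset_cons, Finset.sum_powerset_insert ha, Finset.sum_eq_zero, zero_add]
    · refine Finset.sum_congr rfl fun V hV => ?_
      rw [Finset.mem_powerset] at hV
      rw [if_pos (Finset.mem_insert_self a V), Finset.insert_sdiff_insert,
        Finset.sdiff_insert_of_notMem ha]
      have h3 := ncSum_union (fun V _ => g V) (a := a) (p := ∅) (V := V) (Y := w.toFinset \ V)
        (by simp) (fun x hx => hw.1 x (List.mem_toFinset.1 (hV hx)))
        (fun x hx => hw.1 x (List.mem_toFinset.1 (Finset.sdiff_subset hx)))
      rw [Finset.empty_union, ncSum_empty, one_mul] at h3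
      rw [h3]
    · intro V hV
      rw [Finset.mem_powerset] at hV
      rw [if_neg fun h => ha (hV h), zero_mul]

theorem derivative_ncSum {K : Type*} [Field K] [CharZero K] (g : Finset ι → K) (hg : g ∅ = 0)
    {w : List ι} (hw : w.Pairwise (· < ·)) :
    derivative (ncSum (fun V c => C (g V / c) * X) ∅ w.toFinset) =
      wordConv (fun v => C (g v.toFinset))
        (fun u => ncSum (fun V c => C (g V / c) * X) ∅ u.toFinset)
        (fun u => ncSum (fun V c => C (g V / c) * X) ∅ u.toFinset) w := by
  classical
  have h1 := sum_powerset_ncSum (fun V c => C (g V / c) * X) (fun V => C (g V)) ∅ hw (by simp)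
  simp only [Finset.empty_union] at h1
  rw [← h1, ← sum_outer _ _ (by simp [hg]), ncSum, derivative_sum]
  refine Finset.sum_congr rfl fun P hP => ?_
  rw [mem_ncs] at hP
  have key : ∀ V ∈ P.filter (IsOuter P), C (g V) * ∏ W ∈ P.erase V, (C (g W / under P W) * X) =
      (under P V : K[X]) * (C (∏ W ∈ P, g W / under P W) * X ^ (P.card - 1)) := by
    intro V hV
    have hV' := (Finset.mem_filter.1 hV).1
    have hc : (under P V : K) ≠ 0 := by
      rw [under, Nat.cast_ne_zero, Finset.card_ne_zero]
      exact ⟨V, Finset.mem_filter.2 ⟨hV', Covers.rfl⟩⟩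
    rw [Finset.prod_mul_distrib, Finset.prod_const, Finset.card_erase_of_mem hV',
      ← Finset.mul_prod_erase P _ hV', ← map_prod, ← mul_assoc, ← C_mul, ← mul_assoc,
      ← C_eq_natCast, ← C_mul, ← mul_assoc, mul_div_cancel₀ _ hc]
  rw [Finset.sum_congr rfl key, ← Finset.sum_mul, ← Nat.cast_sum, hP.1.sum_under,
    Finset.prod_mul_distrib, Finset.prod_const, ← map_prod, derivative_C_mul, derivative_X_pow]
  simp only [map_natCast]
  ring

end Outer

section Transport

variable {ι κ : Type*} [LinearOrder ι] [LinearOrder κ]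

theorem covers_map (e : ι ↪o κ) {V W : Finset ι} :
    Covers (W.map e.toEmbedding) (V.map e.toEmbedding) ↔ Covers W V := by
  simp [Covers]

theorem isNC_map (e : ι ↪o κ) {X : Finset ι} {P : Finset (Finset ι)} :
    IsNC (X.map e.toEmbedding) (P.map (Finset.mapEmbedding e.toEmbedding).toEmbedding) ↔
      IsNC X P := by
  have hm : ∀ (x : ι) (W : Finset ι), e x ∈ W.map e.toEmbedding ↔ x ∈ W := by simp
  constructor
  · rintro ⟨h1, h2, h3, h4, h5⟩
    refine ⟨?_, ?_, ?_, ?_, ?_⟩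
    · simpa using h1
    · simpa using h2
    · simpa using h3
    · simp only [Finset.forall_mem_map, RelEmbedding.coe_toEmbedding, Finset.mapEmbedding_apply,
        hm, Finset.map_inj] at h4
      exact h4
    · simpa using h5
  · rintro ⟨h1, h2, h3, h4, h5⟩
    refine ⟨?_, ?_, ?_, ?_, ?_⟩
    · simpa using h1
    · simpa using h2
    · simpa using h3
    · simp only [Finset.forall_mem_map, RelEmbedding.coe_toEmbedding, Finset.mapEmbedding_apply,
        hm, Finset.map_inj]
      exact h4
    · simpa using h5

theorem ncs_map (e : ι ↪o κ) (X : Finset ι) : ncs ∅ (X.map e.toEmbedding) =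
    (ncs ∅ X).map (Finset.mapEmbedding (Finset.mapEmbedding e.toEmbedding).toEmbedding).toEmbedding
    := by
  ext Q
  simp only [mem_ncs, avoids_empty, and_true, Finset.mem_map, RelEmbedding.coe_toEmbedding,
    Finset.mapEmbedding_apply]
  constructor
  · intro h
    have hQ : Q ⊆ X.powerset.map (Finset.mapEmbedding e.toEmbedding).toEmbedding := by
      intro V hV
      obtain ⟨U, hU, rfl⟩ := Finset.subset_map_iff.1 (h.subset V hV)
      exact Finset.mem_map.2 ⟨U, Finset.mem_powerset.2 hU, rfl⟩
    obtain ⟨P, -, rfl⟩ := Finset.subset_map_iff.1 hQ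
    exact ⟨P, (isNC_map e).1 h, rfl⟩
  · rintro ⟨P, hP, rfl⟩
    exact (isNC_map e).2 hP

theorem ncSum_map {R : Type*} [CommRing R] (θ : Finset κ → ℕ → R) (e : ι ↪o κ) (X : Finset ι) :
    ncSum θ ∅ (X.map e.toEmbedding) =
      ncSum (fun V c => θ (V.map e.toEmbedding) c) ∅ X := by
  classical
  rw [ncSum, ncs_map, Finset.sum_map]
  refine Finset.sum_congr rfl fun P _ => ?_
  simp only [RelEmbedding.coe_toEmbedding, Finset.mapEmbedding_apply, Finset.prod_map]
  refine Finset.prod_congr rfl fun W _ => congrArg _ ?_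
  simp only [under, Finset.filter_map, Finset.card_map]
  congr 1
  ext U
  simp [covers_map]

/-- The weighted sum over the noncrossing partitions of the positions of the word `l`. -/
noncomputable def ncWord {A R : Type*} [CommRing R] (θ : List A → ℕ → R) (l : List A) : R :=
  ncSum (fun V c => θ ((V.sort (· ≤ ·)).map l.get) c) ∅ Finset.univ

theorem sort_map (e : ι ↪o κ) (V : Finset ι) :
    (V.map e.toEmbedding).sort (· ≤ ·) = (V.sort (· ≤ ·)).map e := by
  refine List.Perm.eq_of_pairwise' (r := (· ≤ ·)) (Finset.pairwise_sort _ _) ?_ ?_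
  · exact (Finset.pairwise_sort V (· ≤ ·)).map e fun _ _ h => e.monotone h
  · refine (List.perm_ext_iff_of_nodup (Finset.sort_nodup _ _)
      ((Finset.sort_nodup _ _).map e.injective)).2 fun x => ?_
    simp

theorem ncSum_eq_ncWord {A R : Type*} [CommRing R] (θ : List A → ℕ → R) (a : ι → A)
    {w : List ι} (hw : w.Pairwise (· < ·)) :
    ncSum (fun V c => θ ((V.sort (· ≤ ·)).map a) c) ∅ w.toFinset = ncWord θ (w.map a) := by
  have hl : (w.map a).length = w.length := List.length_map a
  let e : Fin (w.map a).length ↪o ι := OrderEmbedding.ofStrictMono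
    (fun i => w.get (i.cast hl)) fun i j hij => List.pairwise_iff_get.1 hw _ _ hij
  have hX : w.toFinset = Finset.univ.map e.toEmbedding := by
    ext x
    simp only [List.mem_toFinset, Finset.mem_map, Finset.mem_univ, true_and]
    rw [List.mem_iff_get]
    exact ⟨fun ⟨i, hi⟩ => ⟨i.cast hl.symm, hi⟩, fun ⟨i, hi⟩ => ⟨i.cast hl, hi⟩⟩
  rw [hX, ncSum_map, ncWord]
  congr 1
  funext V c
  rw [sort_map, List.map_map]
  congr 2
  funext i
  simp [e]

theorem ncWord_nil {A R : Type*} [CommRing R] (θ : List A → ℕ → R) : ncWord θ [] = 1 :=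
  ncSum_empty _ _

theorem ncWord_ofFn {A R : Type*} [CommRing R] (θ : List A → ℕ → R) {n : ℕ} (a : Fin n → A) :
    ncWord θ (List.ofFn a) =
      ncSum (fun V c => θ ((V.sort (· ≤ ·)).map a) c) ∅ Finset.univ := by
  rw [← List.map_id (List.ofFn a), List.map_ofFn, Function.id_comp, List.ofFn_eq_map,
    ← ncSum_eq_ncWord θ a (List.pairwise_lt_finRange n), List.toFinset_finRange]

end Transport

section Link

variable {A : Type*} [Ring A]

theorem isNC_parts {n : ℕ} {π : NPart n} : IsNC Finset.univ π.parts ↔ IsNoncrossing π := by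
  constructor
  · exact fun h a b c d hab hbc hcd V hV W hW ha hc hb hd =>
      h.noncrossing V hV W hW a ha b hb c hc d hd hab hbc hcd
  · intro h
    exact ⟨fun V hV => π.nonempty_of_mem_parts hV, fun V _ => Finset.subset_univ V,
      fun x hx => π.exists_mem hx, fun V hV W hW x hx hx' => π.eq_of_mem_parts hV hW hx hx',
      fun V hV W hW a ha b hb c hc d hd hab hbc hcd => h a b c d hab hbc hcd V hV W hW ha hc hb hd⟩

theorem finsum_noncrossing {n : ℕ} (G : Finset (Finset (Fin n)) → ℂ) :
    ∑ᶠ π ∈ {π : NPart n | IsNoncrossing π}, G π.parts = ∑ P ∈ ncs ∅ Finset.univ, G P := by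
  classical
  have : {π : NPart n | IsNoncrossing π} =
      ((Finset.univ : Finset (NPart n)).filter IsNoncrossing : Finset (NPart n)) := by
    ext; simp
  rw [this, finsum_mem_coe_finset]
  refine Finset.sum_bij (fun π _ => π.parts) ?_ ?_ ?_ ?_
  · intro π hπ
    exact mem_ncs.2 ⟨isNC_parts.2 (Finset.mem_filter.1 hπ).2, avoids_empty _⟩
  · exact fun π _ π' _ h => Finpartition.ext h
  · intro P hP
    have h := (mem_ncs.1 hP).1
    let π : NPart n := Finpartition.ofExistsUnique P (fun V _ => Finset.subset_univ V)
      (fun x hx => by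
        obtain ⟨V, hV, hxV⟩ := h.cover x hx
        exact ⟨V, ⟨hV, hxV⟩, fun W hW => h.unique W hW.1 V hV x hW.2 hxV⟩)
      (fun hV => by simpa using h.nonempty ∅ hV)
    exact ⟨π, Finset.mem_filter.2 ⟨Finset.mem_univ π, isNC_parts.1 h⟩, rfl⟩
  · exact fun _ _ => rfl

variable {φ : A → ℂ}

theorem freeMC_eq_ncWord {r : List A → ℂ} (hr : FreeMC φ r) (hφ : φ 1 = 1) (w : List A) :
    φ w.prod = ncWord (fun l _ => r l) w := by
  by_cases hw : w = []
  · subst hw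
    rw [List.prod_nil, hφ, ncWord_nil]
  · have h := hr w.length (List.length_pos_of_ne_nil hw) w.get
    rw [List.ofFn_get] at h
    rw [h, ← List.ofFn_get w, ncWord_ofFn, List.ofFn_get]
    exact finsum_noncrossing fun P => ∏ V ∈ P, r ((V.sort (· ≤ ·)).map w.get)

theorem monotoneMC_eq_ncWord {h : List A → ℂ} (hh : MonotoneMC φ h) (hφ : φ 1 = 1) (w : List A) :
    φ w.prod = ncWord (fun l c => h l / c) w := by
  by_cases hw : w = []
  · subst hw
    rw [List.prod_nil, hφ, ncWord_nil]
  · have e := hh w.length (List.length_pos_of_ne_nil hw) w.get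
    rw [List.ofFn_get] at e
    rw [e, ← List.ofFn_get w, ncWord_ofFn, List.ofFn_get, ncSum, ← finsum_noncrossing
      fun P => ∏ V ∈ P, (h ((V.sort (· ≤ ·)).map w.get) / under P V)]
    congr 1
    funext π
    congr 1
    funext _
    rw [Finset.prod_div_distrib, blockApply, div_eq_inv_mul, forestFactorial, Nat.cast_prod]
    rfl

end Link

section Recursion

variable {A : Type*}

theorem sort_toFinset {ι : Type*} [LinearOrder ι] {w : List ι} (hw : w.Pairwise (· < ·)) :
    w.toFinset.sort (· ≤ ·) = w :=
  (List.toFinset_sort (· ≤ ·) (hw.imp fun h => h.ne)).2 (hw.imp fun h => h.le)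

theorem ncWord_cons {R : Type*} [CommRing R] (g : List A → R) (a : A) (w : List A) :
    ncWord (fun l _ => g l) (a :: w) = wordConv (fun u => g (a :: u))
      (ncWord fun l _ => g l) (ncWord fun l _ => g l) w := by
  let f : Fin (w.length + 1) → A := (a :: w).get
  have hf : List.ofFn f = a :: w := List.ofFn_get (a :: w)
  have hs := List.pairwise_lt_finRange (w.length + 1)
  rw [List.ofFn_eq_map, List.finRange_succ, List.map_cons, List.cons.injEq] at hf
  rw [List.finRange_succ] at hs
  generalize (List.finRange w.length).map Fin.succ = v at hf hs
  have key := ncSum_cons (fun V => g ((V.sort (· ≤ ·)).map f)) hs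
  rw [ncSum_eq_ncWord (fun l _ => g l) f hs] at key
  suffices hsuff : ncWord (fun l _ => g l) (f 0 :: v.map f) = wordConv (fun u => g (f 0 :: u))
      (ncWord fun l _ => g l) (ncWord fun l _ => g l) (v.map f) by rwa [hf.1, hf.2] at hsuff
  rw [← List.map_cons, key, wordConv_map]
  have hv := (List.pairwise_cons.1 hs).2
  refine wordConv_congr (fun u hu => ?_)
    (fun u hu _ => ncSum_eq_ncWord (fun l _ => g l) f (hv.sublist hu))
    (fun u hu => ncSum_eq_ncWord (fun l _ => g l) f (hv.sublist hu))
  rw [sort_toFinset (hs.sublist (hu.cons_cons _)), List.map_cons]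

theorem derivative_ncWord (h : List A → ℂ) (h0 : h [] = 0) (w : List A) :
    derivative (ncWord (fun l c => C (h l / c) * X) w) = wordConv (fun u => C (h u))
      (ncWord fun l c => C (h l / c) * X) (ncWord fun l c => C (h l / c) * X) w := by
  let f : Fin w.length → A := w.get
  have hf : List.ofFn f = w := List.ofFn_get w
  have hs := List.pairwise_lt_finRange w.length
  rw [List.ofFn_eq_map] at hf
  generalize List.finRange w.length = v at hf hs
  have key := derivative_ncSum (fun V => h ((V.sort (· ≤ ·)).map f)) (by simp [h0]) hs
  rw [ncSum_eq_ncWord (fun l c => C (h l / c) * X) f hs] at key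
  rw [← hf, key, wordConv_map]
  refine wordConv_congr (fun u hu => ?_)
    (fun u hu _ => ncSum_eq_ncWord (fun l c => C (h l / c) * X) f (hs.sublist hu))
    (fun u hu => ncSum_eq_ncWord (fun l c => C (h l / c) * X) f (hs.sublist hu))
  rw [sort_toFinset (hs.sublist hu)]

theorem eval_ncWord (θ : List A → ℕ → ℂ[X]) (x : ℂ) (w : List A) :
    (ncWord θ w).eval x = ncWord (fun l c => (θ l c).eval x) w := by
  simp only [ncWord, ncSum, eval_finsetSum, eval_prod]

theorem ncWord_zero {R : Type*} [CommRing R] {w : List A} (hw : w ≠ []) :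
    ncWord (fun (_ : List A) _ => (0 : R)) w = 0 := by
  rw [ncWord, ncSum]
  refine Finset.sum_eq_zero fun P hP => ?_
  obtain ⟨V, hV, -⟩ := (mem_ncs.1 hP).1.cover ⟨0, List.length_pos_of_ne_nil hw⟩
    (Finset.mem_univ _)
  exact Finset.prod_eq_zero hV rfl

theorem ncWord_congr {R : Type*} [CommRing R] {θ θ' : List A → ℕ → R}
    (h : ∀ l c, l ≠ [] → θ l c = θ' l c) (w : List A) : ncWord θ w = ncWord θ' w := by
  rw [ncWord, ncWord, ncSum, ncSum]
  refine Finset.sum_congr rfl fun P hP => Finset.prod_congr rfl fun V hV => h _ _ ?_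
  intro hnil
  have := congrArg List.length hnil
  rw [List.length_map, Finset.length_sort, List.length_nil, Finset.card_eq_zero] at this
  exact ((mem_ncs.1 hP).1.nonempty V hV).ne_empty this

end Recursion

section Cumulants

variable {A : Type*} [Ring A] {φ : A → ℂ}

theorem freeMC_eq_wordConv {r : List A → ℂ} (hr : FreeMC φ r) (hφ : φ 1 = 1) (a : A)
    (w : List A) : r (a :: w) = wordConv (fun u => φ (a :: u).prod)
      (fun u => (momentPoly φ u).eval (-1)) (fun u => (momentPoly φ u).eval (-1)) w := by
  have h1 : (fun u => φ (a :: u).prod) = fun u => wordConv (fun v => r (a :: v))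
      (fun v => φ v.prod) (fun v => φ v.prod) u := by
    funext u
    simp only [freeMC_eq_ncWord hr hφ]
    exact ncWord_cons r a u
  rw [h1, wordConv_assoc, wordConv_eval_neg_one φ hφ, wordConv_wordOne_gap]

theorem monotoneMC_eq_momentGenerator {h : List A → ℂ} (hh : MonotoneMC φ h) (hφ : φ 1 = 1)
    {w : List A} (hw : w ≠ []) : h w = momentGenerator φ w := by
  classical
  let k : List A → ℂ := fun l => if l = [] then 0 else h l
  let H : List A → ℂ[X] := ncWord fun l c => C (k l / c) * X
  have hH1 : ∀ l, (H l).eval 1 = φ l.prod := by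
    intro l
    rw [monotoneMC_eq_ncWord hh hφ, eval_ncWord]
    refine ncWord_congr (fun l c hl => ?_) l
    simp [k, hl]
  have hH0 : ∀ l, l ≠ [] → (H l).eval 0 = 0 := by
    intro l hl
    rw [eval_ncWord]
    exact (ncWord_congr (fun l c _ => by simp) l).trans (ncWord_zero hl)
  have main : ∀ n, ∀ l : List A, l.length = n →
      k l = momentGenerator φ l ∧ H l = momentPoly φ l := by
    intro n
    induction n using Nat.strong_induction_on with
    | _ n ih =>
      intro l hl
      by_cases hnil : l = []
      · subst hnil
        exact ⟨(momentGenerator_nil φ).symm, (ncWord_nil _).trans (momentPoly_nil φ).symm⟩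
      have hd : derivative (H l - momentPoly φ l) = C (k l - momentGenerator φ l) := by
        rw [derivative_sub, derivative_momentPoly φ hφ, C_sub]
        refine (congrArg₂ _ (derivative_ncWord k rfl l) rfl).trans (wordConv_sub_wordConv ?_
          (fun u hu => ?_) (fun u hu => ?_) (ncWord_nil _))
        · simp [momentGenerator_nil]
        · rw [(ih u.length (hl ▸ hu) u rfl).1]
        · exact (ih u.length (hl ▸ hu) u rfl).2
      set D := H l - momentPoly φ l with hD
      set c := k l - momentGenerator φ l with hc
      have h0 : D.eval 0 = 0 := by
        rw [hD, eval_sub, hH0 l hnil, eval_momentPoly_zero]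
        cases l with
        | nil => exact absurd rfl hnil
        | cons a l => simp [wordOne]
      have h1 : D.eval 1 = 0 := by
        rw [hD, eval_sub, hH1, eval_momentPoly_one φ hφ, sub_self]
      have h2 : derivative (D - C c * X) = 0 := by
        rw [derivative_sub, hd, derivative_C_mul, derivative_X, mul_one, sub_self]
      have h3 := eq_C_of_derivative_eq_zero h2
      have h4 : (D - C c * X).coeff 0 = 0 := by
        rw [coeff_zero_eq_eval_zero]
        simp [h0]
      rw [h4, C_0, sub_eq_zero] at h3
      have h5 : c = 0 := by
        rw [h3] at h1
        simpa using h1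
      refine ⟨sub_eq_zero.1 h5, sub_eq_zero.1 ?_⟩
      rw [← hD, h3, h5, C_0, zero_mul]
  rw [← (main _ w rfl).1]
  simp [k, hw]

end Cumulants

section PrefixConvolution

variable {A R V : Type*} [CommRing R] [AddCommGroup V] [Module R V]

theorem wordConv_eq_of_ne_nil {f : List A → V} {g G : List A → R} {w : List A}
    (hf : ∀ v, v.Sublist w → v ≠ [] → f v = 0) : wordConv f g G w = G w • f [] := by
  induction w generalizing G with
  | nil => rfl
  | cons a w ih =>
    rw [wordConv, ih fun v hv => hf v (hv.cons a)]
    rw [wordConv_congr (f' := fun _ => 0) (g' := g) (G' := g)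
      (fun v hv => hf _ (hv.cons_cons a) (by simp)) (fun _ _ _ => rfl) (fun _ _ => rfl),
      wordConv_zero, smul_zero, zero_add]

theorem wordConv_eq_sum_take {f : List A → V} {g : List A → R} (hg : g [] = 1) {w : List A}
    (hw : w.Nodup) (hf : ∀ v, v.Sublist w → ¬ v <+: w → f v = 0) :
    wordConv f g g w = ∑ k ∈ Finset.range (w.length + 1), g (w.drop k) • f (w.take k) := by
  induction w generalizing f with
  | nil => simp [wordConv]
  | cons a w ih =>
    rw [List.nodup_cons] at hw
    rw [wordConv, hg, one_smul, List.length_cons, Finset.sum_range_succ', ih hw.2,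
      wordConv_eq_of_ne_nil]
    · simp
    · intro v hv hne
      refine hf v (hv.cons a) fun hp => ?_
      cases v with
      | nil => exact hne rfl
      | cons b v =>
        rw [List.cons_prefix_cons] at hp
        exact hw.1 (hv.subset (hp.1 ▸ List.mem_cons_self))
    · intro v hv hp
      refine hf _ (hv.cons_cons a) ?_
      rwa [List.cons_prefix_cons, and_iff_right rfl]

end PrefixConvolution

section Interval

/-- `V` contains everything between two of its elements. -/
def IsConvex {ι : Type*} [LinearOrder ι] (V : Finset ι) : Prop :=
  ∀ x ∈ V, ∀ y ∈ V, ∀ z, x ≤ z → z ≤ y → z ∈ V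

theorem isPrefix_of_sublist {ι : Type*} [LinearOrder ι] {v w : List ι} (hw : w.Pairwise (· < ·))
    (hv : v.Sublist w) (h : ∀ z ∈ w, ∀ y ∈ v, z ≤ y → z ∈ v) : v <+: w := by
  induction w generalizing v with
  | nil => rw [List.sublist_nil.1 hv]
  | cons x w ih =>
    rw [List.pairwise_cons] at hw
    have hx : x ∉ w := fun hx => lt_irrefl x (hw.1 x hx)
    cases hv with
    | cons _ hv =>
      cases v with
      | nil => exact (List.prefix_append [] _)
      | cons y v =>
        have hy := hv.subset List.mem_cons_self
        exact absurd (hv.subset (h x List.mem_cons_self y List.mem_cons_self (hw.1 y hy).le)) hx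
    | cons_cons _ hv =>
      rw [List.cons_prefix_cons, and_iff_right rfl]
      refine ih hw.2 hv fun z hz y hy hzy => ?_
      exact (List.mem_cons.1 (h z (List.mem_cons_of_mem x hz) y (List.mem_cons_of_mem x hy)
        hzy)).resolve_left fun e => hx (e ▸ hz)

theorem isConvex_take {ι : Type*} [LinearOrder ι] {u w : List ι} {a : ι}
    (hw : (u ++ a :: w).Pairwise (· < ·)) (hmem : ∀ x, x ∈ u ++ a :: w) (k : ℕ) :
    IsConvex (a :: w.take k).toFinset := by
  intro x hx y hy z hxz hzy
  rw [List.mem_toFinset] at *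
  rw [List.pairwise_append, List.pairwise_cons] at hw
  have hax : a ≤ x := by
    rcases List.mem_cons.1 hx with rfl | hx
    · exact le_rfl
    · exact (hw.2.1.1 x (List.mem_of_mem_take hx)).le
  rcases List.mem_append.1 (hmem z) with hz | hz
  · exact absurd (hw.2.2 z hz a List.mem_cons_self) (hax.trans hxz).not_gt
  rcases List.mem_cons.1 hz with rfl | hz
  · exact List.mem_cons_self
  rw [← List.take_append_drop k w, List.mem_append] at hz
  refine List.mem_cons_of_mem a (hz.resolve_right fun hz₁ => ?_)
  have hs := hw.2.1.2
  rw [← List.take_append_drop k w, List.pairwise_append] at hs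
  rcases List.mem_cons.1 hy with rfl | hy
  · exact absurd (hw.2.1.1 z (List.mem_of_mem_drop hz₁)) hzy.not_gt
  · exact absurd (hs.2.2 y hy z hz₁) hzy.not_gt

/-- The sum of the products of `b` over the decompositions of a word into nonempty factors. -/
noncomputable def factorSum {A : Type*} (b : List A → ℂ) : List A → ℂ
  | [] => 1
  | a :: w => ∑ k ∈ Finset.range (w.length + 1), factorSum b (w.drop k) * b (a :: w.take k)
termination_by l => l.length
decreasing_by simp

open Classical in
theorem ncSum_isConvex {A ι : Type*} [LinearOrder ι] (b : List A → ℂ) (f : ι → A) {u w : List ι}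
    (hw : (u ++ w).Pairwise (· < ·)) (hmem : ∀ x, x ∈ u ++ w) :
    ncSum (fun V _ => if IsConvex V then b ((V.sort (· ≤ ·)).map f) else 0) ∅ w.toFinset =
      factorSum b (w.map f) := by
  induction hn : w.length using Nat.strong_induction_on generalizing u w with
  | _ n ih =>
    subst hn
    cases w with
    | nil => rw [List.toFinset_nil, ncSum_empty, List.map_nil, factorSum]
    | cons a w =>
      have hs := (List.pairwise_append.1 hw).2.1
      have hs' := (List.pairwise_cons.1 hs).2
      rw [ncSum_cons (fun V => if IsConvex V then b ((V.sort (· ≤ ·)).map f) else 0) hs,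
        wordConv_eq_sum_take (by rw [List.toFinset_nil, ncSum_empty])
          (hs'.imp fun h => h.ne), List.map_cons, factorSum, List.length_map]
      · refine Finset.sum_congr rfl fun k hk => ?_
        rw [if_pos (isConvex_take hw hmem k), sort_toFinset (hs.sublist
          ((List.take_sublist k w).cons_cons a)), List.map_cons, List.map_take, smul_eq_mul,
          ← List.map_drop]
        have e : u ++ a :: w = (u ++ a :: w.take k) ++ w.drop k := by simp
        rw [ih (w.drop k).length (by simp) (u := u ++ a :: w.take k) (e ▸ hw)
          (fun x => e ▸ hmem x) rfl]
      · intro v hv hp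
        refine if_neg fun hc => hp (isPrefix_of_sublist hs' hv fun z hz y hy hzy => ?_)
        have haz := (List.pairwise_cons.1 hs).1 z hz
        have := hc a (by simp) y (by simp [hy]) z haz.le hzy
        rw [List.mem_toFinset, List.mem_cons] at this
        exact this.resolve_left haz.ne'

variable {A : Type*} [Ring A] {φ : A → ℂ} {b : List A → ℂ}

theorem booleanMC_eq_factorSum (hb : BooleanMC φ b) (hφ : φ 1 = 1) (w : List A) :
    φ w.prod = factorSum b w := by
  classical
  by_cases hw : w = []
  · subst hw
    rw [List.prod_nil, hφ, factorSum]
  have h := hb w.length (List.length_pos_of_ne_nil hw) w.get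
  rw [List.ofFn_get] at h
  have e := ncSum_isConvex b w.get (u := []) (w := List.finRange w.length)
    (List.pairwise_lt_finRange w.length)
    List.mem_finRange
  rw [← List.ofFn_eq_map, List.ofFn_get, List.toFinset_finRange, ncSum] at e
  rw [h, ← e, ← finsum_noncrossing fun P => ∏ V ∈ P,
    if IsConvex V then b ((V.sort (· ≤ ·)).map w.get) else 0]
  rw [finsum_mem_def, finsum_mem_def]
  refine finsum_congr fun π => ?_
  simp only [Set.indicator_apply, Set.mem_ofPred_eq]
  by_cases hπ : IsIntervalPart π
  · have hnc : IsNoncrossing π := by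
      intro x y z t hxy hyz _ V hV W hW hx hz hy _
      exact π.eq_of_mem_parts hV hW (hπ V hV x hx z hz y hxy.le hyz.le) hy
    rw [if_pos hπ, if_pos hnc]
    exact Finset.prod_congr rfl fun V hV => (if_pos (hπ V hV)).symm
  · rw [if_neg hπ]
    split_ifs
    · obtain ⟨V, hV, hc⟩ : ∃ V ∈ π.parts, ¬ IsConvex V := by
        by_contra! hall
        exact hπ hall
      exact (Finset.prod_eq_zero hV (if_neg hc)).symm
    · rfl

theorem booleanMC_eq_treeSum (hb : BooleanMC φ b) (hφ : φ 1 = 1) {w : List A} (hw : w ≠ []) :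
    b w = treeSum (boolWeight φ) w := by
  induction hn : w.length using Nat.strong_induction_on generalizing w with
  | _ n ih =>
    subst hn
    cases w with
    | nil => exact absurd rfl hw
    | cons a w =>
      have h := booleanMC_eq_factorSum hb hφ (a :: w)
      rw [factorSum, Finset.sum_range_succ, List.drop_length, List.take_length, factorSum, one_mul,
        Finset.sum_range] at h
      rw [treeSum_boolWeight φ hw]
      simp only [List.length_cons, Fin.sum_univ_succ, Fin.val_zero, Fin.val_succ, List.take_zero,
        List.drop_zero, List.take_succ_cons, List.drop_succ_cons, treeSum_boolWeight_nil]
      rw [h, Finset.sum_congr rfl fun (i : Fin w.length) _ => by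
        rw [ih (a :: w.take i).length (by simp) (by simp) rfl, ← booleanMC_eq_factorSum hb hφ,
          mul_comm]]
      ring

end Interval

section Words

variable {A : Type*}

theorem goodTree_of_mem_ST {n : ℕ} (hn : 1 ≤ n) {t : PTree} (ht : t ∈ ST n) {w : List A}
    (hw : w.length = n) : GoodTree (t, w) := by
  rw [mem_ST] at ht
  refine ⟨ht.1, ?_, ?_⟩
  · rintro rfl
    have := ht.2
    rw [numLeaves_leaf] at this
    omega
  · rw [numSectors, ht.2, hw, Nat.add_sub_cancel]

theorem goodTree_of_mem_stFinset {w : List A} (hw : w ≠ []) {t : PTree}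
    (ht : t ∈ stFinset w.length) : GoodTree (t, w) :=
  goodTree_of_mem_ST (List.length_pos_iff.2 hw) (mem_stFinset.1 ht) rfl

variable [Ring A] {φ : A → ℂ}

theorem sum_eq_free {r : List A → ℂ} (hr : FreeMC φ r) (hφ : φ 1 = 1) {κ : DForest A → ℂ}
    (hκ : IsInfCharD κ) (h : ∀ F, GoodForest F → charD φ F = ePrecD κ F) {w : List A}
    (hw : w ≠ []) : ∑ t ∈ stFinset w.length, κ [(t, w)] = r w := by
  classical
  rw [Finset.sum_congr rfl fun t ht =>
    eq_of_charD_eq_ePrecD φ hκ h (goodTree_of_mem_stFinset hw ht)]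
  cases w with
  | nil => exact absurd rfl hw
  | cons a v =>
    rw [freeMC_eq_wordConv hr hφ, ← sum_isPST]

theorem sum_eq_boolean {b : List A → ℂ} (hb : BooleanMC φ b) (hφ : φ 1 = 1)
    {β : DForest A → ℂ} (hβ : IsInfCharD β)
    (h : ∀ F, GoodForest F → charD φ F = eSuccD β F) {w : List A} (hw : w ≠ []) :
    ∑ t ∈ stFinset w.length, β [(t, w)] = b w := by
  classical
  rw [booleanMC_eq_treeSum hb hφ hw, treeSum]
  refine Finset.sum_congr rfl fun t ht => ?_
  have hd := goodTree_of_mem_stFinset hw ht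
  rw [eq_of_charD_eq_eSuccD φ hβ h hd]
  split_ifs with hs
  · rw [boolWeight_eq φ hd.numInternal_pos w hs]
  · rw [boolWeight, if_neg hs]

theorem sum_eq_monotone {m : List A → ℂ} (hm : MonotoneMC φ m) (hφ : φ 1 = 1)
    {ρ : DForest A → ℂ} (hρ : IsInfCharD ρ)
    (h : ∀ F, GoodForest F → charD φ F = expStarD ρ F) {w : List A} (hw : w ≠ []) :
    ∑ t ∈ stFinset w.length, ρ [(t, w)] = m w := by
  rw [monotoneMC_eq_momentGenerator hm hφ hw, ← sum_generator]
  exact Finset.sum_congr rfl fun t ht =>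
    eq_generator φ hρ h (goodForest_singleton (goodTree_of_mem_stFinset hw ht))

end Words

end PTree

/-- Let `(A, φ)` be a noncommutative probability space and
`Φ̃ : H_S(A) → ℂ` the character extending `φ`. Let `(κ̃, β̃, ρ̃)` be the triple of
infinitesimal characters with `Φ̃ = E_≺̃(κ̃) = E_≻̃(β̃) = exp^*(ρ̃)`. Then for every
`t ∈ ST(n)` and `a_1,…,a_n ∈ A`,
`κ̃(t⊗w) = (−1)^{i(t)−1} φ_{π(t)}(a)` if `t ∈ PST(n)` and `0` otherwise;
`β̃(t⊗w) = (−1)^{i(t)−1} φ_{π(t)}(a)` if `t ∈ BST(n)` and `0` otherwise; and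
`ρ̃(t⊗w) = ω(sk(t)) φ_{π(t)}(a)`. Moreover, with `ι(a_1⋯a_n) = Σ_{t∈ST(n)} t⊗a_1⋯a_n`,
the pullbacks `κ̃∘ι`, `β̃∘ι`, `ρ̃∘ι` evaluated on a word give the free, Boolean and
monotone cumulants, respectively. -/
theorem cumulant_triple_on_schroder_hopf_algebra
    (A : Type*) [Ring A] [Algebra ℂ A] (φ : A →ₗ[ℂ] ℂ) (hφ : φ 1 = 1)
    (r b h : List A → ℂ)
    (hr : FreeMC (fun x => φ x) r) (hb : BooleanMC (fun x => φ x) b)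
    (hh : MonotoneMC (fun x => φ x) h)
    (κ β ρ : PTree.DForest A → ℂ)
    (hκ : PTree.IsInfCharD κ) (hβ : PTree.IsInfCharD β) (hρ : PTree.IsInfCharD ρ)
    (heκ : ∀ F : PTree.DForest A, PTree.GoodForest F →
      PTree.charD (fun x => φ x) F = PTree.ePrecD κ F)
    (heβ : ∀ F : PTree.DForest A, PTree.GoodForest F →
      PTree.charD (fun x => φ x) F = PTree.eSuccD β F)
    (heρ : ∀ F : PTree.DForest A, PTree.GoodForest F →
      PTree.charD (fun x => φ x) F = PTree.expStarD ρ F) :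
    (∀ n : ℕ, 1 ≤ n → ∀ t ∈ PTree.ST n, ∀ w : List A, w.length = n →
      ((PTree.IsPST t →
          κ [(t, w)] =
            (-1 : ℂ) ^ (PTree.numInternal t - 1) * PTree.phiPi (fun x => φ x) t w) ∧
       (¬ PTree.IsPST t → κ [(t, w)] = 0) ∧
       (PTree.IsBST t →
          β [(t, w)] =
            (-1 : ℂ) ^ (PTree.numInternal t - 1) * PTree.phiPi (fun x => φ x) t w) ∧
       (¬ PTree.IsBST t → β [(t, w)] = 0) ∧
       ρ [(t, w)] = PTree.omegaSk t * PTree.phiPi (fun x => φ x) t w)) ∧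
    (∀ n : ℕ, 1 ≤ n → ∀ a : Fin n → A,
      (∑ᶠ t ∈ PTree.ST n, κ [(t, List.ofFn a)]) = r (List.ofFn a) ∧
      (∑ᶠ t ∈ PTree.ST n, β [(t, List.ofFn a)]) = b (List.ofFn a) ∧
      (∑ᶠ t ∈ PTree.ST n, ρ [(t, List.ofFn a)]) = h (List.ofFn a)) := by
  classical
  refine ⟨fun n hn t ht w hw => ?_, fun n hn a => ?_⟩
  · have hd := PTree.goodTree_of_mem_ST hn ht hw
    have hk := PTree.eq_of_charD_eq_ePrecD (fun x => φ x) hκ heκ hd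
    have hs := PTree.eq_of_charD_eq_eSuccD (fun x => φ x) hβ heβ hd
    rw [PTree.eval_neg_one_treePoly (fun x => φ x) hd] at hk
    refine ⟨fun hp => ?_, fun hp => ?_, fun hp => ?_, fun hp => ?_, ?_⟩
    · rw [hk, if_pos hp]
    · rw [hk, if_neg hp]
    · rw [hs, if_pos hp]
    · rw [hs, if_neg hp]
    · rw [PTree.eq_generator (fun x => φ x) hρ heρ (PTree.goodForest_singleton hd),
        PTree.generator_singleton]
  · have hw : List.ofFn a ≠ [] := List.ne_nil_of_length_pos (by rw [List.length_ofFn]; omega)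
    have hfs : ∀ G : PTree → ℂ, ∑ᶠ t ∈ PTree.ST n, G t =
        ∑ t ∈ PTree.stFinset (List.ofFn a).length, G t := by
      intro G
      rw [PTree.finsum_ST, List.length_ofFn]
    simp only [hfs]
    exact ⟨PTree.sum_eq_free hr hφ hκ heκ hw, PTree.sum_eq_boolean hb hφ hβ heβ hw,
      PTree.sum_eq_monotone hh hφ hρ heρ hw⟩
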